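/- arXiv:2403.13571 — 8 statements merged into one kernel-verified Lean document; each statement's English description precedes it below -/
import Mathlib

section
/- Let d and g be integers with d ≥ 1 and g ≥ 3. Every finite simple graph G whose minimum degree is at least d and whose girth is at least g has at least n₀(d,g) vertices. -/
/-!
Fix an edge `x r` and an integer `h` with `2 * h ≤ g`. The vertices reached from `r` by a path of
length less than `h` avoiding `x` form a tree hanging from `r`: two different paths with common
endpoints contain a cycle no longer than their total length (`path_unique_of_egirth`), so short
paths are unique. Hence every vertex of layer `i` has at least `d - 1` neighbours in layer `i + 1`,
while every vertex of layer `i + 1` has only one neighbour in layer `i`, and the tree has at least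
`∑ i < h, (d - 1) ^ i` vertices (`le_card_branch`).

For `g = 2 * h + 1`, the branches at a vertex `v` towards its at least `d` neighbours are pairwise
disjoint and miss `v`. For `g = 2 * h`, the two branches at the ends of an edge, each
avoiding the other end, are disjoint. In both cases a common vertex would be the end of two
different paths of total length less than `g`.
-/

/-- The Moore function `n₀(d, g)`: for odd `g = 2h+1` it equals
`1 + d·∑_{i=0}^{h-1}(d-1)^i`, and for even `g = 2h` it equals `2·∑_{i=0}^{h-1}(d-1)^i`. -/
noncomputable def mooreBound (d : ℝ) (g : ℕ) : ℝ :=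
  if Odd g then 1 + d * ∑ i ∈ Finset.range (g / 2), (d - 1) ^ i
  else 2 * ∑ i ∈ Finset.range (g / 2), (d - 1) ^ i

namespace MooreBound

open SimpleGraph Finset

variable {V : Type} {G : SimpleGraph V}

lemma path_unique_of_egirth {g : ℕ} (hg : (g : ℕ∞) ≤ G.egirth) {u v : V} {p q : G.Walk u v}
    (hp : p.IsPath) (hq : q.IsPath) (hl : p.length + q.length < g) : p = q := by
  by_contra hne
  obtain ⟨w, -, -, c, hc, hcl⟩ := hp.exists_isCycle_length_le_add_of_ne hq hne
  have : g ≤ c.length := by exact_mod_cast le_egirth.mp hg _ c hc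
  omega

/-- The only neighbour of the end of a short path that lies on the path is its penultimate
vertex. -/
lemma notMem_support_of_ne_penultimate {g : ℕ} (hg : (g : ℕ∞) ≤ G.egirth) {u w y : V}
    {q : G.Walk u w} (hq : q.IsPath) (hl : q.length + 1 < g) (hy : G.Adj w y)
    (hne : y ≠ q.penultimate) : y ∉ q.support := by
  classical
  intro hmem
  have heq : q.dropUntil y hmem = hy.symm.toWalk := by
    refine path_unique_of_egirth hg (hq.dropUntil hmem) hy.symm.isPath_toWalk ?_
    have := q.length_dropUntil_le_length hmem
    simp only [Walk.length_cons, Walk.length_nil]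
    omega
  refine hne (hq.eq_penultimate_of_mem_edges ?_)
  refine q.edges_dropUntil_subset_edges hmem ?_
  rw [heq]
  simp [Sym2.eq_swap]

variable [Fintype V]

open Classical in
/-- The vertices reached from `r` by a path of length `i` that avoids `x`. -/
noncomputable def layer (G : SimpleGraph V) (x r : V) (i : ℕ) : Finset V :=
  univ.filter fun w => ∃ p : G.Walk r w, p.IsPath ∧ p.length = i ∧ x ∉ p.support

lemma mem_layer {x r w : V} {i : ℕ} :
    w ∈ layer G x r i ↔ ∃ p : G.Walk r w, p.IsPath ∧ p.length = i ∧ x ∉ p.support := by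
  simp [layer]

open Classical in
/-- The vertices reached from `r` by a path of length less than `h` that avoids `x`. -/
noncomputable def branch (G : SimpleGraph V) (x r : V) (h : ℕ) : Finset V :=
  (range h).biUnion (layer G x r)

lemma mem_branch {x r w : V} {h : ℕ} :
    w ∈ branch G x r h ↔ ∃ p : G.Walk r w, p.IsPath ∧ p.length < h ∧ x ∉ p.support := by
  simp only [branch, mem_biUnion, mem_range, mem_layer]
  constructor
  · rintro ⟨i, hi, p, hp, rfl, hx⟩
    exact ⟨p, hp, hi, hx⟩
  · rintro ⟨p, hp, hi, hx⟩
    exact ⟨p.length, hi, p, hp, rfl, hx⟩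

lemma mul_card_layer_le [DecidableRel G.Adj] {d g h i : ℕ} (hmin : d ≤ G.minDegree)
    (hg : (g : ℕ∞) ≤ G.egirth) (hh : 2 * h ≤ g) {x r : V} (hxr : G.Adj x r) (hi : i + 1 < h) :
    (layer G x r i).card * (d - 1) ≤ (layer G x r (i + 1)).card := by
  classical
  rw [← mul_one (layer G x r (i + 1)).card]
  refine card_mul_le_card_mul G.Adj ?_ ?_
  · intro w hw
    obtain ⟨p, hp, hpl, hx⟩ := mem_layer.mp hw
    -- Prepending `x` gives `w = r` a penultimate vertex too, and makes an extension that stays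
    -- a path avoid `x`.
    have hq : (Walk.cons hxr p).IsPath := hp.cons hx
    have hsub : (G.neighborFinset w).erase (Walk.cons hxr p).penultimate ⊆
        (layer G x r (i + 1)).bipartiteAbove G.Adj w := by
      intro y hy
      rw [mem_erase, mem_neighborFinset] at hy
      obtain ⟨hne, hwy⟩ := hy
      have hys := notMem_support_of_ne_penultimate hg hq
        (by rw [Walk.length_cons]; omega) hwy hne
      rw [Walk.support_cons, List.mem_cons, not_or] at hys
      rw [mem_bipartiteAbove]
      refine ⟨mem_layer.mpr ⟨p.concat hwy, hp.concat hys.2 hwy, ?_, ?_⟩, hwy⟩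
      · rw [Walk.length_concat, hpl]
      · rw [Walk.support_concat]
        simp [hx, Ne.symm hys.1]
    calc d - 1 ≤ (G.neighborFinset w).card - 1 := by
          have := G.minDegree_le_degree w
          rw [card_neighborFinset_eq_degree]
          omega
      _ ≤ _ := pred_card_le_card_erase
      _ ≤ _ := card_le_card hsub
  · intro y hy
    obtain ⟨t, ht, htl, -⟩ := mem_layer.mp hy
    -- Every neighbour of `y` in layer `i` is the penultimate vertex of the path `t` to `y`.
    have key : ∀ w ∈ (layer G x r i).bipartiteBelow G.Adj y, w = t.penultimate := by
      intro w hw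
      rw [mem_bipartiteBelow] at hw
      obtain ⟨hw, hwy⟩ := hw
      obtain ⟨p, hp, hpl, -⟩ := mem_layer.mp hw
      have hyp : y ∉ p.support := by
        intro hmem
        have hlen := p.length_takeUntil_le_length hmem
        have := path_unique_of_egirth hg (hp.takeUntil hmem) ht (by omega)
        rw [this] at hlen
        omega
      have := path_unique_of_egirth hg (hp.concat hyp hwy) ht
        (by rw [Walk.length_concat]; omega)
      rw [← this, Walk.penultimate_concat]
    exact card_le_one.mpr fun a ha b hb => (key a ha).trans (key b hb).symm

lemma pow_le_card_layer [DecidableRel G.Adj] {d g h : ℕ} (hmin : d ≤ G.minDegree)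
    (hg : (g : ℕ∞) ≤ G.egirth) (hh : 2 * h ≤ g) {x r : V} (hxr : G.Adj x r) :
    ∀ i < h, (d - 1) ^ i ≤ (layer G x r i).card
  | 0, _ => by
    rw [pow_zero, Nat.one_le_iff_ne_zero, ← pos_iff_ne_zero, card_pos]
    exact ⟨r, mem_layer.mpr ⟨.nil, .nil, rfl, by simp [hxr.ne]⟩⟩
  | i + 1, hi => by
    rw [pow_succ]
    exact (Nat.mul_le_mul_right _ (pow_le_card_layer hmin hg hh hxr i (by omega))).trans
      (mul_card_layer_le hmin hg hh hxr hi)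

lemma le_card_branch [DecidableRel G.Adj] {d g h : ℕ} (hmin : d ≤ G.minDegree)
    (hg : (g : ℕ∞) ≤ G.egirth) (hh : 2 * h ≤ g) {x r : V} (hxr : G.Adj x r) :
    ∑ i ∈ range h, (d - 1) ^ i ≤ (branch G x r h).card := by
  classical
  rw [branch, card_biUnion]
  · exact sum_le_sum fun i hi => pow_le_card_layer hmin hg hh hxr i (mem_range.mp hi)
  · intro i hi j hj hij
    rw [mem_coe, mem_range] at hi hj
    rw [Function.onFun, Finset.disjoint_left]
    intro w hw hw'
    obtain ⟨p, hp, hpl, -⟩ := mem_layer.mp hw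
    obtain ⟨q, hq, hql, -⟩ := mem_layer.mp hw'
    have := path_unique_of_egirth hg hp hq (by omega)
    subst this
    omega

lemma disjoint_branch_of_ne {g h : ℕ} (hg : (g : ℕ∞) ≤ G.egirth) (hh : 2 * h < g) {v r s : V}
    (hr : G.Adj v r) (hs : G.Adj v s) (hrs : r ≠ s) :
    Disjoint (branch G v r h) (branch G v s h) := by
  rw [Finset.disjoint_left]
  intro w hw hw'
  obtain ⟨p, hp, hpl, hpv⟩ := mem_branch.mp hw
  obtain ⟨q, hq, hql, hqv⟩ := mem_branch.mp hw'
  have := path_unique_of_egirth hg (hp.cons hpv (h := hr)) (hq.cons hqv (h := hs))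
    (by simp only [Walk.length_cons]; omega)
  injection this with _ h1
  exact hrs h1

lemma disjoint_branch_swap {g h : ℕ} (hg : (g : ℕ∞) ≤ G.egirth) (hh : 2 * h ≤ g) {u v : V}
    (huv : G.Adj u v) : Disjoint (branch G u v h) (branch G v u h) := by
  rw [Finset.disjoint_left]
  intro w hw hw'
  obtain ⟨p, hp, hpl, hpv⟩ := mem_branch.mp hw
  obtain ⟨q, hq, hql, hqv⟩ := mem_branch.mp hw'
  have := path_unique_of_egirth hg (hp.cons hpv (h := huv)) hq
    (by simp only [Walk.length_cons]; omega)
  rw [← this] at hqv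
  simp at hqv

end MooreBound

open MooreBound in
/-- **Moore bound.** Every finite graph with minimum degree at least `d ≥ 1` and girth at
least `g ≥ 3` has at least `n₀(d, g)` vertices. -/
theorem moore_bound {V : Type} [Fintype V] (G : SimpleGraph V) [DecidableRel G.Adj]
    (d g : ℕ) (hd : 1 ≤ d) (hg : 3 ≤ g)
    (hmin : d ≤ G.minDegree) (hgirth : (g : ℕ∞) ≤ G.egirth) :
    mooreBound d g ≤ (Fintype.card V : ℝ) := by
  classical
  -- The minimum degree of the graph without vertices is `0` by convention.
  have hV : Nonempty V := by
    by_contra hV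
    rw [not_nonempty_iff] at hV
    rw [SimpleGraph.minDegree_of_subsingleton] at hmin
    omega
  obtain ⟨v⟩ := hV
  have hdeg : d ≤ (G.neighborFinset v).card := by
    rw [SimpleGraph.card_neighborFinset_eq_degree]
    exact hmin.trans (G.minDegree_le_degree v)
  have hcast : ∑ i ∈ Finset.range (g / 2), ((d : ℝ) - 1) ^ i =
      ((∑ i ∈ Finset.range (g / 2), (d - 1) ^ i : ℕ) : ℝ) := by
    push_cast [Nat.cast_sub hd]
    rfl
  unfold mooreBound
  rw [hcast]
  split_ifs with hodd
  · have hlt : 2 * (g / 2) < g := by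
      obtain ⟨k, rfl⟩ := hodd
      omega
    let U := (G.neighborFinset v).biUnion fun r => branch G v r (g / 2)
    have hvU : v ∉ U := by
      simp only [U, Finset.mem_biUnion, not_exists, not_and]
      intro r _ hmem
      obtain ⟨p, -, -, hpv⟩ := mem_branch.mp hmem
      exact hpv p.end_mem_support
    have hU : d * ∑ i ∈ Finset.range (g / 2), (d - 1) ^ i ≤ U.card := by
      rw [Finset.card_biUnion]
      · refine (Nat.mul_le_mul_right _ hdeg).trans ?_
        rw [← smul_eq_mul]
        refine Finset.card_nsmul_le_sum _ _ _ fun r hr => ?_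
        exact le_card_branch hmin hgirth hlt.le ((G.mem_neighborFinset v r).mp hr)
      · intro r hr s hs hrs
        exact disjoint_branch_of_ne hgirth hlt ((G.mem_neighborFinset v r).mp hr)
          ((G.mem_neighborFinset v s).mp hs) hrs
    have hle : (insert v U).card ≤ Fintype.card V := Finset.card_le_univ _
    rw [Finset.card_insert_of_notMem hvU] at hle
    exact_mod_cast (by omega : 1 + d * ∑ i ∈ Finset.range (g / 2), (d - 1) ^ i ≤ Fintype.card V)
  · have hle : 2 * (g / 2) ≤ g := by omega
    obtain ⟨u, hu⟩ := Finset.card_pos.mp (hd.trans hdeg)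
    have huv : G.Adj v u := (G.mem_neighborFinset v u).mp hu
    have h1 := le_card_branch hmin hgirth hle huv
    have h2 := le_card_branch hmin hgirth hle huv.symm
    have h3 := Finset.card_le_univ (branch G v u (g / 2) ∪ branch G u v (g / 2))
    rw [Finset.card_union_of_disjoint (disjoint_branch_swap hgirth hle huv)] at h3
    exact_mod_cast (by omega : 2 * ∑ i ∈ Finset.range (g / 2), (d - 1) ^ i ≤ Fintype.card V)
end

section
/- If d is a positive integer and there exists a finite simple graph G on d²+1 vertices that is d-regular (every vertex has degree d) and has girth at least 5 (equivalently, G contains no cycle of length 3 or 4), then d ∈ {1, 2, 3, 7, 57}. -/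
/-!
Let `A` be the adjacency matrix, `J` the all-ones matrix and `n = d² + 1`. Girth at least `5` says
that two adjacent vertices have no common neighbour and two distinct vertices have at most one, so
`J - A² - A + (d - 1) I` has nonnegative entries. Its row sums are `n - d² - d + (d - 1) = 0`, so it
vanishes (`adjMatrix_sq_add`).

Hence `A` has the eigenvalue `d` on constant vectors and elsewhere only the roots `r > t` of
`x² + x = d - 1`, whose difference is `s = √(4d - 3)`. The projection onto the `r`-eigenspace is the
explicit matrix `s⁻¹ (A - t I - ((d - t) / n) J)`. Since the trace of an idempotent is a natural
number `m`, computing this trace gives `(2m - d²) s = d² - 2d` (`exists_multiplicity`).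

If `d ≠ 2`, the right-hand side is nonzero, so `s` is rational and hence an integer. It divides
`16 d (d - 2) = (s² + 3) (s² - 5)`, hence divides `15`, and `s ∈ {1, 3, 5, 15}` gives
`d ∈ {1, 3, 7, 57}` (`degree_of_multiplicity`).
-/

open SimpleGraph Matrix

lemma not_adj_of_common_neighbor {V : Type} {G : SimpleGraph V} (hgirth : (5 : ℕ∞) ≤ G.egirth)
    {u v w : V} (huv : G.Adj u v) (hvw : G.Adj v w) : ¬ G.Adj w u := by
  intro hwu
  have hcyc : (Walk.cons huv (Walk.cons hvw (Walk.cons hwu Walk.nil))).IsCycle := by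
    rw [Walk.isCycle_def, Walk.isTrail_def]
    have h1 := huv.ne
    have h2 := hvw.ne
    have h3 := hwu.ne
    simp [h1, h2, h3, h1.symm, h3.symm]
  have h := hgirth.trans (egirth_le_length hcyc)
  have h' : ((5 : ℕ) : ℕ∞) ≤ ((3 : ℕ) : ℕ∞) := by simpa using h
  have := ENat.natCast_le_natCast.mp h'
  omega

lemma common_neighbor_unique {V : Type} {G : SimpleGraph V} (hgirth : (5 : ℕ∞) ≤ G.egirth)
    {v w a b : V} (hvw : v ≠ w) (hva : G.Adj v a) (haw : G.Adj a w)
    (hvb : G.Adj v b) (hbw : G.Adj b w) : a = b := by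
  by_contra hab
  have hcyc : (Walk.cons hva (Walk.cons haw (Walk.cons hbw.symm
      (Walk.cons hvb.symm Walk.nil)))).IsCycle := by
    rw [Walk.isCycle_def, Walk.isTrail_def]
    have h1 := hva.ne
    have h2 := haw.ne
    have h3 := hvb.ne
    have h4 := hbw.ne
    simp [h1, h2, h3, h1.symm, h3.symm, h4.symm, hab, hvw, hvw.symm]
  have h := hgirth.trans (egirth_le_length hcyc)
  have h' : ((5 : ℕ) : ℕ∞) ≤ ((4 : ℕ) : ℕ∞) := by simpa using h
  have := ENat.natCast_le_natCast.mp h'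
  omega

lemma adjMatrix_mul_self_apply_eq_card {V : Type} [Fintype V] [DecidableEq V] (G : SimpleGraph V)
    [DecidableRel G.Adj] (v w : V) :
    (G.adjMatrix ℝ * G.adjMatrix ℝ) v w
      = ((Finset.univ.filter fun u => G.Adj v u ∧ G.Adj u w).card : ℝ) := by
  rw [Matrix.mul_apply, Finset.card_filter]
  push_cast
  refine Finset.sum_congr rfl fun u _ => ?_
  by_cases h1 : G.Adj v u <;> by_cases h2 : G.Adj u w <;> simp [adjMatrix_apply, h1, h2]

lemma sum_adjMatrix_row {V : Type} [Fintype V] {G : SimpleGraph V} [DecidableRel G.Adj]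
    {d : ℕ} (hreg : G.IsRegularOfDegree d) (v : V) : ∑ w, G.adjMatrix ℝ v w = d := by
  simp [adjMatrix_apply, ← hreg v, ← card_neighborFinset_eq_degree, neighborFinset_eq_filter]

/-- The quadratic identity `A² + A = J + (d - 1) I` for a graph attaining the Moore bound: the
difference of the two sides has entries of one sign and vanishing row sums. -/
lemma adjMatrix_sq_add {V : Type} [Fintype V] [DecidableEq V] (G : SimpleGraph V)
    [DecidableRel G.Adj] (d : ℕ) (hcard : Fintype.card V = d ^ 2 + 1)
    (hreg : G.IsRegularOfDegree d) (hgirth : (5 : ℕ∞) ≤ G.egirth) :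
    G.adjMatrix ℝ * G.adjMatrix ℝ
      = (Matrix.of fun _ _ => (1 : ℝ)) - G.adjMatrix ℝ + ((d : ℝ) - 1) • (1 : Matrix V V ℝ) := by
  set A := G.adjMatrix ℝ with hA
  set B : Matrix V V ℝ := (Matrix.of fun _ _ => (1 : ℝ)) - A
    + ((d : ℝ) - 1) • (1 : Matrix V V ℝ) - A * A with hB
  have hnonneg : ∀ v w, 0 ≤ B v w := by
    intro v w
    simp only [hB, Matrix.sub_apply, Matrix.add_apply, Matrix.smul_apply, Matrix.of_apply,
      smul_eq_mul]
    by_cases hvw : v = w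
    · subst hvw
      have h1 : (A * A) v v = d := by
        rw [hA, adjMatrix_mul_self_apply_self, hreg v]
      have h2 : A v v = 0 := by simp [hA, adjMatrix_apply]
      rw [h1, h2]
      simp
    · rw [Matrix.one_apply_ne hvw, hA, adjMatrix_mul_self_apply_eq_card]
      by_cases hadj : G.Adj v w
      · have h0 : (Finset.univ.filter fun u => G.Adj v u ∧ G.Adj u w) = ∅ := by
          ext u
          simp only [Finset.mem_filter, Finset.mem_univ, true_and, Finset.notMem_empty, iff_false]
          rintro ⟨h1, h2⟩
          exact not_adj_of_common_neighbor hgirth h1 h2 hadj.symm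
        rw [h0]
        simp [adjMatrix_apply, hadj]
      · have h1 : (Finset.univ.filter fun u => G.Adj v u ∧ G.Adj u w).card ≤ 1 := by
          rw [Finset.card_le_one]
          intro a ha b hb
          simp only [Finset.mem_filter, Finset.mem_univ, true_and] at ha hb
          exact common_neighbor_unique hgirth hvw ha.1 ha.2 hb.1 hb.2
        have h2 : ((Finset.univ.filter fun u => G.Adj v u ∧ G.Adj u w).card : ℝ) ≤ 1 := by
          exact_mod_cast h1
        simp only [adjMatrix_apply, hadj, if_false]
        linarith
  have hsq : ∀ v, ∑ w, (A * A) v w = (d : ℝ) * d := by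
    intro v
    simp only [Matrix.mul_apply]
    rw [Finset.sum_comm]
    simp only [← Finset.mul_sum, hA, sum_adjMatrix_row hreg, ← Finset.sum_mul]
  have hrow : ∀ v, ∑ w, B v w = 0 := by
    intro v
    simp only [hB, Matrix.sub_apply, Matrix.add_apply, Matrix.smul_apply, Matrix.of_apply,
      smul_eq_mul, Finset.sum_sub_distrib, Finset.sum_add_distrib, hsq, ← Finset.mul_sum]
    rw [hA, sum_adjMatrix_row hreg]
    simp [Matrix.one_apply, hcard]
    ring
  have hB0 : B = 0 := by
    ext v w
    exact (Finset.sum_eq_zero_iff_of_nonneg fun w _ => hnonneg v w).mp (hrow v) w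
      (Finset.mem_univ w)
  exact (sub_eq_zero.mp hB0).symm

lemma exists_trace_eq_natCast {V : Type} [Fintype V] [DecidableEq V] (E : Matrix V V ℝ)
    (hE : E * E = E) : ∃ m : ℕ, E.trace = m := by
  have hid : IsIdempotentElem (Matrix.toLin' E) := by
    unfold IsIdempotentElem
    rw [Module.End.mul_eq_comp, ← Matrix.toLin'_mul, hE]
  have hproj := LinearMap.IsIdempotentElem.isProj_range _ hid
  exact ⟨_, by rw [← Matrix.trace_toLin'_eq, hproj.trace]⟩

/-- Here `m` is the multiplicity of the eigenvalue `(s - 1) / 2`, obtained as the trace of the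
spectral projection. -/
lemma exists_multiplicity {V : Type} [Fintype V] [DecidableEq V] (A : Matrix V V ℝ) (d : ℕ)
    (hd : 0 < d) (hcard : Fintype.card V = d ^ 2 + 1) (htr : A.trace = 0)
    (hAJ : A * (Matrix.of fun _ _ => (1 : ℝ)) = (d : ℝ) • Matrix.of fun _ _ => (1 : ℝ))
    (hJA : (Matrix.of fun _ _ => (1 : ℝ)) * A = (d : ℝ) • Matrix.of fun _ _ => (1 : ℝ))
    (hAA : A * A = (Matrix.of fun _ _ => (1 : ℝ)) - A + ((d : ℝ) - 1) • (1 : Matrix V V ℝ)) :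
    ∃ (m : ℕ) (s : ℝ), s ^ 2 = 4 * d - 3 ∧ (2 * m - (d : ℝ) ^ 2) * s = (d : ℝ) ^ 2 - 2 * d := by
  set J : Matrix V V ℝ := Matrix.of fun _ _ => (1 : ℝ) with hJ
  have hd1 : (1 : ℝ) ≤ d := by exact_mod_cast hd
  have hJJ : J * J = ((d : ℝ) ^ 2 + 1) • J := by
    ext v w
    simp [hJ, Matrix.mul_apply, hcard]
  have hJtr : J.trace = (d : ℝ) ^ 2 + 1 := by
    simp [hJ, Matrix.trace, hcard]
  have hItr : (1 : Matrix V V ℝ).trace = (d : ℝ) ^ 2 + 1 := by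
    simp [Matrix.trace_one, hcard]
  obtain ⟨s, hs, hs0⟩ : ∃ s : ℝ, s ^ 2 = 4 * d - 3 ∧ s ≠ 0 := by
    refine ⟨√(4 * d - 3), Real.sq_sqrt (by linarith), (Real.sqrt_pos.mpr (by linarith)).ne'⟩
  obtain ⟨t, ht⟩ : ∃ t : ℝ, t = (-1 - s) / 2 := ⟨_, rfl⟩
  obtain rfl : s = -1 - 2 * t := by linarith
  obtain ⟨c, hc⟩ : ∃ c : ℝ, c * ((d : ℝ) ^ 2 + 1) = d - t :=
    ⟨(d - t) / ((d : ℝ) ^ 2 + 1), div_mul_cancel₀ _ (by positivity)⟩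
  have hroot : t ^ 2 + t = d - 1 := by linarith
  -- This is `(d - t) (d - r) = n` with `r = -1 - t` the other root, divided by `n`.
  have hcr : c * (d + 1 + t) = 1 := by
    have hn : (d : ℝ) ^ 2 + 1 ≠ 0 := by positivity
    apply mul_right_cancel₀ hn
    linear_combination (d + 1 + t) * hc - hroot
  have hM : (A - t • (1 : Matrix V V ℝ) - c • J) * (A - t • (1 : Matrix V V ℝ) - c • J)
      = (-1 - 2 * t) • (A - t • (1 : Matrix V V ℝ) - c • J) := by
    simp only [sub_mul, mul_sub, smul_mul_assoc, mul_smul_comm, one_mul, mul_one, hAJ, hJA, hAA,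
      hJJ]
    match_scalars
    · linear_combination c * hc - hcr
    · ring
    · linear_combination -hroot
  obtain ⟨m, hm⟩ := exists_trace_eq_natCast
    ((-1 - 2 * t)⁻¹ • (A - t • (1 : Matrix V V ℝ) - c • J)) (by
      rw [smul_mul_assoc, mul_smul_comm, hM, smul_smul (-1 - 2 * t)⁻¹ (-1 - 2 * t),
        inv_mul_cancel₀ hs0, one_smul])
  refine ⟨m, -1 - 2 * t, hs, ?_⟩
  rw [Matrix.trace_smul, Matrix.trace_sub, Matrix.trace_sub, Matrix.trace_smul, Matrix.trace_smul,
    htr, hItr, hJtr, smul_eq_mul, smul_eq_mul, smul_eq_mul, hc] at hm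
  rw [inv_mul_eq_iff_eq_mul₀ hs0] at hm
  linear_combination -2 * hm

lemma degree_of_multiplicity (d m : ℕ) (hd : 0 < d) (s : ℝ) (hs : s ^ 2 = 4 * d - 3)
    (hm : (2 * m - (d : ℝ) ^ 2) * s = (d : ℝ) ^ 2 - 2 * d) :
    d = 1 ∨ d = 2 ∨ d = 3 ∨ d = 7 ∨ d = 57 := by
  by_cases hd2 : d = 2
  · exact Or.inr (Or.inl hd2)
  have hsqZ : (2 * (m : ℤ) - (d : ℤ) ^ 2) ^ 2 * (4 * d - 3) = ((d : ℤ) ^ 2 - 2 * d) ^ 2 := by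
    have h : (2 * (m : ℝ) - (d : ℝ) ^ 2) ^ 2 * (4 * d - 3) = ((d : ℝ) ^ 2 - 2 * d) ^ 2 := by
      rw [← hs, ← hm]
      ring
    exact_mod_cast h
  have hne : (d : ℤ) ^ 2 - 2 * d ≠ 0 := by
    intro h
    have h' : (d : ℤ) * (d - 2) = 0 := by linarith
    rcases mul_eq_zero.mp h' with h | h <;> omega
  set k : ℤ := 2 * (m : ℤ) - (d : ℤ) ^ 2 with hk
  have hk0 : k ≠ 0 := by
    intro h
    rw [h] at hsqZ
    exact hne (pow_eq_zero_iff two_ne_zero |>.mp (by linarith))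
  -- `k²` divides the square of `d² - 2d`, so `k` divides `d² - 2d` with quotient `±s`.
  obtain ⟨q, hq⟩ : k ∣ (d : ℤ) ^ 2 - 2 * d :=
    (Int.pow_dvd_pow_iff two_ne_zero).mp ⟨_, hsqZ.symm⟩
  have hq2 : q ^ 2 = 4 * (d : ℤ) - 3 := by
    have hk2 : k ^ 2 ≠ 0 := pow_ne_zero 2 hk0
    apply mul_left_cancel₀ hk2
    rw [hsqZ, hq]
    ring
  have hdvd : q ∣ 15 := by
    refine ⟨q ^ 3 - 2 * q - 16 * k, ?_⟩
    linear_combination -16 * hq - (q ^ 2 + 4 * (d : ℤ) - 5) * hq2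
  have habs : q.natAbs ∣ 15 := by simpa using Int.natAbs_dvd_natAbs.mpr hdvd
  have hle : q.natAbs ≤ 15 := Nat.le_of_dvd (by norm_num) habs
  have hq2' : ((q.natAbs : ℤ)) ^ 2 = 4 * (d : ℤ) - 3 := by rw [Int.natAbs_sq, hq2]
  generalize q.natAbs = a at habs hle hq2'
  interval_cases a <;> omega

/-- **Hoffman–Singleton theorem.** If there is a `d`-regular graph on `d² + 1` vertices with
girth at least `5`, then `d ∈ {1, 2, 3, 7, 57}`. -/
theorem hoffman_singleton {V : Type} [Fintype V] (G : SimpleGraph V) [DecidableRel G.Adj]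
    (d : ℕ) (hd : 0 < d)
    (hcard : Fintype.card V = d ^ 2 + 1)
    (hreg : G.IsRegularOfDegree d)
    (hgirth : (5 : ℕ∞) ≤ G.egirth) :
    d = 1 ∨ d = 2 ∨ d = 3 ∨ d = 7 ∨ d = 57 := by
  classical
  have hAJ : G.adjMatrix ℝ * (Matrix.of fun _ _ => (1 : ℝ))
      = (d : ℝ) • Matrix.of fun _ _ => (1 : ℝ) := by
    ext v w
    simpa [Matrix.mul_apply] using sum_adjMatrix_row hreg v
  have hJA : (Matrix.of fun _ _ => (1 : ℝ)) * G.adjMatrix ℝ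
      = (d : ℝ) • Matrix.of fun _ _ => (1 : ℝ) := by
    ext v w
    simpa [Matrix.mul_apply, adjMatrix_apply, G.adj_comm] using sum_adjMatrix_row hreg w
  obtain ⟨m, s, hs, hm⟩ := exists_multiplicity (G.adjMatrix ℝ) d hd hcard
    (trace_adjMatrix ℝ G) hAJ hJA (adjMatrix_sq_add G d hcard hreg hgirth)
  exact degree_of_multiplicity d m hd s hs hm
end

section
/- Let d ≥ 3 and g ≥ 5 be integers. If there exists a finite simple graph G that is d-regular, has exactly n₀(d,g) vertices, and has girth at least g, then g ∈ {5, 6, 8, 12}. -/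
namespace MooreGirth
open SimpleGraph

/-! ### Short cycles and balls -/

/-- Two distinct paths with the same ends contain a cycle supported on their edges. -/
lemma egirth_le_of_two_paths {V : Type} (G : SimpleGraph V) {u v : V} (p p' : G.Walk u v)
    (hp : p.IsPath) (hp' : p'.IsPath) (hne : p ≠ p') :
    G.egirth ≤ (p.length + p'.length : ℕ) := by
  classical
  -- `H` is the subgraph formed by the edges of the two paths.
  set H : SimpleGraph V := SimpleGraph.fromEdgeSet {e | e ∈ p.edges ∨ e ∈ p'.edges} with hH
  have hsub : H.edgeSet ⊆ ((p.edges.toFinset ∪ p'.edges.toFinset : Finset (Sym2 V)) : Set _) := by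
    intro e he
    rw [hH, SimpleGraph.edgeSet_fromEdgeSet] at he
    simpa using he.1
  have hle : H ≤ G := by
    rw [← SimpleGraph.edgeSet_subset_edgeSet]
    intro e he
    have := hsub he
    simp only [Finset.coe_union, List.coe_toFinset, Set.mem_union] at this
    exact this.elim (fun h => p.edges_subset_edgeSet h) (fun h => p'.edges_subset_edgeSet h)
  have e1 : ∀ e ∈ p.edges, e ∈ H.edgeSet := fun e he => by
    rw [hH, SimpleGraph.edgeSet_fromEdgeSet]
    exact ⟨Or.inl he, G.not_isDiag_of_mem_edgeSet (p.edges_subset_edgeSet he)⟩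
  have e2 : ∀ e ∈ p'.edges, e ∈ H.edgeSet := fun e he => by
    rw [hH, SimpleGraph.edgeSet_fromEdgeSet]
    exact ⟨Or.inr he, G.not_isDiag_of_mem_edgeSet (p'.edges_subset_edgeSet he)⟩
  have hna : ¬ H.IsAcyclic := by
    intro hac
    have := (hac.subsingleton_path u v).elim
      ⟨p.transfer H e1, hp.transfer e1⟩ ⟨p'.transfer H e2, hp'.transfer e2⟩
    apply hne
    have h2 : p.transfer H e1 = p'.transfer H e2 := congrArg Subtype.val this
    apply SimpleGraph.Walk.ext_support
    have := congrArg SimpleGraph.Walk.support h2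
    simpa using this
  simp only [SimpleGraph.IsAcyclic, not_forall, not_not] at hna
  obtain ⟨w, c, hc⟩ := hna
  have h1 := SimpleGraph.egirth_le_length (hc.mapLe hle)
  refine h1.trans ?_
  rw [SimpleGraph.Walk.length_map, Nat.cast_le, ← SimpleGraph.Walk.length_edges,
    ← List.toFinset_card_of_nodup hc.isTrail.edges_nodup]
  calc c.edges.toFinset.card ≤ (p.edges.toFinset ∪ p'.edges.toFinset).card := by
        apply Finset.card_le_card
        intro e he
        have := hsub (c.edges_subset_edgeSet (List.mem_toFinset.1 he))
        exact_mod_cast this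
    _ ≤ _ := (Finset.card_union_le _ _).trans
        (Nat.add_le_add ((List.toFinset_card_le _).trans (by simp))
          ((List.toFinset_card_le _).trans (by simp)))

/-- `u` and `v` are at distance at most `i` (false for vertices in different components). -/
def Near {V : Type} (G : SimpleGraph V) (i : ℕ) (u v : V) : Prop :=
  ∃ p : G.Walk u v, p.IsPath ∧ p.length ≤ i

lemma near_of_walk {V : Type} {G : SimpleGraph V} {i : ℕ} {u v : V} (p : G.Walk u v)
    (h : p.length ≤ i) : Near G i u v := by
  classical
  exact ⟨p.bypass, p.bypass_isPath, p.length_bypass_le_length.trans h⟩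

lemma Near.mono {V : Type} {G : SimpleGraph V} {i j : ℕ} {u v : V} (h : Near G i u v)
    (hij : i ≤ j) : Near G j u v := by
  obtain ⟨p, hp, hl⟩ := h
  exact ⟨p, hp, hl.trans hij⟩

lemma Near.of_adj {V : Type} {G : SimpleGraph V} {i : ℕ} {u v x : V} (h : Near G i x v)
    (hux : G.Adj u x) : Near G (i + 1) u v := by
  obtain ⟨p, hp, hl⟩ := h
  exact near_of_walk (p.cons hux) (by simpa using hl)

lemma Near.exists_adj {V : Type} {G : SimpleGraph V} {i : ℕ} {u v : V} (h : Near G (i + 1) u v)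
    (huv : ¬ Near G 0 u v) : ∃ x, G.Adj u x ∧ Near G i x v := by
  obtain ⟨p, hp, hl⟩ := h
  cases p with
  | nil => exact absurd ⟨SimpleGraph.Walk.nil, by simp, by simp⟩ huv
  | cons hux r => exact ⟨_, hux, near_of_walk r (by simpa using hl)⟩

lemma near_zero {V : Type} {G : SimpleGraph V} {u v : V} : Near G 0 u v ↔ u = v := by
  constructor
  · rintro ⟨p, -, hl⟩
    exact SimpleGraph.Walk.eq_of_length_eq_zero (Nat.le_zero.1 hl)
  · rintro rfl
    exact ⟨SimpleGraph.Walk.nil, by simp, by simp⟩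

/-- If `u` is at distance more than `i` from `v`, a path of length at most `i + 1` from a
neighbour of `u` to `v` avoids `u`, and hence extends to a path from `u`. -/
lemma cons_isPath_of_not_near {V : Type} {G : SimpleGraph V} {i : ℕ} {u v x : V}
    (hu : ¬ Near G i u v) (hux : G.Adj u x) (p : G.Walk x v) (hp : p.IsPath)
    (hl : p.length ≤ i + 1) : (p.cons hux).IsPath := by
  classical
  rw [SimpleGraph.Walk.cons_isPath_iff]
  refine ⟨hp, fun hmem => hu ?_⟩
  have := p.length_dropUntil_lt_length hmem hux.ne
  exact near_of_walk (p.dropUntil u hmem) (by omega)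

/-- Below half the girth, a vertex `u` at distance more than `i` from `v` has at most one
neighbour at distance at most `i + 1` from `v`. -/
lemma neighbor_unique {V : Type} {G : SimpleGraph V} {i g : ℕ} (hgirth : (g : ℕ∞) ≤ G.egirth)
    (hi : 2 * (i + 2) < g) {u v x y : V} (hu : ¬ Near G i u v)
    (hux : G.Adj u x) (huy : G.Adj u y) (hx : Near G (i + 1) x v) (hy : Near G (i + 1) y v) :
    x = y := by
  by_contra hxy
  obtain ⟨p, hp, hpl⟩ := hx
  obtain ⟨r, hr, hrl⟩ := hy
  have := hgirth.trans (egirth_le_of_two_paths G (p.cons hux) (r.cons huy)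
    (cons_isPath_of_not_near hu hux p hp hpl) (cons_isPath_of_not_near hu huy r hr hrl)
    (fun h => hxy (by simpa using (congrArg SimpleGraph.Walk.snd h))))
  rw [Nat.cast_le] at this
  simp at this
  omega

/-- Variant of `neighbor_unique` at exactly half the girth, for `u` at distance `i + 1`: the
path realising this distance is compared with the paths through the two neighbours. -/
lemma neighbor_unique' {V : Type} {G : SimpleGraph V} {i g : ℕ} (hgirth : (g : ℕ∞) ≤ G.egirth)
    (hi : 2 * (i + 2) ≤ g) {u v x y : V} (hu : ¬ Near G i u v) (hu' : Near G (i + 1) u v)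
    (hux : G.Adj u x) (huy : G.Adj u y) (hx : Near G (i + 1) x v) (hy : Near G (i + 1) y v) :
    x = y := by
  obtain ⟨s, hs, hsl⟩ := hu'
  have key : ∀ z, G.Adj u z → Near G (i + 1) z v → z = s.snd := by
    intro z huz hz
    by_contra hne
    obtain ⟨p, hp, hpl⟩ := hz
    have := hgirth.trans (egirth_le_of_two_paths G (p.cons huz) s
      (cons_isPath_of_not_near hu huz p hp hpl) hs
      (fun h => hne (by simpa using (congrArg SimpleGraph.Walk.snd h))))
    rw [Nat.cast_le] at this
    simp at this
    omega
  rw [key x hux hx, key y huy hy]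

/-! ### The polynomials -/

/-- The rescaled Chebyshev polynomial of the second kind `q ^ (n / 2) * U_n (x / (2 √q))`,
evaluated at an element `x` of an arbitrary ring. -/
def cheb {R : Type*} [Ring R] (q : ℕ) (x : R) : ℕ → R
  | 0 => 1
  | 1 => x
  | n + 2 => x * cheb q x (n + 1) - q * cheb q x n

/-- The polynomial `cheb n + cheb (n - 1)`, evaluated at an element of an arbitrary ring. At the
adjacency matrix of a `(q + 1)`-regular graph it counts the non-backtracking walks of length at
most `n`. -/
def ballPoly {R : Type*} [Ring R] (q : ℕ) (x : R) : ℕ → R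
  | 0 => 1
  | 1 => x + 1
  | n + 2 => x * ballPoly q x (n + 1) - q * ballPoly q x n

lemma ballPoly_succ {R : Type*} [Ring R] (q : ℕ) (x : R) (n : ℕ) :
    ballPoly q x (n + 1) = cheb q x (n + 1) + cheb q x n := by
  induction n using Nat.twoStepInduction with
  | zero => simp [ballPoly, cheb]
  | one =>
    simp only [ballPoly, cheb]
    noncomm_ring
  | more n h1 h2 =>
    rw [ballPoly, h1, h2]
    change x * (cheb q x (n + 2) + cheb q x (n + 1)) - q * (cheb q x (n + 1) + cheb q x n)
      = (x * cheb q x (n + 2) - q * cheb q x (n + 1)) + (x * cheb q x (n + 1) - q * cheb q x n)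
    noncomm_ring

lemma map_cheb {R S : Type*} [Ring R] [Ring S] (f : R →+* S) (q : ℕ) (x : R) (n : ℕ) :
    f (cheb q x n) = cheb q (f x) n := by
  induction n using Nat.twoStepInduction with
  | zero => simp [cheb]
  | one => simp [cheb]
  | more n h1 h2 => simp [cheb, h1, h2]

lemma map_ballPoly {R S : Type*} [Ring R] [Ring S] (f : R →+* S) (q : ℕ) (x : R) (n : ℕ) :
    f (ballPoly q x n) = ballPoly q (f x) n := by
  induction n using Nat.twoStepInduction with
  | zero => simp [ballPoly]
  | one => simp [ballPoly]
  | more n h1 h2 => simp [ballPoly, h1, h2]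

/-- At `x = d = q + 1`, `ballPoly n` is the size of a ball of radius `n` in the `d`-regular tree. -/
lemma ballPoly_degree (q n : ℕ) :
    ballPoly q ((q : ℝ) + 1) n = 1 + (q + 1) * ∑ i ∈ Finset.range n, (q : ℝ) ^ i := by
  induction n using Nat.twoStepInduction with
  | zero => simp [ballPoly]
  | one => simp [ballPoly]; ring
  | more n h1 h2 =>
    have e : ∀ n, (q : ℝ) * ∑ i ∈ Finset.range n, (q : ℝ) ^ i
        = ∑ i ∈ Finset.range (n + 1), (q : ℝ) ^ i - 1 := by
      intro n
      rw [Finset.sum_range_succ', Finset.mul_sum]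
      simp [pow_succ, mul_comm]
    rw [ballPoly, h1, h2]
    linear_combination (q + 1 : ℝ) * e (n + 1) - (q + 1 : ℝ) * e n

/-- `(x + d) * cheb (n + 1)` for `d = q + 1`, in terms of `ballPoly`. -/
lemma ballPoly_add_mul {R : Type*} [Ring R] (q : ℕ) (x : R) (n : ℕ) :
    ballPoly q x (n + 2) + q * ballPoly q x (n + 1) = (x + (q + 1)) * cheb q x (n + 1) := by
  rw [ballPoly_succ, ballPoly_succ, cheb]
  noncomm_ring

/-! ### The adjacency matrix of a Moore graph -/

section matrix

open Matrix

variable {V : Type} [Fintype V] (G : SimpleGraph V) [DecidableRel G.Adj]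

open Classical in
/-- The matrix of the relation "at distance at most `i`". -/
noncomputable def ballMatrix (i : ℕ) : Matrix V V ℝ :=
  Matrix.of fun u v => if Near G i u v then 1 else 0

open Classical in
lemma adjMatrix_mul_ballMatrix (i : ℕ) (u v : V) :
    (G.adjMatrix ℝ * ballMatrix G i) u v
      = ((G.neighborFinset u).filter (fun x => Near G i x v)).card := by
  rw [SimpleGraph.adjMatrix_mul_apply]
  simp [ballMatrix]

/-- Below half the girth, `ballPoly i` at the adjacency matrix is the matrix of balls. -/
lemma ballPoly_adjMatrix [DecidableEq V] {q g : ℕ} (hreg : G.IsRegularOfDegree (q + 1))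
    (hgirth : (g : ℕ∞) ≤ G.egirth) (i : ℕ) (hi : 2 * i < g) :
    ballPoly q (G.adjMatrix ℝ) i = ballMatrix G i := by
  classical
  induction i using Nat.twoStepInduction with
  | zero =>
    ext u v
    simp [ballPoly, ballMatrix, near_zero, Matrix.one_apply]
  | one =>
    ext u v
    have : Near G 1 u v ↔ (G.Adj u v ∨ u = v) := by
      constructor
      · intro h
        by_cases h0 : Near G 0 u v
        · exact Or.inr (near_zero.1 h0)
        · obtain ⟨x, hx, hxv⟩ := h.exists_adj h0
          exact Or.inl (near_zero.1 hxv ▸ hx)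
      · rintro (h | rfl)
        · exact (near_zero.2 rfl : Near G 0 v v).of_adj h
        · exact (near_zero.2 rfl : Near G 0 u u).mono (by omega)
    simp only [ballPoly, ballMatrix, this, Matrix.add_apply, SimpleGraph.adjMatrix_apply,
      Matrix.one_apply, Matrix.of_apply]
    by_cases h : u = v
    · subst h; simp
    · simp [h]
  | more i h1 h2 =>
    rw [ballPoly, h1 (by omega), h2 (by omega), sub_eq_iff_eq_add]
    ext u v
    rw [adjMatrix_mul_ballMatrix, Matrix.add_apply, ← nsmul_eq_mul, Matrix.smul_apply]
    by_cases hu : Near G i u v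
    · have : (G.neighborFinset u).filter (fun x => Near G (i + 1) x v) = G.neighborFinset u := by
        apply Finset.filter_true_of_mem
        intro x hx
        exact hu.of_adj ((G.mem_neighborFinset u x).1 hx).symm
      rw [this, SimpleGraph.card_neighborFinset_eq_degree, hreg u]
      simp [ballMatrix, hu, hu.mono (show i ≤ i + 2 by omega)]
      ring
    · by_cases hu2 : Near G (i + 2) u v
      · have : ((G.neighborFinset u).filter (fun x => Near G (i + 1) x v)).card = 1 := by
          rw [Finset.card_eq_one]
          obtain ⟨x, hx, hxv⟩ := hu2.exists_adj (fun h => hu (h.mono (by omega)))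
          refine ⟨x, Finset.eq_singleton_iff_unique_mem.2 ⟨by simp [hx, hxv], ?_⟩⟩
          intro y hy
          simp only [Finset.mem_filter, SimpleGraph.mem_neighborFinset] at hy
          exact neighbor_unique hgirth hi hu hy.1 hx hy.2 hxv
        rw [this]
        simp [ballMatrix, hu, hu2]
      · have : (G.neighborFinset u).filter (fun x => Near G (i + 1) x v) = ∅ := by
          apply Finset.filter_false_of_mem
          intro x hx hxv
          exact hu2 (hxv.of_adj ((G.mem_neighborFinset u x).1 hx))
        rw [this]
        simp [ballMatrix, hu, hu2]

lemma trace_ballPoly [DecidableEq V] {q g : ℕ} (hreg : G.IsRegularOfDegree (q + 1))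
    (hgirth : (g : ℕ∞) ≤ G.egirth) (i : ℕ) (hi : 2 * i < g) :
    (ballPoly q (G.adjMatrix ℝ) i).trace = Fintype.card V := by
  have : ∀ u, Near G i u u := fun u => (near_zero.2 rfl).mono (Nat.zero_le i)
  rw [ballPoly_adjMatrix G hreg hgirth i hi]
  simp [Matrix.trace, ballMatrix, this]

lemma ballPoly_mulVec_one [DecidableEq V] {q : ℕ} (hreg : G.IsRegularOfDegree (q + 1)) (i : ℕ) :
    ballPoly q (G.adjMatrix ℝ) i *ᵥ 1 = fun _ => ballPoly q ((q : ℝ) + 1) i := by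
  have hA : G.adjMatrix ℝ *ᵥ 1 = fun _ => (q : ℝ) + 1 := by
    ext u
    simp [hreg u]
  have hA' : ∀ c : ℝ, G.adjMatrix ℝ *ᵥ (fun _ => c) = fun _ => ((q : ℝ) + 1) * c := by
    intro c
    ext u
    simp [hreg u]
  induction i using Nat.twoStepInduction with
  | zero => ext; simp [ballPoly]
  | one =>
    rw [ballPoly, Matrix.add_mulVec, hA]
    ext; simp [ballPoly]
  | more i h1 h2 =>
    rw [ballPoly, Matrix.sub_mulVec, ← Matrix.mulVec_mulVec, h2, hA', ← nsmul_eq_mul,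
      Matrix.smul_mulVec, h1]
    ext; simp [ballPoly]

lemma all_eq_of_sum_eq {M : Matrix V V ℝ} {c : ℝ} (hle : ∀ u v, M u v ≤ c)
    (hsum : M *ᵥ 1 = fun _ => c * Fintype.card V) : M = Matrix.of fun _ _ => c := by
  ext u v
  have h := congrFun hsum u
  simp only [Matrix.mulVec, dotProduct, Pi.one_apply, mul_one] at h
  have h2 : ∑ x, M u x = ∑ _x : V, c := by
    rw [h]; simp [mul_comm]
  exact (Finset.sum_eq_sum_iff_of_le (fun x _ => hle u x)).1 h2 v (Finset.mem_univ v)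

/-- In a Moore graph of girth `2 h + 1` any two vertices are at distance at most `h`: the entries of
the ball matrix are at most `1`, and the row sums force equality. -/
lemma odd_matrix [DecidableEq V] {q h : ℕ} (hreg : G.IsRegularOfDegree (q + 1))
    (hgirth : ((2 * h + 1 : ℕ) : ℕ∞) ≤ G.egirth)
    (hcard : (Fintype.card V : ℝ) = ballPoly q ((q : ℝ) + 1) h) :
    ballPoly q (G.adjMatrix ℝ) h = Matrix.of fun _ _ => (1 : ℝ) := by
  apply all_eq_of_sum_eq
  · intro u v
    rw [ballPoly_adjMatrix G hreg hgirth h (by omega)]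
    simp only [ballMatrix, Matrix.of_apply]
    split_ifs <;> norm_num
  · rw [ballPoly_mulVec_one G hreg, hcard, one_mul]

/-- In a Moore graph of girth `2 h`, with `h = k + 2`, the matrix `(A + d) * cheb (h - 1) (A)` is
`d J`, where `d = q + 1`: its entries are at most `d`, and the row sums force equality. (At the entry
`(u, v)` with `u` at distance at least `h` from `v`, this says that all neighbours of `u` are at
distance `h - 1` from `v`.) The left side is written as in `ballPoly_add_mul`. -/
lemma even_matrix [DecidableEq V] {q k : ℕ} (hreg : G.IsRegularOfDegree (q + 1))
    (hgirth : ((2 * (k + 2) : ℕ) : ℕ∞) ≤ G.egirth)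
    (hcard : ((q : ℝ) + 1) * (Fintype.card V : ℝ)
      = ballPoly q ((q : ℝ) + 1) (k + 2) + q * ballPoly q ((q : ℝ) + 1) (k + 1)) :
    ballPoly q (G.adjMatrix ℝ) (k + 2) + (q : Matrix V V ℝ) * ballPoly q (G.adjMatrix ℝ) (k + 1)
      = Matrix.of fun _ _ => (q + 1 : ℝ) := by
  classical
  apply all_eq_of_sum_eq
  · intro u v
    rw [ballPoly, ballPoly_adjMatrix G hreg hgirth (k + 1) (by omega),
      ballPoly_adjMatrix G hreg hgirth k (by omega), ← nsmul_eq_mul, ← nsmul_eq_mul,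
      Matrix.add_apply, Matrix.sub_apply, adjMatrix_mul_ballMatrix, Matrix.smul_apply,
      Matrix.smul_apply]
    have hN : (((G.neighborFinset u).filter (fun x => Near G (k + 1) x v)).card : ℝ) ≤ q + 1 := by
      have := Finset.card_filter_le (G.neighborFinset u) (fun x => Near G (k + 1) x v)
      rw [SimpleGraph.card_neighborFinset_eq_degree, hreg u] at this
      exact_mod_cast this
    have hq : (0 : ℝ) ≤ q := Nat.cast_nonneg q
    by_cases h1 : Near G (k + 1) u v
    · by_cases h0 : Near G k u v
      · simpa [ballMatrix, h0, h1] using hN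
      · have : ((G.neighborFinset u).filter (fun x => Near G (k + 1) x v)).card ≤ 1 := by
          rw [Finset.card_le_one]
          intro x hx y hy
          simp only [Finset.mem_filter, SimpleGraph.mem_neighborFinset] at hx hy
          exact neighbor_unique' hgirth le_rfl h0 h1 hx.1 hy.1 hx.2 hy.2
        have : (((G.neighborFinset u).filter (fun x => Near G (k + 1) x v)).card : ℝ) ≤ 1 := by
          exact_mod_cast this
        simp only [ballMatrix, h0, h1, Matrix.of_apply, if_true, if_false, nsmul_eq_mul]
        linarith
    · have h0 : ¬ Near G k u v := fun h => h1 (h.mono (by omega))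
      simpa [ballMatrix, h0, h1] using hN
  · rw [Matrix.add_mulVec, ballPoly_mulVec_one G hreg, ← nsmul_eq_mul, Matrix.smul_mulVec,
      ballPoly_mulVec_one G hreg, hcard]
    ext; simp

end matrix

/-! ### Multiplicities of eigenvalues -/

section spectral

open Matrix Polynomial

variable {V : Type} [Fintype V] [DecidableEq V]

lemma aeval_spectral {A : Matrix V V ℝ} (hA : A.IsHermitian) (p : ℝ[X]) :
    aeval A p = Unitary.conjStarAlgAut ℝ _ hA.eigenvectorUnitary
      (diagonal fun i => p.eval (hA.eigenvalues i)) := by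
  conv_lhs => rw [hA.spectral_theorem]
  have h1 := Polynomial.aeval_algHom_apply
    ((Unitary.conjStarAlgAut ℝ (Matrix V V ℝ) hA.eigenvectorUnitary : _ ≃⋆ₐ[ℝ] _) :
      Matrix V V ℝ →ₐ[ℝ] Matrix V V ℝ) (diagonal hA.eigenvalues) p
  have h2 := Polynomial.aeval_algHom_apply
    (Matrix.diagonalAlgHom ℝ : (V → ℝ) →ₐ[ℝ] Matrix V V ℝ) hA.eigenvalues p
  have h3 : aeval hA.eigenvalues p = fun i => p.eval (hA.eigenvalues i) := by
    ext i
    rw [Polynomial.aeval_fn_apply, Polynomial.coe_aeval_eq_eval]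
  rw [h3] at h2
  simp only [Matrix.diagonalAlgHom_apply] at h2
  rw [h2] at h1
  exact h1

lemma trace_aeval {A : Matrix V V ℝ} (hA : A.IsHermitian) (p : ℝ[X]) :
    (aeval A p).trace = ∑ i, p.eval (hA.eigenvalues i) := by
  rw [aeval_spectral hA, Unitary.conjStarAlgAut_apply, Matrix.trace_mul_comm, ← mul_assoc]
  simp [Matrix.trace]

lemma eval_eigenvalue_eq_zero {A : Matrix V V ℝ} (hA : A.IsHermitian) {p : ℝ[X]}
    (hp : aeval A p = 0) (i : V) : p.eval (hA.eigenvalues i) = 0 := by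
  rw [aeval_spectral hA, EmbeddingLike.map_eq_zero_iff] at hp
  simpa using congrFun (congrFun hp i) i

/-- If every eigenvalue of `A` is either `d` or a root of `P`, and the trace of `P(A)` shows that
`d` is a simple eigenvalue, then the trace of `Q(A)` for `Q = P / (X - θ)` determines the
multiplicity `m` of `θ`. -/
lemma exists_multiplicity {A : Matrix V V ℝ} (hA : A.IsHermitian) {P Q : ℝ[X]} {d θ : ℝ}
    (hPQ : P = (X - C θ) * Q) (hmin : aeval A ((X - C d) * P) = 0) (hd : P.eval d ≠ 0)
    (htr : (aeval A P).trace = P.eval d) :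
    ∃ m : ℕ, (aeval A Q).trace = Q.eval d + m * Q.eval θ := by
  classical
  have hdθ : d ≠ θ := by
    rintro rfl
    simp [hPQ] at hd
  have hz : ∀ i, hA.eigenvalues i ≠ d → P.eval (hA.eigenvalues i) = 0 := by
    intro i hi
    have := eval_eigenvalue_eq_zero hA hmin i
    simpa [sub_eq_zero, hi] using this
  have hone : ((Finset.univ.filter fun i => hA.eigenvalues i = d).card : ℝ) = 1 := by
    rw [trace_aeval hA] at htr
    have : ∀ i, P.eval (hA.eigenvalues i) = if hA.eigenvalues i = d then P.eval d else 0 := by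
      intro i
      split_ifs with h
      · rw [h]
      · exact hz i h
    simp only [this, ← Finset.sum_filter, Finset.sum_const, nsmul_eq_mul] at htr
    exact mul_right_cancel₀ hd (by rw [htr, one_mul])
  refine ⟨(Finset.univ.filter fun i => hA.eigenvalues i = θ).card, ?_⟩
  rw [trace_aeval hA]
  have : ∀ i, Q.eval (hA.eigenvalues i) = (if hA.eigenvalues i = d then Q.eval d else 0)
      + (if hA.eigenvalues i = θ then Q.eval θ else 0) := by
    intro i
    by_cases h1 : hA.eigenvalues i = d
    · simp [h1, hdθ]
    · by_cases h2 : hA.eigenvalues i = θ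
      · simp [h2, hdθ.symm]
      · have := hz i h1
        rw [hPQ] at this
        simpa [h1, h2, sub_eq_zero] using this
  simp only [this, Finset.sum_add_distrib, ← Finset.sum_filter, Finset.sum_const, nsmul_eq_mul]
  rw [hone, one_mul]

end spectral

section multiplicity

open Matrix Polynomial

lemma aeval_ballPoly {V : Type} [Fintype V] [DecidableEq V] (A : Matrix V V ℝ) (q n : ℕ) :
    aeval A (ballPoly q (X : ℝ[X]) n) = ballPoly q A n := by
  simpa using map_ballPoly (aeval A : ℝ[X] →ₐ[ℝ] Matrix V V ℝ).toRingHom q X n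

lemma eval_ballPoly (t : ℝ) (q n : ℕ) :
    (ballPoly q (X : ℝ[X]) n).eval t = ballPoly q t n := by
  simpa using map_ballPoly (evalRingHom t) q X n

lemma eval_cheb (t : ℝ) (q n : ℕ) : (cheb q (X : ℝ[X]) n).eval t = cheb q t n := by
  simpa using map_cheb (evalRingHom t) q X n

/-- The divided difference `(ballPoly n (X) - ballPoly n (θ)) / (X - θ)`. -/
noncomputable def divDiff (q : ℕ) (θ : ℝ) : ℕ → ℝ[X]
  | 0 => 0
  | 1 => 1
  | n + 2 => C θ * divDiff q θ (n + 1) - (q : ℝ[X]) * divDiff q θ n + ballPoly q X (n + 1)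

lemma sub_mul_divDiff (q : ℕ) (θ : ℝ) (n : ℕ) :
    (X - C θ) * divDiff q θ n = ballPoly q X n - C (ballPoly q θ n) := by
  induction n using Nat.twoStepInduction with
  | zero => simp [divDiff, ballPoly]
  | one => simp [divDiff, ballPoly]
  | more n h1 h2 =>
    simp only [divDiff, ballPoly, C_sub, C_mul, map_natCast]
    linear_combination C θ * h2 - (q : ℝ[X]) * h1

lemma eval_divDiff_self (q : ℕ) (θ : ℝ) (n : ℕ) :
    (divDiff q θ n).eval θ = (derivative (ballPoly q (X : ℝ[X]) n)).eval θ := by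
  have := congrArg (fun p => (derivative p).eval θ) (sub_mul_divDiff q θ n)
  simpa using this

/-- The trace of `divDiff` at a matrix for which each `ballPoly i` has trace `N`, as for the
adjacency matrix of a graph of large girth on `N` vertices. -/
lemma trace_divDiff {V : Type} [Fintype V] [DecidableEq V] (A : Matrix V V ℝ) (q : ℕ) (θ N : ℝ)
    (n : ℕ) (h : ∀ i ≤ n, (ballPoly q A i).trace = N) :
    (q + 1 - θ) * (aeval A (divDiff q θ (n + 1))).trace
      = N * (1 - cheb q θ (n + 1) + q * cheb q θ n) := by
  have h0 := h 0 (Nat.zero_le n)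
  simp only [ballPoly] at h0
  have step : ∀ n, (aeval A (divDiff q θ (n + 2))).trace = θ * (aeval A (divDiff q θ (n + 1))).trace
      - q * (aeval A (divDiff q θ n)).trace + (ballPoly q A (n + 1)).trace := by
    intro n
    have e1 : ∀ p : ℝ[X], aeval A (C θ * p) = θ • aeval A p := fun p => by
      rw [← smul_eq_C_mul, map_smul]
    have e2 : ∀ p : ℝ[X], aeval A ((q : ℝ[X]) * p) = (q : ℝ) • aeval A p := fun p => by
      rw [← map_natCast (C : ℝ →+* ℝ[X]), ← smul_eq_C_mul, map_smul]
    rw [divDiff, map_add, map_sub, e1, e2, aeval_ballPoly, Matrix.trace_add, Matrix.trace_sub,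
      Matrix.trace_smul, Matrix.trace_smul, smul_eq_mul, smul_eq_mul]
  induction n using Nat.twoStepInduction with
  | zero =>
    simp only [divDiff, cheb, map_one, h0]
    ring
  | one =>
    have h1 := h 1 le_rfl
    rw [step, h1]
    simp only [divDiff, cheb, map_one, h0, map_zero, Matrix.trace_zero]
    ring
  | more n ih1 ih2 =>
    have hn := h (n + 2) le_rfl
    rw [step, hn]
    have i1 := ih1 (fun i hi => h i (by omega))
    have i2 := ih2 (fun i hi => h i (by omega))
    simp only [cheb] at i1 i2 ⊢
    linear_combination θ * i2 - q * i1

/-- The first-order relation satisfied by Chebyshev polynomials, rescaled. -/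
lemma derivative_cheb (q n : ℕ) :
    (X ^ 2 - 4 * (q : ℝ[X])) * derivative (cheb q (X : ℝ[X]) (n + 1))
      = ((n : ℝ[X]) + 1) * X * cheb q X (n + 1) - 2 * (q : ℝ[X]) * ((n : ℝ[X]) + 2) * cheb q X n := by
  induction n using Nat.twoStepInduction with
  | zero => simp [cheb]; ring
  | one => simp [cheb]; ring
  | more n h1 h2 =>
    simp only [cheb, derivative_sub, derivative_mul, derivative_X, derivative_natCast] at h1 h2 ⊢
    push_cast at h1 h2 ⊢
    linear_combination X * h2 - (q : ℝ[X]) * h1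

lemma derivative_cheb_eval (q n : ℕ) (θ : ℝ) :
    (θ ^ 2 - 4 * q) * (derivative (cheb q (X : ℝ[X]) (n + 1))).eval θ
      = (n + 1) * θ * cheb q θ (n + 1) - 2 * q * (n + 2) * cheb q θ n := by
  have := congrArg (eval θ) (derivative_cheb q n)
  simpa [eval_cheb] using this

lemma cheb_ne_zero {q : ℕ} (hq : 0 < q) (θ : ℝ) (n : ℕ) (h : cheb q θ (n + 1) = 0) :
    cheb q θ n ≠ 0 := by
  induction n with
  | zero => simp [cheb]
  | succ n ih =>
    intro h1
    simp only [cheb, h1, mul_zero, zero_sub, neg_eq_zero, mul_eq_zero, Nat.cast_eq_zero] at h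
    exact ih h1 (h.resolve_left hq.ne')

variable {V : Type} [Fintype V] [DecidableEq V] (G : SimpleGraph V) [DecidableRel G.Adj]

/-- The trace computation of `exists_multiplicity` when `P(A)` is a constant matrix, `A` being the
adjacency matrix. -/
lemma exists_multiplicity_adjMatrix {q : ℕ} (hreg : G.IsRegularOfDegree (q + 1)) {P Q : ℝ[X]}
    {κ θ : ℝ} (hPQ : P = (X - C θ) * Q)
    (hP : aeval (G.adjMatrix ℝ) P = Matrix.of fun _ _ => κ)
    (hPd : P.eval ((q : ℝ) + 1) = κ * Fintype.card V) (hne : κ * Fintype.card V ≠ 0) :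
    ∃ m : ℕ, ((q : ℝ) + 1 - θ) * (aeval (G.adjMatrix ℝ) Q).trace
      = κ * Fintype.card V + m * (((q : ℝ) + 1 - θ) * Q.eval θ) := by
  have hA : (G.adjMatrix ℝ).IsHermitian := by
    rw [Matrix.IsHermitian, Matrix.conjTranspose_eq_transpose_of_trivial]
    exact G.isSymm_adjMatrix
  obtain ⟨m, hm⟩ := exists_multiplicity hA (d := (q : ℝ) + 1) hPQ (by
      rw [map_mul, hP, map_sub, aeval_X, aeval_C, sub_mul, sub_eq_zero, ← Algebra.smul_def]
      ext u v
      rw [SimpleGraph.adjMatrix_mul_apply]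
      simp [hreg u]) (by rwa [hPd]) (by
      rw [hP, hPd]
      simp [Matrix.trace, mul_comm])
  refine ⟨m, ?_⟩
  have h2 : P.eval ((q : ℝ) + 1) = (((q : ℝ) + 1) - θ) * Q.eval ((q : ℝ) + 1) := by
    rw [hPQ]; simp
  rw [hm, ← hPd, h2]
  ring

/-- The multiplicity `m` of an eigenvalue `θ` of a Moore graph of odd girth `2 h + 1`, where
`h = j + 2`. -/
lemma odd_multiplicity {q j : ℕ} (hq : 0 < q) (hreg : G.IsRegularOfDegree (q + 1))
    (hgirth : ((2 * (j + 2) + 1 : ℕ) : ℕ∞) ≤ G.egirth)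
    (hcard : (Fintype.card V : ℝ) = ballPoly q ((q : ℝ) + 1) (j + 2)) {θ : ℝ}
    (hθ : ballPoly q θ (j + 2) = 0) (hV : (Fintype.card V : ℝ) ≠ 0) :
    ∃ m : ℕ, (m : ℝ) * (((q : ℝ) + 1 - θ) * ((2 * j + 5) * (q + 1 + θ) + (q - 1)))
      = Fintype.card V * (q + 1) * (4 * q - θ ^ 2) := by
  obtain ⟨m, hm⟩ := exists_multiplicity_adjMatrix G hreg (P := ballPoly q X (j + 2))
    (Q := divDiff q θ (j + 2)) (κ := 1) (θ := θ) (by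
      rw [sub_mul_divDiff, hθ]; simp) (by
      rw [aeval_ballPoly]
      exact odd_matrix G hreg hgirth hcard) (by
      rw [eval_ballPoly, hcard, one_mul]) (by simpa using hV)
  refine ⟨m, ?_⟩
  rw [trace_divDiff (G.adjMatrix ℝ) q θ (Fintype.card V) (j + 1)
    (fun i hi => trace_ballPoly G hreg hgirth i (by omega)), eval_divDiff_self] at hm
  have hder : (derivative (ballPoly q (X : ℝ[X]) (j + 2))).eval θ
      = (derivative (cheb q (X : ℝ[X]) (j + 2))).eval θ
        + (derivative (cheb q (X : ℝ[X]) (j + 1))).eval θ := by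
    rw [ballPoly_succ, derivative_add, eval_add]
  have d2 := derivative_cheb_eval q (j + 1) θ
  have d1 := derivative_cheb_eval q j θ
  rw [ballPoly_succ] at hθ
  have hu : cheb q θ (j + 1) ≠ 0 := by
    intro h0
    exact cheb_ne_zero hq θ (j + 1) (by simpa [h0] using hθ) h0
  have hrec : cheb q θ (j + 2) = θ * cheb q θ (j + 1) - q * cheb q θ j := rfl
  rw [hder] at hm
  push_cast at d2
  apply mul_right_cancel₀ hu
  have hqn : (q : ℝ) * cheb q θ j = (θ + 1) * cheb q θ (j + 1) := by
    linear_combination hrec - hθ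
  have hU : cheb q θ (j + 1 + 1) = - cheb q θ (j + 1) := by linear_combination hθ
  rw [show j + 2 = j + 1 + 1 from rfl] at hm d2
  rw [hU] at d2 hm
  linear_combination (θ ^ 2 - 4 * q) * hm + (m : ℝ) * (q + 1 - θ) * (d2 + d1)
    - 2 * (m : ℝ) * (q + 1 - θ) * (j + 2) * hqn

/-- The multiplicity `m` of an eigenvalue `θ ≠ ±(q + 1)` of a Moore graph of even girth `2 h`,
where `h = k + 2`. -/
lemma even_multiplicity {q k : ℕ} (hq : 0 < q) (hreg : G.IsRegularOfDegree (q + 1))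
    (hgirth : ((2 * (k + 2) : ℕ) : ℕ∞) ≤ G.egirth)
    (hcard : ((q : ℝ) + 1) * (Fintype.card V : ℝ)
      = ballPoly q ((q : ℝ) + 1) (k + 2) + q * ballPoly q ((q : ℝ) + 1) (k + 1)) {θ : ℝ}
    (hθ : cheb q θ (k + 1) = 0) (hV : (Fintype.card V : ℝ) ≠ 0) :
    ∃ m : ℕ, (m : ℝ) * (2 * (k + 2) * ((q + 1) ^ 2 - θ ^ 2))
      = Fintype.card V * (q + 1) * (4 * q - θ ^ 2) := by
  have hq1 : (q : ℝ) + 1 ≠ 0 := by positivity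
  have hz : ballPoly q θ (k + 2) + q * ballPoly q θ (k + 1) = 0 := by
    rw [ballPoly_add_mul, hθ, mul_zero]
  have e2 : ∀ p : ℝ[X], aeval (G.adjMatrix ℝ) ((q : ℝ[X]) * p)
      = (q : ℝ) • aeval (G.adjMatrix ℝ) p := fun p => by
    rw [← map_natCast (C : ℝ →+* ℝ[X]), ← smul_eq_C_mul, map_smul]
  obtain ⟨m, hm⟩ := exists_multiplicity_adjMatrix G hreg
    (P := ballPoly q X (k + 2) + (q : ℝ[X]) * ballPoly q X (k + 1))
    (Q := divDiff q θ (k + 2) + (q : ℝ[X]) * divDiff q θ (k + 1)) (κ := q + 1) (θ := θ) (by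
      have h1 := sub_mul_divDiff q θ (k + 2)
      have h2 := sub_mul_divDiff q θ (k + 1)
      have h3 := congrArg (C : ℝ → ℝ[X]) hz
      simp only [C_add, C_mul, map_natCast, C_0] at h3
      linear_combination - h1 - (q : ℝ[X]) * h2 + h3) (by
      rw [map_add, map_mul, map_natCast, aeval_ballPoly, aeval_ballPoly]
      exact even_matrix G hreg hgirth hcard) (by
      rw [hcard]
      simp [eval_ballPoly]) (mul_ne_zero hq1 hV)
  refine ⟨m, ?_⟩
  have t2 := trace_divDiff (G.adjMatrix ℝ) q θ (Fintype.card V) (k + 1)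
    (fun i hi => trace_ballPoly G hreg hgirth i (by omega))
  have t1 := trace_divDiff (G.adjMatrix ℝ) q θ (Fintype.card V) k
    (fun i hi => trace_ballPoly G hreg hgirth i (by omega))
  rw [map_add, e2, Matrix.trace_add, Matrix.trace_smul, smul_eq_mul, mul_add,
    show k + 2 = k + 1 + 1 from rfl, t2] at hm
  have hder : (divDiff q θ (k + 2) + (q : ℝ[X]) * divDiff q θ (k + 1)).eval θ
      = (θ + (q + 1)) * (derivative (cheb q (X : ℝ[X]) (k + 1))).eval θ := by
    have h1 := congrArg (fun p => (derivative p).eval θ) (ballPoly_add_mul q (X : ℝ[X]) k)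
    simp only [derivative_add, derivative_mul, derivative_natCast, eval_add, eval_mul, derivative_X,
      eval_natCast, eval_X, derivative_one, eval_one, eval_zero, eval_cheb, hθ, zero_mul, mul_zero,
      zero_add] at h1
    rw [eval_add, eval_mul, eval_divDiff_self, eval_divDiff_self, eval_natCast]
    exact h1
  rw [show k + 1 + 1 = k + 2 from rfl, hder] at hm
  have d1 := derivative_cheb_eval q k θ
  have hrec : cheb q θ (k + 2) = θ * cheb q θ (k + 1) - q * cheb q θ k := rfl
  rw [hrec] at hm
  rw [hθ] at hm d1 t1
  have hu := cheb_ne_zero hq θ k hθ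
  apply mul_right_cancel₀ hu
  apply mul_left_cancel₀ (Nat.cast_ne_zero (R := ℝ).2 hq.ne')
  linear_combination (θ ^ 2 - 4 * q) * (hm - q * t1) + (m : ℝ) * ((q + 1) ^ 2 - θ ^ 2) * d1

end multiplicity

/-! ### Roots of the polynomials -/

section roots

open Polynomial Real

/-- The identity `U_n (cos α) * sin α = sin ((n + 1) α)`, rescaled by `s = √q`. -/
lemma cheb_mul_sin {q : ℕ} {s : ℝ} (hs : s ^ 2 = q) (α : ℝ) (n : ℕ) :
    cheb q (2 * s * cos α) n * sin α = s ^ n * sin ((n + 1) * α) := by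
  induction n using Nat.twoStepInduction with
  | zero => simp [cheb]
  | one =>
    have : sin ((((1 : ℕ) : ℝ) + 1) * α) = 2 * sin α * cos α := by
      rw [← sin_two_mul]; congr 1; push_cast; ring
    rw [this, cheb]; ring
  | more n h1 h2 =>
    have e1 : sin ((((n + 2 : ℕ) : ℝ) + 1) * α)
        = sin ((((n + 1 : ℕ) : ℝ) + 1) * α) * cos α + cos ((((n + 1 : ℕ) : ℝ) + 1) * α) * sin α := by
      rw [← sin_add]; congr 1; push_cast; ring
    have e2 : sin (((n : ℝ) + 1) * α)
        = sin ((((n + 1 : ℕ) : ℝ) + 1) * α) * cos α - cos ((((n + 1 : ℕ) : ℝ) + 1) * α) * sin α := by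
      rw [← sin_sub]; congr 1; push_cast; ring
    rw [e2] at h1
    rw [cheb, e1]
    linear_combination (2 * s * cos α) * h2 - (q : ℝ) * h1
      + s ^ n * (sin ((((n + 1 : ℕ) : ℝ) + 1) * α) * cos α
        - cos ((((n + 1 : ℕ) : ℝ) + 1) * α) * sin α) * hs

lemma cheb_neg_edge {q : ℕ} {s : ℝ} (hs : s ^ 2 = q) (n : ℕ) :
    cheb q (-(2 * s)) n = (-1) ^ n * ((n + 1) * s ^ n) := by
  induction n using Nat.twoStepInduction with
  | zero => simp [cheb]
  | one => simp only [cheb]; push_cast; ring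
  | more n h1 h2 =>
    rw [cheb, h1, h2, ← hs]
    push_cast
    ring

lemma cheb_coeff_top (R : Type*) [CommRing R] (q n k : ℕ) :
    (cheb q (X : R[X]) n).coeff (n + k) = if k = 0 then 1 else 0 := by
  induction n using Nat.twoStepInduction generalizing k with
  | zero => simp [cheb, coeff_one]
  | one => simp [cheb, coeff_X]
  | more n h1 h2 =>
    have e1 := h2 k
    have e2 := h1 (k + 2)
    rw [cheb, coeff_sub, show n + 2 + k = (n + 1 + k) + 1 by ring, coeff_X_mul, e1,
      ← map_natCast (C : R →+* R[X]), coeff_C_mul, show n + 1 + k + 1 = n + (k + 2) by ring, e2]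
    simp

lemma cheb_coeff_next (R : Type*) [CommRing R] (q n : ℕ) :
    (cheb q (X : R[X]) (n + 1)).coeff n = 0 := by
  induction n with
  | zero => simp [cheb]
  | succ n ih =>
    rw [cheb, coeff_sub, coeff_X_mul, ih, ← map_natCast (C : R →+* R[X]), coeff_C_mul,
      cheb_coeff_top R q n 1]
    simp

lemma ballPoly_coeff_top (R : Type*) [CommRing R] (q n k : ℕ) :
    (ballPoly q (X : R[X]) (n + 1)).coeff (n + 1 + k) = if k = 0 then 1 else 0 := by
  rw [ballPoly_succ, coeff_add, cheb_coeff_top, show n + 1 + k = n + (k + 1) by ring,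
    cheb_coeff_top]
  simp

lemma ballPoly_coeff_next (R : Type*) [CommRing R] (q n : ℕ) :
    (ballPoly q (X : R[X]) (n + 1)).coeff n = 1 := by
  rw [ballPoly_succ, coeff_add, cheb_coeff_next]
  simpa using cheb_coeff_top R q n 0

lemma ballPoly_natDegree_le (R : Type*) [CommRing R] (q n : ℕ) :
    (ballPoly q (X : R[X]) (n + 1)).natDegree ≤ n + 1 := by
  rw [natDegree_le_iff_coeff_eq_zero]
  intro N hN
  obtain ⟨k, rfl⟩ := Nat.exists_eq_add_of_lt hN
  rw [show n + 1 + k + 1 = n + 1 + (k + 1) by ring, ballPoly_coeff_top]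
  simp

lemma ballPoly_monic (R : Type*) [CommRing R] (q n : ℕ) :
    (ballPoly q (X : R[X]) (n + 1)).Monic :=
  monic_of_natDegree_le_of_coeff_eq_one (n + 1) (ballPoly_natDegree_le R q n)
    (by simpa using ballPoly_coeff_top R q n 0)

lemma isIntegral_root {q n : ℕ} {θ : ℝ} (hθ : ballPoly q θ (n + 1) = 0) : IsIntegral ℤ θ := by
  refine ⟨ballPoly q X (n + 1), ballPoly_monic ℤ q n, ?_⟩
  have := map_ballPoly (eval₂RingHom (algebraMap ℤ ℝ) θ) q X (n + 1)
  simp only [coe_eval₂RingHom, eval₂_X] at this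
  rw [this, hθ]

/-- An irrational algebraic integer of degree two has integral trace, so an algebraic integer with
a quadratic equation of non-integral rational trace is rational, hence an integer. -/
lemma int_of_quadratic {x : ℝ} (hx : IsIntegral ℤ x) {r t : ℚ} (h0 : 0 < r) (h1 : r < 1)
    (h : x ^ 2 - r * x + t = 0) : ∃ k : ℤ, x = k := by
  rw [← hx.exists_int_iff_exists_rat]
  have hxQ : IsIntegral ℚ x := hx.tower_top
  set p : ℚ[X] := X ^ 2 - C r * X + C t with hp
  have hdeg : p.natDegree = 2 := by rw [hp]; compute_degree!
  have hmon : p.Monic := by rw [hp]; monicity!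
  have hdvd : minpoly ℚ x ∣ p := by
    apply minpoly.dvd
    simpa [hp] using h
  by_cases hd : (minpoly ℚ x).natDegree = 1
  · obtain ⟨a, ha⟩ := minpoly.natDegree_eq_one_iff.1 hd
    exact ⟨a, by simpa using ha.symm⟩
  · exfalso
    have hpos := minpoly.natDegree_pos hxQ
    have heq := eq_of_monic_of_dvd_of_natDegree_le (minpoly.monic hxQ) hmon hdvd (by omega)
    have hZ := minpoly.isIntegrallyClosed_eq_field_fractions' ℚ hx
    have hc : p.coeff 1 = ((minpoly ℤ x).coeff 1 : ℤ) := by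
      rw [heq, hZ]; simp
    have hc' : p.coeff 1 = -r := by simp [hp, coeff_C]
    rw [hc'] at hc
    have a1 : ((minpoly ℤ x).coeff 1 : ℚ) < 0 := by rw [← hc]; linarith
    have a2 : (-1 : ℚ) < ((minpoly ℤ x).coeff 1 : ℚ) := by rw [← hc]; linarith
    norm_cast at a1 a2
    omega

/-- The roots of `cheb h`, for `0 < i ≤ h`. -/
noncomputable def chebRoot (s : ℝ) (h i : ℕ) : ℝ := 2 * s * cos (π * i / (h + 1))

/-- `ballPoly (j + 1)` alternates in sign along the roots of `cheb (j + 1)` followed by `-2 s`, which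
is `chebRoot s (j + 1) (j + 2)`. -/
lemma ballPoly_sign {q j : ℕ} {s : ℝ} (hs : s ^ 2 = q) (hs1 : 1 < s) {i : ℕ} (hi : 0 < i)
    (hi' : i ≤ j + 2) : (-1) ^ i * ballPoly q (chebRoot s (j + 1) i) (j + 1) < 0 := by
  rw [ballPoly_succ]
  have hs0 : 0 < s := by linarith
  rcases Nat.lt_or_ge i (j + 2) with hlt | hge
  · set α : ℝ := π * i / ((j + 1 : ℕ) + 1) with hα
    have hiR : (0 : ℝ) < i := by exact_mod_cast hi
    have hlt' : (i : ℝ) < j + 2 := by exact_mod_cast hlt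
    have hα0 : 0 < α := by positivity
    have hαπ : α < π := by
      rw [hα, div_lt_iff₀ (by positivity)]
      push_cast
      nlinarith [pi_pos]
    have hsin := sin_pos_of_pos_of_lt_pi hα0 hαπ
    have hmul : ((j : ℝ) + 2) * α = i * π := by
      rw [hα]; push_cast; field_simp; ring
    have h1 := cheb_mul_sin hs α (j + 1)
    have h2 := cheb_mul_sin hs α j
    rw [show (((j + 1 : ℕ) : ℝ) + 1) * α = i * π by rw [← hmul]; push_cast; ring,
      sin_nat_mul_pi, mul_zero, mul_eq_zero] at h1
    rw [show ((j : ℝ) + 1) * α = i * π - α by rw [← hmul]; ring, sin_nat_mul_pi_sub] at h2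
    have h2' : cheb q (2 * s * cos α) j = - (s ^ j * (-1) ^ i) := by
      apply mul_right_cancel₀ hsin.ne'
      rw [h2]; ring
    change (-1) ^ i * (cheb q (2 * s * cos α) (j + 1) + cheb q (2 * s * cos α) j) < 0
    rw [h1.resolve_right hsin.ne', h2']
    have : ((-1 : ℝ) ^ i) * (-1) ^ i = 1 := by rw [← mul_pow]; simp
    have e : (-1 : ℝ) ^ i * (0 + -(s ^ j * (-1) ^ i)) = - s ^ j := by
      linear_combination (- s ^ j) * this
    rw [e]
    have := pow_pos hs0 j
    linarith
  · obtain rfl : i = j + 2 := le_antisymm hi' hge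
    have : chebRoot s (j + 1) (j + 2) = -(2 * s) := by
      rw [chebRoot, show π * ((j + 2 : ℕ) : ℝ) / (((j + 1 : ℕ) : ℝ) + 1) = π by
        push_cast; field_simp; ring, cos_pi]
      ring
    rw [this, cheb_neg_edge hs, cheb_neg_edge hs]
    have hsq : ((-1 : ℝ) ^ j) * (-1) ^ j = 1 := by rw [← mul_pow]; simp
    have e : (-1 : ℝ) ^ (j + 2) * ((-1) ^ (j + 1) * (((j + 1 : ℕ) + 1) * s ^ (j + 1))
        + (-1) ^ j * ((j + 1) * s ^ j)) = -(s ^ j * ((j + 2) * s - (j + 1))) := by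
      push_cast
      linear_combination (-(s ^ j * ((j + 2) * s - (j + 1)))) * hsq
    rw [e]
    have h1 := pow_pos hs0 j
    have h2 : 0 < ((j : ℝ) + 2) * s - (j + 1) := by nlinarith [(Nat.cast_nonneg j : (0 : ℝ) ≤ j)]
    have := mul_pos h1 h2
    linarith

lemma chebRoot_lt {s : ℝ} (hs : 0 < s) {h i k : ℕ} (hik : i < k) (hk : k ≤ h + 1) :
    chebRoot s h k < chebRoot s h i := by
  have hk' : (k : ℝ) ≤ h + 1 := by exact_mod_cast hk
  have hik' : (i : ℝ) < k := by exact_mod_cast hik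
  unfold chebRoot
  apply mul_lt_mul_of_pos_left _ (by positivity)
  apply cos_lt_cos_of_nonneg_of_le_pi (by positivity)
  · rw [div_le_iff₀ (by positivity)]
    exact mul_le_mul_of_nonneg_left hk' pi_pos.le
  · apply div_lt_div_of_pos_right _ (by positivity)
    exact mul_lt_mul_of_pos_left hik' pi_pos

lemma continuous_ballPoly (q n : ℕ) : Continuous fun t : ℝ => ballPoly q t n := by
  simp only [← eval_ballPoly]
  exact (ballPoly q (X : ℝ[X]) n).continuous

/-- Interlacing: `ballPoly h` has a root between consecutive roots of `cheb h`, and one between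
the smallest of them and `-2 s`. -/
lemma exists_root {q j : ℕ} {s : ℝ} (hs : s ^ 2 = q) (hs1 : 1 < s) {i : ℕ} (hi : 0 < i)
    (hi' : i ≤ j + 1) : ∃ θ : ℝ, chebRoot s (j + 1) (i + 1) < θ ∧ θ < chebRoot s (j + 1) i ∧
      ballPoly q θ (j + 1) = 0 := by
  have h1 := ballPoly_sign hs hs1 hi (show i ≤ j + 2 by omega)
  have h2 := ballPoly_sign (j := j) hs hs1 (Nat.succ_pos i) (show i + 1 ≤ j + 2 by omega)
  have hlt := chebRoot_lt (s := s) (by linarith) (Nat.lt_succ_self i)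
    (show i + 1 ≤ j + 1 + 1 by omega)
  have hc : ContinuousOn (fun t : ℝ => (-1) ^ i * ballPoly q t (j + 1))
      (Set.Icc (chebRoot s (j + 1) (i + 1)) (chebRoot s (j + 1) i)) :=
    (continuous_const.mul (continuous_ballPoly q (j + 1))).continuousOn
  rw [pow_succ] at h2
  obtain ⟨θ, hθ, h0⟩ := intermediate_value_Ioo' hlt.le hc
    (show (0 : ℝ) ∈ _ from ⟨h1, by linarith⟩)
  refine ⟨θ, hθ.1, hθ.2, ?_⟩
  simpa using h0

/-- Since `ballPoly h` has root sum `-1`, and its roots lie below those of `cheb h`, which are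
symmetric about `0`, its roots cannot all be integers when `h = j + 1 ≥ 3`. -/
lemma not_all_int {q j : ℕ} (hq : 2 ≤ q) (hj : 2 ≤ j)
    (hint : ∀ θ : ℝ, θ ^ 2 < 4 * q → ballPoly q θ (j + 1) = 0 → ∃ k : ℤ, θ = k) : False := by
  set s := √(q : ℝ) with hsdef
  have hs : s ^ 2 = q := Real.sq_sqrt (Nat.cast_nonneg q)
  have hq' : (2 : ℝ) ≤ q := by exact_mod_cast hq
  have hs0 : 0 ≤ s := Real.sqrt_nonneg _
  have hs1 : 1 < s := by nlinarith
  have hroot : ∀ i : Fin (j + 1), ∃ θ : ℝ, chebRoot s (j + 1) (i + 2) < θ ∧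
      θ < chebRoot s (j + 1) (i + 1) ∧ ballPoly q θ (j + 1) = 0 :=
    fun i => exists_root hs hs1 (Nat.succ_pos i) (by omega)
  choose θ hlo hhi hz using hroot
  have hbound : ∀ k, |chebRoot s (j + 1) k| ≤ 2 * s := by
    intro k
    rw [chebRoot, abs_mul, abs_of_nonneg (by positivity : 0 ≤ 2 * s)]
    exact mul_le_of_le_one_right (by positivity) (abs_cos_le_one _)
  have hθint : ∀ i, ∃ k : ℤ, θ i = k := by
    intro i
    refine hint _ ?_ (hz i)
    have h1 := abs_le.1 (hbound (i + 2))
    have h2 := abs_le.1 (hbound (i + 1))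
    rw [← hs]
    nlinarith [hlo i, hhi i]
  choose k hk using hθint
  have hanti : StrictAnti θ := by
    intro a b hab
    have hab' : (a : ℕ) < b := hab
    rcases Nat.lt_or_ge (a + 2) (b + 1) with h | h
    · exact ((hhi b).trans (chebRoot_lt (by linarith) h (by omega))).trans (hlo a)
    · have : (b : ℕ) + 1 = a + 2 := by omega
      have h3 := hhi b
      rw [this] at h3
      exact h3.trans (hlo a)
  have hprod : ∏ i, (X - C (θ i)) = ballPoly q (X : ℝ[X]) (j + 1) := by
    refine (eq_of_monic_of_dvd_of_natDegree_le (monic_prod_X_sub_C _ _)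
      (ballPoly_monic ℝ q j) ?_ ?_).symm
    · apply Finset.prod_dvd_of_coprime
      · intro a _ b _ hab
        exact pairwise_coprime_X_sub_C hanti.injective hab
      · intro i _
        rw [dvd_iff_isRoot, IsRoot, eval_ballPoly, hz i]
    · rw [natDegree_finsetProd_X_sub_C_eq_card]
      simpa using ballPoly_natDegree_le ℝ q j
  have hsum : ∑ i, θ i = -1 := by
    have h1 := prod_X_sub_C_coeff_card_pred (Finset.univ : Finset (Fin (j + 1))) θ (by simp)
    rw [hprod] at h1
    simp only [Finset.card_univ, Fintype.card_fin, Nat.add_sub_cancel, ballPoly_coeff_next] at h1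
    linarith
  have hpair : ∀ i, k i + k i.rev ≤ -1 := by
    intro i
    have h1 := hhi i
    have h2 := hhi i.rev
    have h3 : chebRoot s (j + 1) (i.rev + 1) = - chebRoot s (j + 1) (i + 1) := by
      have hi : (i : ℕ) ≤ j := by omega
      rw [chebRoot, chebRoot, Fin.val_rev, show j + 1 - (i + 1) + 1 = j + 1 - i by omega,
        Nat.cast_sub (by omega), ← mul_neg, ← cos_pi_sub]
      congr 2
      push_cast
      field_simp
      ring
    have h4 : (k i : ℝ) + k i.rev < 0 := by
      rw [← hk, ← hk]; linarith
    have : k i + k i.rev < 0 := by exact_mod_cast h4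
    omega
  have hsumk : ∑ i, k i = -1 := by
    have : ((∑ i, k i : ℤ) : ℝ) = -1 := by
      rw [← hsum]; push_cast; exact Finset.sum_congr rfl (fun i _ => (hk i).symm)
    exact_mod_cast this
  have hrev : ∑ i : Fin (j + 1), k i.rev = ∑ i, k i := Equiv.sum_comp Fin.revPerm k
  have h5 : ∑ i, (k i + k i.rev) ≤ ∑ _i : Fin (j + 1), (-1 : ℤ) :=
    Finset.sum_le_sum (fun i _ => hpair i)
  rw [Finset.sum_add_distrib, hrev, hsumk] at h5
  simp at h5
  omega

end roots

/-! ### The two parities of the girth -/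

section final

open Real

variable {V : Type} [Fintype V] [DecidableEq V] (G : SimpleGraph V) [DecidableRel G.Adj]

/-- A Moore graph of odd girth `2 h + 1`, with `h = j + 2 ≥ 3`, does not exist. -/
lemma odd_case {q j : ℕ} (hq : 2 ≤ q) (hj : 1 ≤ j) (hreg : G.IsRegularOfDegree (q + 1))
    (hgirth : ((2 * (j + 2) + 1 : ℕ) : ℕ∞) ≤ G.egirth)
    (hcard : (Fintype.card V : ℝ) = ballPoly q ((q : ℝ) + 1) (j + 2)) : False := by
  have hq' : (2 : ℝ) ≤ q := by exact_mod_cast hq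
  have hj' : (1 : ℝ) ≤ j := by exact_mod_cast hj
  have hN : (0 : ℝ) < Fintype.card V := by
    rw [hcard, ballPoly_degree]; positivity
  refine not_all_int (j := j + 1) hq (by omega) fun θ hθ hz => ?_
  obtain ⟨m, hm⟩ := odd_multiplicity G (by omega) hreg hgirth hcard hz hN.ne'
  set N : ℝ := ((Fintype.card V : ℕ) : ℝ) with hNdef
  set E : ℝ := (2 * j + 5) * (q - 1) + q + 1 with hE
  have hEθ : 4 * q - θ ^ 2 < E - θ := by
    have : 4 ≤ (2 * (j : ℝ) + 2) * (q - 1) := by nlinarith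
    nlinarith [sq_nonneg (θ - 1)]
  have hpos : 0 < 4 * q - θ ^ 2 := by linarith
  have hmain : (N * (q + 1) - m * (2 * j + 5)) * (4 * q - θ ^ 2) = m * (q - 1) * (E - θ) := by
    rw [hE]; linear_combination - hm
  have hm0 : (0 : ℝ) < m := by
    rcases Nat.eq_zero_or_pos m with rfl | h
    · exfalso
      have : 0 < N * (q + 1) * (4 * q - θ ^ 2) := by positivity
      rw [← hm] at this
      simp at this
    · exact_mod_cast h
  have hq1 : (0 : ℝ) < q - 1 := by linarith
  have hEpos : 0 < E - θ := by linarith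
  have hD : 0 < N * (q + 1) - m * (2 * j + 5) := by
    refine pos_of_mul_pos_left ?_ hpos.le
    rw [hmain]; positivity
  -- `r = (4 q - θ²) / (E - θ)` lies strictly between `0` and `1`; it is rational because `m` is.
  set r : ℚ := (m * (q - 1)) / (Fintype.card V * (q + 1) - m * (2 * j + 5)) with hr
  have hrR : (r : ℝ) = (m * (q - 1)) / (N * (q + 1) - m * (2 * j + 5)) := by
    rw [hr]; push_cast; rfl
  have hrθ : (r : ℝ) * (E - θ) = 4 * q - θ ^ 2 := by
    rw [hrR, div_mul_eq_mul_div, div_eq_iff hD.ne']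
    linarith
  have hr0 : (0 : ℝ) < r := by rw [hrR]; positivity
  have hr1 : (r : ℝ) < 1 := by
    by_contra hcon
    push Not at hcon
    nlinarith
  refine int_of_quadratic (isIntegral_root hz) (r := r)
    (t := ((2 * j + 5) * (q - 1) + q + 1) * r - 4 * q) (by exact_mod_cast hr0)
    (by exact_mod_cast hr1) ?_
  push_cast
  rw [hE] at hrθ
  linear_combination hrθ

/-- A Moore graph of even girth `2 h`, with `h = k + 2 ≥ 3`, has `h` equal to `3`, `4` or `6`. -/
lemma even_case {q k : ℕ} (hq : 2 ≤ q) (hk : 1 ≤ k) (hreg : G.IsRegularOfDegree (q + 1))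
    (hgirth : ((2 * (k + 2) : ℕ) : ℕ∞) ≤ G.egirth)
    (hcard : ((q : ℝ) + 1) * (Fintype.card V : ℝ)
      = ballPoly q ((q : ℝ) + 1) (k + 2) + q * ballPoly q ((q : ℝ) + 1) (k + 1)) :
    k = 1 ∨ k = 2 ∨ k = 4 := by
  have hq' : (2 : ℝ) ≤ q := by exact_mod_cast hq
  have hk' : (1 : ℝ) ≤ k := by exact_mod_cast hk
  have hN : (0 : ℝ) < Fintype.card V := by
    have : 0 < ((q : ℝ) + 1) * (Fintype.card V : ℝ) := by
      rw [hcard, ballPoly_degree, ballPoly_degree]; positivity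
    exact pos_of_mul_pos_right this (by positivity)
  set s := √(q : ℝ)
  have hs : s ^ 2 = q := Real.sq_sqrt (Nat.cast_nonneg q)
  set α : ℝ := π / (k + 2) with hα
  have hmul : ((k : ℝ) + 2) * α = π := by rw [hα]; field_simp
  have hα0 : 0 < α := by positivity
  have hαπ : α < π := by nlinarith
  have hz : cheb q (2 * s * cos α) (k + 1) = 0 := by
    have h1 := cheb_mul_sin hs α (k + 1)
    rw [show (((k + 1 : ℕ) : ℝ) + 1) * α = π by rw [← hmul]; push_cast; ring, sin_pi, mul_zero,
      mul_eq_zero] at h1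
    exact h1.resolve_right (sin_pos_of_pos_of_lt_pi hα0 hαπ).ne'
  obtain ⟨m, hm⟩ := even_multiplicity G (by omega) hreg hgirth hcard hz hN.ne'
  set N : ℝ := ((Fintype.card V : ℕ) : ℝ) with hNdef
  have hsq : (2 * s * cos α) ^ 2 = 2 * q * (1 + cos (2 * α)) := by
    rw [cos_two_mul, ← hs]; ring
  rw [hsq] at hm
  have hD : 2 * m * (k + 2) - N * (q + 1) ≠ 0 := by
    intro h0
    have h1 : N * (q + 1) * ((q : ℝ) - 1) ^ 2 = 0 := by
      linear_combination hm - ((q + 1 : ℝ) ^ 2 - 2 * q * (1 + cos (2 * α))) * h0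
    have h2 : 0 < (q : ℝ) - 1 := by linarith
    have : 0 < N * (q + 1) * ((q : ℝ) - 1) ^ 2 := by positivity
    linarith
  -- The multiplicity formula is injective in `θ ^ 2`, so `cos (2 α)` is rational.
  have hcos : ∃ c : ℚ, cos (((2 / (k + 2) : ℚ) : ℝ) * π) = c := by
    refine ⟨(2 * m * (k + 2) * (q + 1) ^ 2 - Fintype.card V * (q + 1) * (4 * q))
      / ((2 * m * (k + 2) - Fintype.card V * (q + 1)) * (2 * q)) - 1, ?_⟩
    have : ((2 / (k + 2) : ℚ) : ℝ) * π = 2 * α := by rw [hα]; push_cast; ring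
    rw [this]
    push_cast
    rw [← hNdef, eq_sub_iff_add_eq, eq_div_iff (mul_ne_zero hD (by positivity))]
    linear_combination - hm
  have hkQ : (1 : ℚ) ≤ k := by exact_mod_cast hk
  have hniv := niven_angle_div_pi_eq hcos ⟨by positivity, by
    rw [div_le_one (by positivity)]; linarith⟩
  have hne : (k : ℚ) + 2 ≠ 0 := by positivity
  simp only [Set.mem_insert_iff, Set.mem_singleton_iff] at hniv
  rcases hniv with h | h | h | h | h <;> field_simp at h
  · norm_num at h
  · right; right
    have : (k : ℚ) = 4 := by linarith
    exact_mod_cast this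
  · right; left
    have : (k : ℚ) = 2 := by linarith
    exact_mod_cast this
  · left
    have : (k : ℚ) = 1 := by linarith
    exact_mod_cast this
  · exfalso
    linarith

end final

end MooreGirth

/-- **Bannai–Ito / Damerell / Feit–Higman / Singleton.** For `d ≥ 3` and `g ≥ 5`, if there is a
`d`-regular graph on exactly `n₀(d, g)` vertices with girth at least `g`,
then `g ∈ {5, 6, 8, 12}`. -/
theorem moore_graphs_girth {V : Type} [Fintype V] (G : SimpleGraph V) [DecidableRel G.Adj]
    (d g : ℕ) (hd : 3 ≤ d) (hg : 5 ≤ g)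
    (hreg : G.IsRegularOfDegree d)
    (hcard : (Fintype.card V : ℝ) = mooreBound d g)
    (hgirth : (g : ℕ∞) ≤ G.egirth) :
    g = 5 ∨ g = 6 ∨ g = 8 ∨ g = 12 := by
  classical
  obtain ⟨q, rfl⟩ : ∃ q, d = q + 1 := ⟨d - 1, by omega⟩
  have hd1 : ((q + 1 : ℕ) : ℝ) - 1 = q := by push_cast; ring
  rcases Nat.even_or_odd g with he | ho
  · obtain ⟨k, rfl⟩ : ∃ k, g = 2 * (k + 2) := by
      obtain ⟨h, rfl⟩ := he
      exact ⟨h - 2, by omega⟩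
    rw [mooreBound, if_neg (Nat.not_odd_iff_even.2 he), hd1,
      Nat.mul_div_cancel_left _ (by norm_num)] at hcard
    have := MooreGirth.even_case G (q := q) (k := k) (by omega) (by omega) hreg hgirth (by
      rw [hcard, MooreGirth.ballPoly_degree, MooreGirth.ballPoly_degree]
      have e : (q : ℝ) * ∑ i ∈ Finset.range (k + 1), (q : ℝ) ^ i
          = ∑ i ∈ Finset.range (k + 2), (q : ℝ) ^ i - 1 := by
        rw [Finset.sum_range_succ' _ (k + 1), Finset.mul_sum]
        simp [pow_succ, mul_comm]
      linear_combination (-((q : ℝ) + 1)) * e)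
    omega
  · by_cases h5 : g = 5
    · exact Or.inl h5
    exfalso
    obtain ⟨j, rfl⟩ : ∃ j, g = 2 * (j + 2) + 1 := by
      obtain ⟨h, rfl⟩ := ho
      exact ⟨h - 2, by omega⟩
    rw [mooreBound, if_pos ho, hd1, show (2 * (j + 2) + 1) / 2 = j + 2 by omega] at hcard
    refine MooreGirth.odd_case G (q := q) (j := j) (by omega) (by omega) hreg hgirth ?_
    rw [hcard, MooreGirth.ballPoly_degree]
    push_cast
    ring
end

section
/- Let g ≥ 4 be an even integer and d ≥ 2 an integer. Then every (d,g)-Moore graph is bipartite; that is, every finite simple graph G with minimum degree at least d, girth at least g, and exactly n₀(d,g) vertices is bipartite. -/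
namespace MooreBipartite

open SimpleGraph Finset

variable {V : Type} {G : SimpleGraph V}

/-- A closed walk shorter than the girth spans a forest: a cycle among its edges would be no longer
than the walk itself. -/
lemma isAcyclic_of_closed_walk {w : V} (c : G.Walk w w) (hc : (c.length : ℕ∞) < G.egirth) :
    (fromEdgeSet {e | e ∈ c.edges}).IsAcyclic := by
  intro a q hq
  have hle : fromEdgeSet {e | e ∈ c.edges} ≤ G := by
    intro x y hxy
    rw [fromEdgeSet_adj] at hxy
    exact c.adj_of_mem_edges hxy.1
  have h1 := egirth_le_length (hq.mapLe hle)
  have hsub : q.edges ⊆ c.edges := by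
    intro e he
    have := q.edges_subset_edgeSet he
    rw [edgeSet_fromEdgeSet] at this
    exact this.1
  have h2 := (List.subperm_of_subset hq.edges_nodup hsub).length_le
  simp only [Walk.length_edges] at h2
  have h3 : ((q.mapLe hle).length : ℕ∞) ≤ c.length := by
    simpa using h2
  exact absurd (h1.trans h3) (not_le.mpr hc)

lemma mem_edgeSet_fromEdgeSet {w a b : V} (c : G.Walk w w) (p : G.Walk a b)
    (h : p.edges ⊆ c.edges) : ∀ e ∈ p.edges, e ∈ (fromEdgeSet {e | e ∈ c.edges}).edgeSet := by
  intro e he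
  rw [edgeSet_fromEdgeSet]
  exact ⟨h he, G.not_isDiag_of_mem_edgeSet (p.edges_subset_edgeSet he)⟩

/-- There is no odd closed walk shorter than the girth. -/
lemma even_length_of_closed_walk {w : V} (c : G.Walk w w) (hc : (c.length : ℕ∞) < G.egirth) :
    Even c.length := by
  have := two_colorable_iff_forall_loop_even.mp (isAcyclic_of_closed_walk c hc).colorable_two w
    (c.transfer _ (mem_edgeSet_fromEdgeSet c c (List.Subset.refl _)))
  simpa using this

lemma not_adj_of_dist_eq {w x y : V} {k g : ℕ} (hg : (g : ℕ∞) ≤ G.egirth) (hk : 2 * k + 1 < g)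
    (hr : G.Reachable w x) (hx : G.dist w x = k) (hy : G.dist w y = k) : ¬ G.Adj x y := by
  intro h
  obtain ⟨p, hp⟩ := hr.exists_walk_length_eq_dist
  obtain ⟨q, hq⟩ := (hr.trans h.reachable).exists_walk_length_eq_dist
  have hl : ((p.concat h).append q.reverse).length = 2 * k + 1 := by
    simp; omega
  have := even_length_of_closed_walk ((p.concat h).append q.reverse)
    (lt_of_lt_of_le (by rw [hl]; exact_mod_cast hk) hg)
  rw [hl] at this
  grind

lemma parent_unique {w x x' y : V} {k g : ℕ} (hg : (g : ℕ∞) ≤ G.egirth) (hk : 2 * k + 2 < g)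
    (hr : G.Reachable w y) (hy : G.dist w y = k + 1)
    (hx : G.dist w x = k) (hx' : G.dist w x' = k) (h : G.Adj x y) (h' : G.Adj x' y) : x = x' := by
  obtain ⟨p, hp⟩ := (hr.trans h.symm.reachable).exists_walk_length_eq_dist
  obtain ⟨p', hp'⟩ := (hr.trans h'.symm.reachable).exists_walk_length_eq_dist
  have hP := (p.concat h).isPath_of_length_eq_dist (by simp; omega)
  have hP' := (p'.concat h').isPath_of_length_eq_dist (by simp; omega)
  set c := (p.concat h).append (p'.concat h').reverse with hc
  have hl : c.length = 2 * k + 2 := by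
    simp [hc]; omega
  have hac := isAcyclic_of_closed_walk c (lt_of_lt_of_le (by rw [hl]; exact_mod_cast hk) hg)
  have s1 : (p.concat h).edges ⊆ c.edges := by
    intro e he
    rw [hc, Walk.edges_append]
    exact List.mem_append_left _ he
  have s2 : (p'.concat h').edges ⊆ c.edges := by
    intro e he
    rw [hc, Walk.edges_append, Walk.edges_reverse]
    exact List.mem_append_right _ (List.mem_reverse.mpr he)
  have heq := (hac.subsingleton_path w y).elim
    ⟨_, hP.transfer (mem_edgeSet_fromEdgeSet c _ s1)⟩
    ⟨_, hP'.transfer (mem_edgeSet_fromEdgeSet c _ s2)⟩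
  have heq2 := congrArg (fun q => q.1.support) heq
  simp only [Walk.support_transfer] at heq2
  obtain ⟨e, -⟩ := Walk.concat_inj (Walk.ext_support heq2)
  exact e

open Classical in
/-- The vertices at distance `k` from `u` and `k + 1` from `v`. Reachability is required since
`SimpleGraph.dist` is `0` between different components. -/
noncomputable def side [Fintype V] (G : SimpleGraph V) (u v : V) (k : ℕ) : Finset V :=
  {x | G.Reachable u x ∧ G.dist u x = k ∧ G.dist v x = k + 1}

lemma mem_side [Fintype V] {u v x : V} {k : ℕ} :
    x ∈ side G u v k ↔ G.Reachable u x ∧ G.dist u x = k ∧ G.dist v x = k + 1 := by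
  simp [side]

/-- Neighbours of `x ∈ side G u v k` other than its unique neighbour at distance `k` from `v` lie
in the next level. -/
lemma mem_side_succ [Fintype V] {u v x y : V} {k g : ℕ} (hg : (g : ℕ∞) ≤ G.egirth)
    (huv : G.Adj u v) (hk : 2 * k + 3 < g) (hx : x ∈ side G u v k) (hxy : G.Adj x y)
    (hy : G.dist v y ≠ k) : y ∈ side G u v (k + 1) := by
  rw [mem_side] at hx ⊢
  obtain ⟨hr, hu, hv⟩ := hx
  have hrv : G.Reachable v x := huv.symm.reachable.trans hr
  have hry := hr.trans hxy.reachable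
  have h1 : G.dist v y ≠ k + 1 := fun h =>
    not_adj_of_dist_eq hg (by omega) hrv hv h hxy
  have a1 := hxy.reachable.dist_triangle_right v
  have a2 := hxy.symm.reachable.dist_triangle_right v
  have a3 := hxy.reachable.dist_triangle_right u
  have a4 := huv.symm.reachable.dist_triangle_left y
  rw [dist_eq_one_iff_adj.mpr hxy] at a1 a3
  rw [dist_eq_one_iff_adj.mpr hxy.symm] at a2
  rw [dist_eq_one_iff_adj.mpr huv.symm] at a4
  refine ⟨hry, ?_, ?_⟩ <;> omega

lemma card_side_succ [Fintype V] [DecidableRel G.Adj] {u v : V} {d k g : ℕ}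
    (hmin : d ≤ G.minDegree) (hg : (g : ℕ∞) ≤ G.egirth)
    (huv : G.Adj u v) (hk : 2 * k + 3 < g) :
    #(side G u v k) * (d - 1) ≤ #(side G u v (k + 1)) := by
  classical
  have := card_mul_le_card_mul (s := side G u v k) (t := side G u v (k + 1)) (m := d - 1) (n := 1)
    G.Adj ?_ ?_
  · simpa using this
  · intro x hx
    have hx' := mem_side.mp hx
    have hpar : #{y ∈ G.neighborFinset x | G.dist v y = k} ≤ 1 := by
      rw [card_le_one]
      intro a ha b hb
      simp only [mem_filter, mem_neighborFinset] at ha hb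
      exact parent_unique hg (by omega) (huv.symm.reachable.trans hx'.1) hx'.2.2 ha.2 hb.2
        ha.1.symm hb.1.symm
    have hsub : {y ∈ G.neighborFinset x | ¬ G.dist v y = k} ⊆
        (side G u v (k + 1)).bipartiteAbove G.Adj x := by
      intro y hy
      simp only [mem_filter, mem_neighborFinset] at hy
      rw [mem_bipartiteAbove]
      exact ⟨mem_side_succ hg huv hk hx hy.1 hy.2, hy.1⟩
    have hle := card_le_card hsub
    have hsum := card_filter_add_card_filter_not (s := G.neighborFinset x) (fun y => G.dist v y = k)
    rw [card_neighborFinset_eq_degree] at hsum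
    have := G.minDegree_le_degree x
    omega
  · intro y hy
    rw [mem_side] at hy
    rw [card_le_one]
    intro a ha b hb
    rw [mem_bipartiteBelow, mem_side] at ha hb
    exact parent_unique hg (by omega) hy.1 hy.2.1 ha.1.2.1 hb.1.2.1 ha.2 hb.2

lemma pow_le_card_side [Fintype V] [DecidableRel G.Adj] {u v : V} {d g : ℕ}
    (hmin : d ≤ G.minDegree) (hg : (g : ℕ∞) ≤ G.egirth) (huv : G.Adj u v) (k : ℕ)
    (hk : 2 * k + 1 < g) : (d - 1) ^ k ≤ #(side G u v k) := by
  induction k with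
  | zero =>
    have : u ∈ side G u v 0 := by
      rw [mem_side]
      exact ⟨Reachable.refl _, by simp, by simpa using huv.symm⟩
    simpa using card_pos.mpr ⟨u, this⟩
  | succ k ih =>
    rw [pow_succ]
    exact (Nat.mul_le_mul_right _ (ih (by omega))).trans
      (card_side_succ hmin hg huv (by omega))

open Classical in
lemma sum_le_card_biUnion [Fintype V] [DecidableRel G.Adj] {u v : V} {d g h : ℕ}
    (hmin : d ≤ G.minDegree) (hg : (g : ℕ∞) ≤ G.egirth) (huv : G.Adj u v) (hh : g = 2 * h) :
    ∑ i ∈ range h, (d - 1) ^ i ≤ #((range h).biUnion (side G u v)) := by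
  rw [card_biUnion]
  · refine sum_le_sum fun i hi => pow_le_card_side hmin hg huv i ?_
    rw [mem_range] at hi
    omega
  · intro i _ j _ hij
    rw [Function.onFun, Finset.disjoint_left]
    intro x hx hx'
    rw [mem_side] at hx hx'
    omega

/-- If the vertex count attains the Moore bound, the two trees grown from the ends of an edge cover
all vertices. -/
lemma exists_mem_side [Fintype V] [DecidableRel G.Adj] {u v : V} {d g h : ℕ}
    (hmin : d ≤ G.minDegree) (hg : (g : ℕ∞) ≤ G.egirth) (huv : G.Adj u v) (hh : g = 2 * h)
    (hcard : Fintype.card V = 2 * ∑ i ∈ range h, (d - 1) ^ i) (x : V) :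
    ∃ k < h, x ∈ side G u v k ∨ x ∈ side G v u k := by
  classical
  have h1 := sum_le_card_biUnion hmin hg huv hh
  have h2 := sum_le_card_biUnion hmin hg huv.symm hh
  have hdisj : Disjoint ((range h).biUnion (side G u v)) ((range h).biUnion (side G v u)) := by
    rw [Finset.disjoint_left]
    intro x hx hx'
    simp only [mem_biUnion, mem_side] at hx hx'
    obtain ⟨i, -, hi⟩ := hx
    obtain ⟨j, -, hj⟩ := hx'
    omega
  have hun := card_union_of_disjoint hdisj
  have huniv : (range h).biUnion (side G u v) ∪ (range h).biUnion (side G v u) = univ := by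
    rw [← card_eq_iff_eq_univ]
    exact le_antisymm (card_le_univ _) (by omega)
  have hx := mem_univ x
  rw [← huniv] at hx
  simp only [mem_union, mem_biUnion, mem_range] at hx
  grind

end MooreBipartite

open MooreBipartite in
/-- For even `g ≥ 4` and `d ≥ 2`, every `(d, g)`-Moore graph (a graph with minimum degree at
least `d`, girth at least `g`, and exactly `n₀(d, g)` vertices) is bipartite, i.e.,
properly `2`-colourable. -/
theorem moore_graph_bipartite {V : Type} [Fintype V] (G : SimpleGraph V) [DecidableRel G.Adj]
    (d g : ℕ) (hd : 2 ≤ d) (hg : 4 ≤ g) (hge : Even g)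
    (hmin : d ≤ G.minDegree)
    (hgirth : (g : ℕ∞) ≤ G.egirth)
    (hcard : (Fintype.card V : ℝ) = mooreBound d g) :
    G.Colorable 2 := by
  rcases isEmpty_or_nonempty V with hV | ⟨⟨u⟩⟩
  · exact SimpleGraph.Colorable.of_isEmpty 2
  have hdeg : 0 < G.degree u := by
    have := G.minDegree_le_degree u
    omega
  obtain ⟨v, huv⟩ := (G.degree_pos_iff_exists_adj u).mp hdeg
  obtain ⟨h, hh⟩ := hge.two_dvd
  have hc : Fintype.card V = 2 * ∑ i ∈ Finset.range h, (d - 1) ^ i := by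
    have h2 : g / 2 = h := by omega
    rw [mooreBound, if_neg (Nat.not_odd_iff_even.mpr hge), h2] at hcard
    have h1 : ((d - 1 : ℕ) : ℝ) = (d : ℝ) - 1 := by
      rw [Nat.cast_sub (by omega), Nat.cast_one]
    rw [← h1] at hcard
    exact_mod_cast hcard
  refine (SimpleGraph.Coloring.mk (fun x => decide (Even (G.dist u x))) ?_ :
    G.Coloring Bool).colorable
  intro x y hxy hcol
  obtain ⟨i, hi, hx⟩ := exists_mem_side hmin hgirth huv hh hc x
  obtain ⟨j, hj, hy⟩ := exists_mem_side hmin hgirth huv hh hc y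
  rw [mem_side, mem_side] at hx hy
  have hrx : G.Reachable u x := hx.elim (·.1) (huv.reachable.trans ·.1)
  have a1 := hxy.reachable.dist_triangle_right u
  have a2 := hxy.symm.reachable.dist_triangle_right u
  rw [SimpleGraph.dist_eq_one_iff_adj.mpr hxy] at a1
  rw [SimpleGraph.dist_eq_one_iff_adj.mpr hxy.symm] at a2
  -- Distances of adjacent vertices differ by at most one, so equal parity forces equality.
  have heq : G.dist u x = G.dist u y := by
    rw [decide_eq_decide, Nat.even_iff, Nat.even_iff] at hcol
    omega
  by_cases hlt : G.dist u x < h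
  · exact not_adj_of_dist_eq hgirth (by omega) hrx rfl heq.symm hxy
  · have hvx : G.dist v x = h - 1 := by omega
    have hvy : G.dist v y = h - 1 := by omega
    exact not_adj_of_dist_eq hgirth (by omega) (huv.symm.reachable.trans hrx) hvx hvy hxy
end

section
/- For every integer d ≥ 2, there exists a finite projective plane of order d if and only if there exists a finite simple graph on 2(d²+d+1) vertices that is (d+1)-regular and has girth at least 6. -/
/-!
The correspondence is given by incidence graphs.

From a projective plane of order `d`, take the incidence graph on points and lines. It has
`2 (d² + d + 1)` vertices, is `(d + 1)`-regular, is bipartite (no odd cycles), and has no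
`4`-cycle because two distinct points lie on at most one common line.

Conversely, let `G` be a `(d + 1)`-regular graph of girth at least `6` on `2 (d² + d + 1)` vertices.
For a vertex `u` let `E u` be the set of vertices which are `u` or share a neighbour with `u`
(the relation `EvenNear`). As `G` has no `4`-cycle, `|E u| = 1 + (d + 1) d`, exactly half
of the vertices (`card_evenNear`). If `u ~ v`, then `E u` and `E v` are disjoint, as `G` has no
cycles of length `3` or `5`; by the count they are complementary (`evenNear_compl`). Hence `E`
is constant on `E u`, `G` is bipartite with parts `E u` and its complement, and any two vertices in
the same part have a common neighbour, unique by the absence of `4`-cycles. These are the axioms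
of a projective plane with points `E u`, lines the complement and adjacency as incidence.
-/

namespace MoorePlane

open Configuration

/-! ### Short cycles and girth -/

section girth

variable {V : Type} {G : SimpleGraph V}

lemma no_three (hg : (6 : ℕ∞) ≤ G.egirth) {a b c : V} (h1 : G.Adj a b) (h2 : G.Adj b c)
    (h3 : G.Adj c a) : False := by
  have hc : (SimpleGraph.Walk.cons h1 (.cons h2 (.cons h3 .nil))).IsCycle :=
    { edges_nodup := by have := h1.ne; have := h2.ne; have := h3.ne; aesop
      ne_nil := by simp
      support_nodup := by have := h1.ne; have := h2.ne; have := h3.ne; aesop }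
  have := SimpleGraph.le_egirth.1 hg _ _ hc
  simp only [SimpleGraph.Walk.length_cons, SimpleGraph.Walk.length_nil] at this
  have h' : (6 : ℕ) ≤ 0 + 1 + 1 + 1 := by exact_mod_cast this
  omega

lemma no_four (hg : (6 : ℕ∞) ≤ G.egirth) {a b c e : V} (h1 : G.Adj a b) (h2 : G.Adj b c)
    (h3 : G.Adj c e) (h4 : G.Adj e a) (hac : a ≠ c) (hbe : b ≠ e) : False := by
  have hc : (SimpleGraph.Walk.cons h1 (.cons h2 (.cons h3 (.cons h4 .nil)))).IsCycle :=
    { edges_nodup := by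
        have := h1.ne; have := h2.ne; have := h3.ne; have := h4.ne; aesop
      ne_nil := by simp
      support_nodup := by
        have := h1.ne; have := h2.ne; have := h3.ne; have := h4.ne; aesop }
  have := SimpleGraph.le_egirth.1 hg _ _ hc
  simp only [SimpleGraph.Walk.length_cons, SimpleGraph.Walk.length_nil] at this
  have h' : (6 : ℕ) ≤ 0 + 1 + 1 + 1 + 1 := by exact_mod_cast this
  omega

/-- No closed walk of length `5`: distinctness of the vertices is automatic, since a repeated
vertex would produce a triangle. -/
lemma no_five (hg : (6 : ℕ∞) ≤ G.egirth) {a b c e f : V} (h1 : G.Adj a b) (h2 : G.Adj b c)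
    (h3 : G.Adj c e) (h4 : G.Adj e f) (h5 : G.Adj f a) : False := by
  have n1 := h1.ne
  have n2 := h2.ne
  have n3 := h3.ne
  have n4 := h4.ne
  have n5 := h5.ne
  have m1 : a ≠ c := by rintro rfl; exact no_three hg h3 h4 h5
  have m2 : b ≠ e := by rintro rfl; exact no_three hg h4 h5 h1
  have m3 : c ≠ f := by rintro rfl; exact no_three hg h5 h1 h2
  have m4 : e ≠ a := by rintro rfl; exact no_three hg h1 h2 h3
  have m5 : f ≠ b := by rintro rfl; exact no_three hg h2 h3 h4
  have hc : (SimpleGraph.Walk.cons h1 (.cons h2 (.cons h3 (.cons h4 (.cons h5 .nil))))).IsCycle :=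
    { edges_nodup := by aesop
      ne_nil := by simp
      support_nodup := by aesop }
  have := SimpleGraph.le_egirth.1 hg _ _ hc
  simp only [SimpleGraph.Walk.length_cons, SimpleGraph.Walk.length_nil] at this
  have h' : (6 : ℕ) ≤ 0 + 1 + 1 + 1 + 1 + 1 := by exact_mod_cast this
  omega

lemma six_le_egirth
    (h3 : ∀ a b c : V, G.Adj a b → G.Adj b c → G.Adj c a → False)
    (h4 : ∀ a b c e : V, G.Adj a b → G.Adj b c → G.Adj c e → G.Adj e a → a ≠ c → b ≠ e → False)
    (h5 : ∀ a b c e f : V, G.Adj a b → G.Adj b c → G.Adj c e → G.Adj e f → G.Adj f a → False) :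
    (6 : ℕ∞) ≤ G.egirth := by
  refine SimpleGraph.le_egirth.2 fun a w hw => ?_
  by_contra! hlt
  have hlt' : w.length < 6 := by exact_mod_cast hlt
  have h3l := hw.three_le_length
  cases w with
  | nil => simp at h3l
  | cons a1 w => cases w with
    | nil => simp at h3l
    | cons a2 w => cases w with
      | nil => simp at h3l
      | cons a3 w => cases w with
        | nil => exact h3 _ _ _ a1 a2 a3
        | cons a4 w => cases w with
          | nil =>
            have := hw.support_nodup
            simp only [SimpleGraph.Walk.support_cons, SimpleGraph.Walk.support_nil,
              List.tail_cons, List.nodup_cons, List.mem_cons, not_or] at this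
            exact h4 _ _ _ _ a1 a2 a3 a4 (fun h => this.2.1.2.1 h.symm) this.1.2.1
          | cons a5 w => cases w with
            | nil => exact h5 _ _ _ _ _ a1 a2 a3 a4 a5
            | cons a6 w =>
              simp only [SimpleGraph.Walk.length_cons] at hlt'
              omega

end girth

/-! ### The incidence graph of a projective plane -/

section incidence

/-- The incidence graph of points and lines. -/
def incidenceGraph (P L : Type) [Membership P L] : SimpleGraph (P ⊕ L) where
  Adj
    | .inl p, .inr l => p ∈ l
    | .inr l, .inl p => p ∈ l
    | _, _ => False
  symm := ⟨by rintro (p | l) (q | m) h <;> exact h⟩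
  loopless := ⟨by rintro (p | l) h <;> exact h⟩

variable {P L : Type} [Membership P L]

@[simp] lemma adj_inl_inr (p : P) (l : L) :
    (incidenceGraph P L).Adj (.inl p) (.inr l) ↔ p ∈ l := Iff.rfl

@[simp] lemma adj_inr_inl (p : P) (l : L) :
    (incidenceGraph P L).Adj (.inr l) (.inl p) ↔ p ∈ l := Iff.rfl

@[simp] lemma adj_inl_inl (p q : P) : ¬ (incidenceGraph P L).Adj (.inl p) (.inl q) := id

@[simp] lemma adj_inr_inr (l m : L) : ¬ (incidenceGraph P L).Adj (.inr l) (.inr m) := id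

lemma incidence_egirth [Nondegenerate P L] : (6 : ℕ∞) ≤ (incidenceGraph P L).egirth := by
  apply six_le_egirth
  · rintro (a | a) (b | b) (c | c) <;> simp
  · rintro (a | a) (b | b) (c | c) (e | e) <;> simp
    · intro h1 h2 h3 h4 hac
      exact (Nondegenerate.eq_or_eq h1 h2 h4 h3).resolve_left hac
    · intro h1 h2 h3 h4 hac
      exact (Nondegenerate.eq_or_eq h1 h4 h2 h3).resolve_right hac
  · rintro (a | a) (b | b) (c | c) (e | e) (f | f) <;> simp

open Classical in
lemma incidence_regular [Fintype P] [Fintype L] {d : ℕ}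
    (hp : ∀ p : P, lineCount L p = d + 1) (hl : ∀ l : L, pointCount P l = d + 1) :
    (incidenceGraph P L).IsRegularOfDegree (d + 1) := by
  rintro (p | l)
  · rw [← hp p, lineCount, ← SimpleGraph.card_neighborSet_eq_degree, ← Nat.card_eq_fintype_card]
    symm
    refine Nat.card_congr (Equiv.ofBijective
      (fun l => ⟨.inr l.1, l.2⟩ : {l : L // p ∈ l} → (incidenceGraph P L).neighborSet (.inl p))
      ⟨fun l m h => ?_, ?_⟩)
    · simpa [Subtype.ext_iff] using h
    · rintro ⟨q | m, h⟩
      · exact h.elim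
      · exact ⟨⟨m, h⟩, rfl⟩
  · rw [← hl l, pointCount, ← SimpleGraph.card_neighborSet_eq_degree, ← Nat.card_eq_fintype_card]
    symm
    refine Nat.card_congr (Equiv.ofBijective
      (fun p => ⟨.inl p.1, p.2⟩ : {p : P // p ∈ l} → (incidenceGraph P L).neighborSet (.inr l))
      ⟨fun l m h => ?_, ?_⟩)
    · simpa [Subtype.ext_iff] using h
    · rintro ⟨q | m, h⟩
      · exact ⟨⟨q, h⟩, rfl⟩
      · exact h.elim

end incidence

/-! ### The bipartition of a Moore graph of girth six -/

section moore

variable {V : Type}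

/-- `x` and `y` are equal or have a common neighbour. -/
def EvenNear (G : SimpleGraph V) (x y : V) : Prop := x = y ∨ ∃ z, G.Adj x z ∧ G.Adj z y

lemma EvenNear.symm {G : SimpleGraph V} {x y : V} (h : EvenNear G x y) : EvenNear G y x := by
  rcases h with h | ⟨z, h1, h2⟩
  exacts [.inl h.symm, .inr ⟨z, h2.symm, h1.symm⟩]

variable {G : SimpleGraph V}

lemma not_evenNear_both (hg : (6 : ℕ∞) ≤ G.egirth) {u v w : V} (huv : G.Adj u v)
    (hu : EvenNear G u w) (hv : EvenNear G v w) : False := by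
  rcases hu with rfl | ⟨a, h1, h2⟩ <;> rcases hv with rfl | ⟨b, h3, h4⟩
  · exact huv.ne rfl
  · exact no_three hg huv h3 h4
  · exact no_three hg h1 h2 huv.symm
  · exact no_five hg h1 h2 h4.symm h3.symm huv.symm

variable [Fintype V]

open Classical in
/-- `{w | EvenNear G u w}` is `u` together with the sets `N(y) \ {u}`, `y` a neighbour of `u`; these
are pairwise disjoint as there are no `4`-cycles. -/
lemma card_evenNear [DecidableRel G.Adj] {d : ℕ} (hr : G.IsRegularOfDegree (d + 1))
    (hg : (6 : ℕ∞) ≤ G.egirth) (u : V) :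
    (Finset.univ.filter (EvenNear G u)).card = d ^ 2 + d + 1 := by
  have heq : Finset.univ.filter (EvenNear G u) =
      insert u ((G.neighborFinset u).biUnion fun y => (G.neighborFinset y).erase u) := by
    ext w
    simp only [Finset.mem_filter, Finset.mem_univ, true_and, EvenNear, Finset.mem_insert,
      Finset.mem_biUnion, SimpleGraph.mem_neighborFinset, Finset.mem_erase]
    constructor
    · rintro (h | ⟨z, h⟩)
      · exact .inl h.symm
      · by_cases hw : w = u
        exacts [.inl hw, .inr ⟨z, h.1, hw, h.2⟩]
    · rintro (h | ⟨z, h1, -, h2⟩)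
      exacts [.inl h.symm, .inr ⟨z, h1, h2⟩]
  rw [heq, Finset.card_insert_of_notMem (by simp), Finset.card_biUnion]
  · rw [Finset.sum_congr rfl (g := fun _ => d)]
    · rw [Finset.sum_const, SimpleGraph.card_neighborFinset_eq_degree, hr u, smul_eq_mul]
      ring
    · intro y hy
      rw [SimpleGraph.mem_neighborFinset] at hy
      rw [Finset.card_erase_of_mem (by simpa using hy.symm),
        SimpleGraph.card_neighborFinset_eq_degree, hr y]
      rfl
  · intro y hy z hz hyz
    rw [Finset.mem_coe, SimpleGraph.mem_neighborFinset] at hy hz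
    change Disjoint _ _
    rw [Finset.disjoint_left]
    intro w hw hw'
    simp only [Finset.mem_erase, SimpleGraph.mem_neighborFinset] at hw hw'
    exact no_four hg hy hw.2 hw'.2.symm hz.symm (Ne.symm hw.1) hyz

lemma evenNear_compl [DecidableRel G.Adj] {d : ℕ} (hr : G.IsRegularOfDegree (d + 1))
    (hg : (6 : ℕ∞) ≤ G.egirth) (hcard : Fintype.card V = 2 * (d ^ 2 + d + 1)) {u v : V}
    (huv : G.Adj u v) (w : V) : EvenNear G v w ↔ ¬ EvenNear G u w := by
  classical
  refine ⟨fun hv hu => not_evenNear_both hg huv hu hv, fun hu => ?_⟩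
  have hdisj : Disjoint (Finset.univ.filter (EvenNear G u)) (Finset.univ.filter (EvenNear G v)) := by
    rw [Finset.disjoint_left]
    intro x hx hx'
    exact not_evenNear_both hg huv (Finset.mem_filter.1 hx).2 (Finset.mem_filter.1 hx').2
  have hun := Finset.card_union_of_disjoint hdisj
  rw [card_evenNear hr hg, card_evenNear hr hg, ← two_mul, ← hcard, Finset.card_eq_iff_eq_univ]
    at hun
  have hw := Finset.mem_univ w
  rw [← hun] at hw
  simpa [hu] using hw

/-- The bipartite structure of `G` needed for a projective plane: `S` and its complement are the two
parts, and within a part any two vertices are equal or have a common neighbour. -/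
structure IsSplit (G : SimpleGraph V) (S : V → Prop) : Prop where
  adj : ∀ {x y}, G.Adj x y → (S y ↔ ¬ S x)
  near : ∀ {x y}, (S x ↔ S y) → EvenNear G x y

lemma isSplit_evenNear [DecidableRel G.Adj] {d : ℕ} (hr : G.IsRegularOfDegree (d + 1))
    (hg : (6 : ℕ∞) ≤ G.egirth) (hcard : Fintype.card V = 2 * (d ^ 2 + d + 1)) (u : V) :
    IsSplit G (EvenNear G u) := by
  have key := fun {x y} (h : G.Adj x y) w => evenNear_compl hr hg hcard h w
  have hadj : ∀ {x y}, G.Adj x y → (EvenNear G u y ↔ ¬ EvenNear G u x) := by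
    intro x y h
    have := key h u
    exact ⟨fun h1 h2 => this.1 h1.symm h2.symm, fun h1 => (this.2 fun h2 => h1 h2.symm).symm⟩
  -- `E` is constant on `E x`: a common neighbour complements both sets.
  have trans : ∀ {x y}, EvenNear G x y → ∀ w, EvenNear G x w ↔ EvenNear G y w := by
    rintro x y (rfl | ⟨z, h1, h2⟩) w
    · rfl
    · rw [key h2 w, key h1 w, not_not]
  refine ⟨hadj, fun {x y} hxy => ?_⟩
  by_cases hx : EvenNear G u x
  · exact (trans hx y).1 (hxy.1 hx)
  · -- A neighbour `z` of `x` lies in `E u`, so `E x` is the complement of `E z = E u`.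
    obtain ⟨z, hz⟩ : ∃ z, G.Adj x z := by
      rw [← SimpleGraph.degree_pos_iff_exists_adj, hr x]
      omega
    have hz' := (hadj hz).2 hx
    rw [key hz.symm y, ← trans hz' y]
    exact fun h => hx (hxy.2 h)

variable {S : V → Prop}

/-- Adjacency as incidence between the two parts. -/
@[reducible]
def splitMembership (G : SimpleGraph V) (S : V → Prop) :
    Membership {x // S x} {x // ¬ S x} := ⟨fun l p => G.Adj p.1 l.1⟩

lemma exists_adj_not_mem [DecidableRel G.Adj] {d : ℕ} (hr : G.IsRegularOfDegree (d + 1))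
    (v : V) (s : Finset V) (hs : s.card ≤ d) : ∃ z, G.Adj v z ∧ z ∉ s := by
  obtain ⟨z, hz, hz'⟩ := Finset.exists_mem_notMem_of_card_lt_card (s := s)
    (t := G.neighborFinset v) (by rw [SimpleGraph.card_neighborFinset_eq_degree, hr v]; omega)
  exact ⟨z, by simpa using hz, hz'⟩

/-- Every vertex has a non-neighbour in the other part: the end of a path of length three
starting at it. -/
lemma exists_far [DecidableRel G.Adj] {d : ℕ} (hd : 2 ≤ d) (hr : G.IsRegularOfDegree (d + 1))
    (hg : (6 : ℕ∞) ≤ G.egirth) (hS : IsSplit G S) (v : V) : ∃ w, (S w ↔ ¬ S v) ∧ ¬ G.Adj v w := by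
  obtain ⟨a, ha, -⟩ := exists_adj_not_mem hr v ∅ (by simp)
  obtain ⟨b, hb, hb'⟩ := exists_adj_not_mem hr a {v} (by simp; omega)
  obtain ⟨c, hc, hc'⟩ := exists_adj_not_mem hr b {a} (by simp; omega)
  simp only [Finset.mem_singleton] at hb' hc'
  refine ⟨c, ?_, fun h => no_four hg ha hb hc h.symm (Ne.symm hb') (Ne.symm hc')⟩
  have h1 := hS.adj ha
  have h2 := hS.adj hb
  have h3 := hS.adj hc
  tauto

/-- The projective plane whose points and lines are the two parts of `G`. -/
lemma nonempty_plane [DecidableRel G.Adj] {d : ℕ} (hd : 2 ≤ d) (hr : G.IsRegularOfDegree (d + 1))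
    (hg : (6 : ℕ∞) ≤ G.egirth) (hS : IsSplit G S) (u : V) (hu : S u) :
    Nonempty (@ProjectivePlane {x // S x} {x // ¬ S x} (splitMembership G S)) := by
  classical
  let := splitMembership G S
  have hpt : ∀ l m : {x // ¬ S x}, l ≠ m → ∃ p : {x // S x}, p ∈ l ∧ p ∈ m := by
    rintro ⟨l, hl⟩ ⟨m, hm⟩ hlm
    rcases hS.near (x := l) (y := m) (by tauto) with h | ⟨z, h1, h2⟩
    · exact absurd (Subtype.ext h) hlm
    · exact ⟨⟨z, (hS.adj h1).2 hl⟩, h1.symm, h2⟩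
  have hln : ∀ p q : {x // S x}, p ≠ q → ∃ l : {x // ¬ S x}, p ∈ l ∧ q ∈ l := by
    rintro ⟨p, hp⟩ ⟨q, hq⟩ hpq
    rcases hS.near (x := p) (y := q) (by tauto) with h | ⟨z, h1, h2⟩
    · exact absurd (Subtype.ext h) hpq
    · exact ⟨⟨z, fun hz => (hS.adj h1).1 hz hp⟩, h1, h2.symm⟩
  choose mkp hmkp using hpt
  choose mkl hmkl using hln
  have heq : ∀ {p₁ p₂ : {x // S x}} {l₁ l₂ : {x // ¬ S x}},
      p₁ ∈ l₁ → p₂ ∈ l₁ → p₁ ∈ l₂ → p₂ ∈ l₂ → p₁ = p₂ ∨ l₁ = l₂ := by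
    intro p q l m h1 h2 h3 h4
    by_contra! h
    exact no_four hg (a := p.1) (b := l.1) (c := q.1) (e := m.1) h1 h2.symm h4 h3.symm
      (fun e => h.1 (Subtype.ext e)) (fun e => h.2 (Subtype.ext e))
  -- Three lines `l₂, l₃, m` through `p₂ = u`; `p₃` on `l₂`, `p₁` on `m`; and `l₁` a line through
  -- `p₁` other than `p₁p₂ = m` and `p₁p₃`.
  have hconf : ∃ (p₁ p₂ p₃ : {x // S x}) (l₁ l₂ l₃ : {x // ¬ S x}),
      p₁ ∉ l₂ ∧ p₁ ∉ l₃ ∧ p₂ ∉ l₁ ∧ p₂ ∈ l₂ ∧ p₂ ∈ l₃ ∧ p₃ ∉ l₁ ∧ p₃ ∈ l₂ ∧ p₃ ∉ l₃ := by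
    have pt : ∀ (l : {x // ¬ S x}) (p : {x // S x}), ∃ q : {x // S x}, q ∈ l ∧ q ≠ p := by
      intro l p
      obtain ⟨q, h1, h2⟩ := exists_adj_not_mem hr l.1 {p.1} (by simp; omega)
      exact ⟨⟨q, (hS.adj h1).2 l.2⟩, h1.symm, by simpa [Subtype.ext_iff] using h2⟩
    have ln : ∀ (p : {x // S x}) (l m : {x // ¬ S x}),
        ∃ k : {x // ¬ S x}, p ∈ k ∧ k ≠ l ∧ k ≠ m := by
      intro p l m
      obtain ⟨q, h1, h2⟩ := exists_adj_not_mem hr p.1 {l.1, m.1} (Finset.card_le_two.trans hd)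
      refine ⟨⟨q, fun hq => (hS.adj h1).1 hq p.2⟩, h1, ?_⟩
      simpa [Subtype.ext_iff] using h2
    let p₂ : {x // S x} := ⟨u, hu⟩
    obtain ⟨l₂, h22⟩ : ∃ l : {x // ¬ S x}, p₂ ∈ l := by
      obtain ⟨z, hz, -⟩ := exists_adj_not_mem hr u ∅ (by simp)
      exact ⟨⟨z, fun h => (hS.adj hz).1 h hu⟩, hz⟩
    obtain ⟨l₃, h23, h32, -⟩ := ln p₂ l₂ l₂
    obtain ⟨m, h2m, hm2, hm3⟩ := ln p₂ l₂ l₃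
    obtain ⟨p₃, h32', hp3⟩ := pt l₂ p₂
    obtain ⟨p₁, h1m, hp1⟩ := pt m p₂
    have hp12 : p₁ ∉ l₂ := fun h => (heq h1m h2m h h22).elim hp1 hm2
    have hp13 : p₁ ≠ p₃ := by rintro rfl; exact hp12 h32'
    obtain ⟨l₁, h11, h1m', h1k⟩ := ln p₁ m (mkl p₁ p₃ hp13)
    refine ⟨p₁, p₂, p₃, l₁, l₂, l₃, hp12, ?_, ?_, h22, h23, ?_, h32', ?_⟩
    · exact fun h => (heq h1m h2m h h23).elim hp1 hm3
    · exact fun h => (heq h11 h h1m h2m).elim hp1 h1m'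
    · exact fun h => (heq h11 h (hmkl _ _ hp13).1 (hmkl _ _ hp13).2).elim hp13 h1k
    · exact fun h => (heq h h23 h32' h22).elim hp3 h32
  exact ⟨{
    exists_point := by
      intro l
      obtain ⟨w, h1, h2⟩ := exists_far hd hr hg hS l.1
      exact ⟨⟨w, h1.2 l.2⟩, fun h => h2 h.symm⟩
    exists_line := by
      intro p
      obtain ⟨w, h1, h2⟩ := exists_far hd hr hg hS p.1
      exact ⟨⟨w, fun h => h1.1 h p.2⟩, h2⟩
    eq_or_eq := heq
    mkPoint := fun {l m} h => mkp l m h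
    mkPoint_ax := fun {l m} h => hmkp l m h
    mkLine := fun {p q} h => mkl p q h
    mkLine_ax := fun {p q} h => hmkl p q h
    exists_config := hconf }⟩

lemma split_pointCount [DecidableRel G.Adj] {d : ℕ} (hr : G.IsRegularOfDegree (d + 1))
    (hS : IsSplit G S) (l : {x // ¬ S x}) :
    @pointCount {x // S x} {x // ¬ S x} (splitMembership G S) l = d + 1 := by
  let := splitMembership G S
  rw [← hr l.1, pointCount, ← SimpleGraph.card_neighborSet_eq_degree, ← Nat.card_eq_fintype_card]
  refine Nat.card_congr (Equiv.ofBijective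
    (fun p => ⟨p.1.1, p.2.symm⟩ : {p : {x // S x} // p ∈ l} → G.neighborSet l.1)
    ⟨fun p q h => ?_, ?_⟩)
  · simpa [Subtype.ext_iff] using h
  · rintro ⟨q, hq⟩
    exact ⟨⟨⟨q, (hS.adj hq).2 l.2⟩, hq.symm⟩, rfl⟩

end moore

end MoorePlane

/-- **Singleton's theorem (existence version).** For `d ≥ 2`, a finite projective plane of
order `d` exists if and only if there exists a `(d+1)`-regular graph on `2(d² + d + 1)`
vertices with girth at least `6`. -/
theorem projective_plane_iff_moore_graph (d : ℕ) (hd : 2 ≤ d) :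
    (∃ (P L : Type) (_ : Membership P L) (_ : Fintype P) (_ : Fintype L),
        Nonempty (Configuration.ProjectivePlane P L) ∧
        ∀ l : L, Configuration.pointCount P l = d + 1) ↔
    (∃ (V : Type) (_ : Fintype V) (G : SimpleGraph V) (_ : DecidableRel G.Adj),
        Fintype.card V = 2 * (d ^ 2 + d + 1) ∧
        G.IsRegularOfDegree (d + 1) ∧
        (6 : ℕ∞) ≤ G.egirth) := by
  classical
  constructor
  · rintro ⟨P, L, _, _, _, ⟨_⟩, hl⟩
    obtain ⟨p, -, -, l, -⟩ := @Configuration.ProjectivePlane.exists_config P L _ _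
    have hord : Configuration.ProjectivePlane.order P L = d := by
      have := Configuration.ProjectivePlane.pointCount_eq P l
      rw [hl l] at this
      omega
    refine ⟨P ⊕ L, inferInstance, MoorePlane.incidenceGraph P L, Classical.decRel _, ?_, ?_,
      MoorePlane.incidence_egirth⟩
    · rw [Fintype.card_sum, Configuration.ProjectivePlane.card_points P L,
        Configuration.ProjectivePlane.card_lines P L, hord]
      ring
    · convert! MoorePlane.incidence_regular (P := P) (L := L) (d := d) ?_ hl
      intro p
      rw [Configuration.ProjectivePlane.lineCount_eq, hord]
  · rintro ⟨V, _, G, _, hcard, hr, hg⟩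
    obtain ⟨u⟩ : Nonempty V := Fintype.card_pos_iff.1 (by rw [hcard]; positivity)
    have hS := MoorePlane.isSplit_evenNear hr hg hcard u
    exact ⟨{x // MoorePlane.EvenNear G u x}, {x // ¬ MoorePlane.EvenNear G u x},
      MoorePlane.splitMembership G _, inferInstance, inferInstance,
      MoorePlane.nonempty_plane hd hr hg hS u (.inl rfl), MoorePlane.split_pointCount hr hS⟩
end

section
/- Let d be a real number with d ≥ 2 and g ≥ 3 an integer. Every nonempty finite simple graph G whose average degree 2·e(G)/|V(G)| is at least d and whose girth is at least g has at least n₀(d,g) vertices. -/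
open Finset

namespace MooreBound

/-! ### Non-backtracking walks in graphs of large girth -/

/-- The edges of two walks of total length below the girth span a forest, and in a forest
non-backtracking walks are paths, which are determined by their ends. -/
lemma walk_unique {V : Type} (G : SimpleGraph V) {g : ℕ} (hgirth : (g : ℕ∞) ≤ G.egirth)
    {u w : V} (p q : G.Walk u w) (hp : p.edges.IsChain (· ≠ ·)) (hq : q.edges.IsChain (· ≠ ·))
    (hlen : p.length + q.length < g) : p = q := by
  classical
  let E : Finset (Sym2 V) := (p.edges ++ q.edges).toFinset
  let H : SimpleGraph V := SimpleGraph.fromEdgeSet (E : Set (Sym2 V))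
  have hE : ∀ e ∈ E, e ∈ G.edgeSet := by
    intro e he
    simp only [E, List.mem_toFinset, List.mem_append] at he
    exact he.elim (fun h => p.edges_subset_edgeSet h) (fun h => q.edges_subset_edgeSet h)
  have hHE : ∀ e, e ∈ H.edgeSet ↔ e ∈ E := by
    intro e
    simp only [H, SimpleGraph.edgeSet_fromEdgeSet, Set.mem_sdiff, Finset.mem_coe]
    exact ⟨fun h => h.1, fun h => ⟨h, fun hd => G.not_isDiag_of_mem_edgeSet (hE e h) hd⟩⟩
  have hcard : E.card < g := by
    refine lt_of_le_of_lt (List.toFinset_card_le _) ?_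
    simpa using hlen
  have hac : H.IsAcyclic := by
    intro a c hc
    have hcE : ∀ e ∈ c.edges, e ∈ E := fun e he => (hHE e).1 (c.edges_subset_edgeSet he)
    have h1 : c.length ≤ E.card := by
      rw [← c.length_edges, ← List.toFinset_card_of_nodup hc.edges_nodup]
      exact Finset.card_le_card (fun e he => hcE e (List.mem_toFinset.1 he))
    have h2 := SimpleGraph.le_egirth.1 hgirth a _
      (hc.transfer (H := G) (fun e he => hE e (hcE e he)))
    rw [SimpleGraph.Walk.length_transfer] at h2
    have h3 : g ≤ c.length := by exact_mod_cast h2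
    omega
  have hpH : ∀ e ∈ p.edges, e ∈ H.edgeSet := fun e he => (hHE e).2 (by simp [E, he])
  have hqH : ∀ e ∈ q.edges, e ∈ H.edgeSet := fun e he => (hHE e).2 (by simp [E, he])
  have hp' : (p.transfer H hpH).IsPath := by
    rw [hac.isPath_iff_isChain]; simpa using hp
  have hq' : (q.transfer H hqH).IsPath := by
    rw [hac.isPath_iff_isChain]; simpa using hq
  have heq := congrArg Subtype.val ((hac.subsingleton_path u w).elim ⟨_, hp'⟩ ⟨_, hq'⟩)
  have hsup := congrArg SimpleGraph.Walk.support heq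
  simp only [SimpleGraph.Walk.support_transfer] at hsup
  exact SimpleGraph.Walk.ext_support hsup

lemma isChain_tail {V : Type} {G : SimpleGraph V} {u v w : V} {h : G.Adj u v} {p : G.Walk v w}
    (hc : (SimpleGraph.Walk.cons h p).edges.IsChain (· ≠ ·)) : p.edges.IsChain (· ≠ ·) := by
  rw [SimpleGraph.Walk.edges_cons] at hc
  exact hc.tail

section

variable {V : Type} [Fintype V] (G : SimpleGraph V) [DecidableRel G.Adj]

/-! ### Inequalities for logarithms and degrees -/

/-- Concavity of the logarithm. -/
lemma sum_log_le {ι : Type} (s : Finset ι) (hs : s.Nonempty) (f : ι → ℝ)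
    (hf : ∀ i ∈ s, 0 < f i) :
    Real.log s.card + (∑ i ∈ s, Real.log (f i)) / s.card ≤ Real.log (∑ i ∈ s, f i) := by
  have hc : (0 : ℝ) < s.card := by exact_mod_cast hs.card_pos
  have hsum : 0 < ∑ i ∈ s, f i := Finset.sum_pos hf hs
  have := strictConcaveOn_log_Ioi.concaveOn.le_map_sum (t := s)
    (w := fun _ => (s.card : ℝ)⁻¹) (p := f) (fun i _ => by positivity)
    (by simp [hc.ne']) hf
  simp only [smul_eq_mul, ← Finset.mul_sum] at this
  rw [Real.log_mul (by positivity) hsum.ne', Real.log_inv] at this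
  rw [div_eq_inv_mul]
  linarith

lemma convexOn_mul_log : ConvexOn ℝ (Set.Ici (2 : ℝ)) (fun x => x * Real.log (x - 1)) := by
  have h1 : ∀ x ∈ Set.Ioi (1 : ℝ), HasDerivAt (fun x : ℝ => x * Real.log (x - 1))
      (Real.log (x - 1) + x / (x - 1)) x := by
    intro x hx
    have hx0 : x - 1 ≠ 0 := (sub_pos.2 hx).ne'
    have := (hasDerivAt_id x).mul (((hasDerivAt_id x).sub_const 1).log hx0)
    simpa [div_eq_mul_inv] using! this
  have h2 : ∀ x ∈ Set.Ioi (1 : ℝ), HasDerivAt (fun x : ℝ => Real.log (x - 1) + x / (x - 1))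
      ((x - 2) / (x - 1) ^ 2) x := by
    intro x hx
    have hx0 : x - 1 ≠ 0 := (sub_pos.2 hx).ne'
    have := (((hasDerivAt_id x).sub_const 1).log hx0).add
      ((hasDerivAt_id x).div ((hasDerivAt_id x).sub_const 1) hx0)
    convert! this using 1
    simp only [id]
    field_simp
    ring
  have hinterior : interior (Set.Ici (2 : ℝ)) = Set.Ioi 2 := interior_Ici
  have h12 : ∀ x : ℝ, 2 ≤ x → x ∈ Set.Ioi (1 : ℝ) := fun x hx => by
    simp only [Set.mem_Ioi]; linarith
  refine convexOn_of_hasDerivWithinAt2_nonneg (convex_Ici 2)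
    (f' := fun x => Real.log (x - 1) + x / (x - 1)) (f'' := fun x => (x - 2) / (x - 1) ^ 2)
    (fun x hx => (h1 x (h12 x hx)).continuousAt.continuousWithinAt) ?_ ?_ ?_ <;>
    rw [hinterior] <;> intro x hx
  · exact (h1 x (h12 x (le_of_lt hx))).hasDerivWithinAt
  · exact (h2 x (h12 x (le_of_lt hx))).hasDerivWithinAt
  · have : 0 ≤ x - 2 := sub_nonneg.2 (le_of_lt hx)
    positivity

/-- Jensen's inequality for `x * log (x - 1)` at the degrees. -/
lemma degree_log {G : SimpleGraph V} [DecidableRel G.Adj] {d : ℝ} (hd : 2 ≤ d) [Nonempty V]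
    (hmin : ∀ v, 2 ≤ G.degree v)
    (hD : d * Fintype.card V ≤ ∑ v, (G.degree v : ℝ)) :
    (∑ v, (G.degree v : ℝ)) * Real.log (d - 1) ≤
      ∑ v, (G.degree v : ℝ) * Real.log (G.degree v - 1) := by
  have hn : (0 : ℝ) < Fintype.card V := by exact_mod_cast Fintype.card_pos
  have := convexOn_mul_log.map_sum_le (t := (univ : Finset V))
    (w := fun _ => (Fintype.card V : ℝ)⁻¹) (p := fun v => (G.degree v : ℝ))
    (fun i _ => by positivity) (by simp [hn.ne'])
    (fun v _ => by
      have : (2 : ℝ) ≤ G.degree v := by exact_mod_cast hmin v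
      exact this)
  simp only [smul_eq_mul, ← Finset.mul_sum] at this
  rw [mul_assoc, mul_le_mul_iff_right₀ (by positivity)] at this
  refine le_trans ?_ this
  have hle : d ≤ (Fintype.card V : ℝ)⁻¹ * ∑ v, (G.degree v : ℝ) := by
    rw [← div_eq_inv_mul, le_div_iff₀ hn]; exact hD
  gcongr
  linarith

lemma sum_adj_comm (f : V → V → ℝ) :
    ∑ u, ∑ v ∈ G.neighborFinset u, f u v = ∑ v, ∑ u ∈ G.neighborFinset v, f u v :=
  Finset.sum_comm' (by simp [SimpleGraph.adj_comm])

variable [DecidableEq V]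

/-! ### Moore trees -/

/-- The number of non-backtracking walks that begin with the step `u → v` and then make `i` more
steps. -/
def count : ℕ → V → V → ℕ
  | 0, _, _ => 1
  | i + 1, u, v => ∑ w ∈ (G.neighborFinset v).erase u, count i v w

/-- The set of last vertices of the walks counted by `count`. -/
def ends : ℕ → V → V → Finset V
  | 0, _, v => {v}
  | i + 1, u, v => ((G.neighborFinset v).erase u).biUnion (ends i v)

/-- The walk `p` omits the step `u → v`, which is put back by `cons`. -/
lemma exists_walk_of_mem_ends (i : ℕ) {u v w : V} (h : G.Adj u v) (hw : w ∈ ends G i u v) :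
    ∃ p : G.Walk v w, p.length = i ∧ (SimpleGraph.Walk.cons h p).edges.IsChain (· ≠ ·) := by
  induction i generalizing u v with
  | zero =>
    obtain rfl : w = v := by simpa [ends] using hw
    exact ⟨.nil, by simp, by simp⟩
  | succ i ih =>
    simp only [ends, mem_biUnion, mem_erase, SimpleGraph.mem_neighborFinset] at hw
    obtain ⟨x, ⟨hxu, hvx⟩, hw⟩ := hw
    obtain ⟨p, hp, hc⟩ := ih hvx hw
    refine ⟨.cons hvx p, by simp [hp], ?_⟩
    simp only [SimpleGraph.Walk.edges_cons, List.isChain_cons_cons] at hc ⊢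
    refine ⟨?_, hc⟩
    intro hs
    rcases Sym2.eq_iff.1 hs with ⟨h1, _⟩ | ⟨h1, _⟩
    · exact h.ne h1
    · exact hxu h1.symm

variable {G} {g : ℕ}

lemma disjoint_ends_of_ne (hgirth : (g : ℕ∞) ≤ G.egirth) {i j : ℕ} {v x y : V}
    (hx : G.Adj v x) (hy : G.Adj v y) (hij : i + j + 2 < g) (hne : (i, x) ≠ (j, y)) :
    Disjoint (ends G i v x) (ends G j v y) := by
  rw [Finset.disjoint_left]
  intro w h1 h2
  obtain ⟨p, hp, hpc⟩ := exists_walk_of_mem_ends G i hx h1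
  obtain ⟨q, hq, hqc⟩ := exists_walk_of_mem_ends G j hy h2
  have := walk_unique G hgirth _ _ hpc hqc (by simp; omega)
  have hl := congrArg SimpleGraph.Walk.length this
  have hs := congrArg SimpleGraph.Walk.snd this
  simp at hl hs
  apply hne
  rw [hs, show i = j by omega]

lemma card_ends (hgirth : (g : ℕ∞) ≤ G.egirth) (i : ℕ) {u v : V}
    (hi : 2 * i < g) : (ends G i u v).card = count G i u v := by
  induction i generalizing u v with
  | zero => simp [ends, count]
  | succ i ih =>
    simp only [ends, count]
    rw [Finset.card_biUnion]
    · exact Finset.sum_congr rfl fun w _ => ih (by omega)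
    · intro x hx y hy hxy
      simp only [mem_coe, mem_erase, SimpleGraph.mem_neighborFinset] at hx hy
      exact disjoint_ends_of_ne hgirth hx.2 hy.2 (by omega) (by simp [hxy])

/-- The vertex `v` and the last vertices of the non-backtracking walks of length `1, …, h` from `v`
are all distinct. -/
lemma vertex_tree (hgirth : (g : ℕ∞) ≤ G.egirth) {h : ℕ} (hg : 2 * h < g) (v : V) :
    1 + ∑ i ∈ range h, ∑ w ∈ G.neighborFinset v, count G i v w ≤ Fintype.card V := by
  let B := (range h ×ˢ G.neighborFinset v).biUnion fun a => ends G a.1 v a.2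
  have hB : B.card = ∑ i ∈ range h, ∑ w ∈ G.neighborFinset v, count G i v w := by
    rw [Finset.card_biUnion, Finset.sum_product]
    · refine sum_congr rfl fun i hi => sum_congr rfl fun w _ => ?_
      have := mem_range.1 hi
      exact card_ends hgirth i (by omega)
    · rintro ⟨i, x⟩ hx ⟨j, y⟩ hy hne
      simp only [mem_coe, mem_product, mem_range, SimpleGraph.mem_neighborFinset] at hx hy
      exact disjoint_ends_of_ne hgirth hx.2 hy.2 (by omega) hne
  have hv : v ∉ B := by
    intro hv
    simp only [B, mem_biUnion, mem_product, mem_range, SimpleGraph.mem_neighborFinset] at hv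
    obtain ⟨⟨i, x⟩, ⟨hi, hx⟩, hv⟩ := hv
    obtain ⟨p, hp, hpc⟩ := exists_walk_of_mem_ends G i hx hv
    have := walk_unique G hgirth _ .nil hpc (by simp) (by simp; omega)
    simp at this
  rw [← hB, add_comm, ← Finset.card_insert_of_notMem hv]
  exact Finset.card_le_univ _

/-- The last vertices of the non-backtracking walks of length `1, …, h` whose first step is `u → v`
or `v → u` are all distinct. -/
lemma edge_tree (hgirth : (g : ℕ∞) ≤ G.egirth) {h : ℕ} (hg : 2 * h ≤ g) {u v : V}
    (huv : G.Adj u v) :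
    ∑ i ∈ range h, count G i u v + ∑ i ∈ range h, count G i v u ≤ Fintype.card V := by
  have key : ∀ {x y : V}, G.Adj x y →
      ((range h).biUnion fun i => ends G i x y).card = ∑ i ∈ range h, count G i x y := by
    intro x y hxy
    rw [Finset.card_biUnion]
    · refine sum_congr rfl fun i hi => ?_
      have := mem_range.1 hi
      exact card_ends hgirth i (by omega)
    · intro i hi j hj hij
      simp only [mem_coe, mem_range] at hi hj
      rw [Function.onFun, Finset.disjoint_left]
      intro w h1 h2
      obtain ⟨p, hp, hpc⟩ := exists_walk_of_mem_ends G i hxy h1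
      obtain ⟨q, hq, hqc⟩ := exists_walk_of_mem_ends G j hxy h2
      -- Dropping the common first step keeps the total length below `2 * h`.
      have := walk_unique G hgirth p q (isChain_tail hpc) (isChain_tail hqc) (by omega)
      subst this
      omega
  rw [← key huv, ← key huv.symm, ← Finset.card_union_of_disjoint]
  · exact Finset.card_le_univ _
  · rw [Finset.disjoint_left]
    intro w h1 h2
    simp only [mem_biUnion, mem_range] at h1 h2
    obtain ⟨i, hi, h1⟩ := h1
    obtain ⟨j, hj, h2⟩ := h2
    obtain ⟨p, hp, hpc⟩ := exists_walk_of_mem_ends G i huv h1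
    obtain ⟨q, hq, hqc⟩ := exists_walk_of_mem_ends G j huv.symm h2
    have := walk_unique G hgirth _ q hpc (isChain_tail hqc) (by simp; omega)
    -- Then `v → u` would be followed by `u → v`, a backtracking.
    subst this
    simp [Sym2.eq_swap] at hqc

/-! ### Counting non-backtracking walks -/

lemma count_pos (hmin : ∀ v, 2 ≤ G.degree v) (i : ℕ) (u v : V) : 0 < count G i u v := by
  induction i generalizing u v with
  | zero => simp [count]
  | succ i ih =>
    refine Finset.sum_pos (fun w _ => ih v w) ?_
    rw [← Finset.card_pos]
    have := Finset.pred_card_le_card_erase (s := G.neighborFinset v) (a := u)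
    have h2 := hmin v
    rw [SimpleGraph.card_neighborFinset_eq_degree] at this
    omega

/-- A non-backtracking random walk started from a uniform oriented edge stays uniformly
distributed, so each step contributes the same average branching `∑ deg v · log (deg v - 1)`. -/
lemma sum_log_count (hmin : ∀ v, 2 ≤ G.degree v) (i : ℕ) :
    i * ∑ v, (G.degree v : ℝ) * Real.log (G.degree v - 1) ≤
      ∑ u, ∑ v ∈ G.neighborFinset u, Real.log (count G i u v) := by
  induction i with
  | zero => simp [count]
  | succ i ih =>
    have hstep : ∀ u, ∀ v ∈ G.neighborFinset u,
        Real.log (G.degree v - 1) + (∑ w ∈ (G.neighborFinset v).erase u,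
          Real.log (count G i v w)) / (G.degree v - 1) ≤ Real.log (count G (i + 1) u v) := by
      intro u v huv
      have hu : u ∈ G.neighborFinset v := by
        simpa [SimpleGraph.adj_comm] using huv
      have hcard : (((G.neighborFinset v).erase u).card : ℝ) = G.degree v - 1 := by
        rw [Finset.card_erase_of_mem hu, SimpleGraph.card_neighborFinset_eq_degree,
          Nat.cast_sub (by have := hmin v; omega)]
        simp
      have hne : ((G.neighborFinset v).erase u).Nonempty := by
        rw [← Finset.card_pos, Finset.card_erase_of_mem hu,
          SimpleGraph.card_neighborFinset_eq_degree]
        have := hmin v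
        omega
      have := sum_log_le _ hne (fun w => (count G i v w : ℝ))
        (fun w _ => by exact_mod_cast count_pos hmin i v w)
      rw [hcard] at this
      simpa [count] using this
    have h1 : ∑ u, ∑ v ∈ G.neighborFinset u, Real.log (G.degree v - 1 : ℝ) =
        ∑ v, (G.degree v : ℝ) * Real.log (G.degree v - 1) := by
      rw [sum_adj_comm G fun _ v => Real.log (G.degree v - 1 : ℝ)]
      simp
    have h2 : ∑ u, ∑ v ∈ G.neighborFinset u, (∑ w ∈ (G.neighborFinset v).erase u,
          Real.log (count G i v w)) / (G.degree v - 1 : ℝ) =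
        ∑ v, ∑ w ∈ G.neighborFinset v, Real.log (count G i v w) := by
      rw [sum_adj_comm G fun u v => (∑ w ∈ (G.neighborFinset v).erase u,
          Real.log (count G i v w)) / (G.degree v - 1 : ℝ)]
      refine sum_congr rfl fun v _ => ?_
      have hdeg : (2 : ℝ) ≤ G.degree v := by exact_mod_cast hmin v
      rw [← Finset.sum_div, div_eq_iff (by linarith), Finset.sum_mul]
      rw [Finset.sum_comm' (t' := G.neighborFinset v)
        (s' := fun w => (G.neighborFinset v).erase w)]
      · refine sum_congr rfl fun w hw => ?_
        rw [sum_const, Finset.card_erase_of_mem hw, SimpleGraph.card_neighborFinset_eq_degree,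
          nsmul_eq_mul, Nat.cast_sub (by have := hmin v; omega), Nat.cast_one, mul_comm]
      · intro x y
        simp only [mem_erase]
        grind
    calc _ = ∑ v, (G.degree v : ℝ) * Real.log (G.degree v - 1) +
          i * ∑ v, (G.degree v : ℝ) * Real.log (G.degree v - 1) := by push_cast; ring
      _ ≤ ∑ v, (G.degree v : ℝ) * Real.log (G.degree v - 1) +
          ∑ u, ∑ v ∈ G.neighborFinset u, Real.log (count G i u v) := by gcongr
      _ = ∑ u, ∑ v ∈ G.neighborFinset u, (Real.log (G.degree v - 1) +
          (∑ w ∈ (G.neighborFinset v).erase u,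
            Real.log (count G i v w)) / (G.degree v - 1)) := by
        simp only [Finset.sum_add_distrib]
        rw [h1, h2]
      _ ≤ _ := sum_le_sum fun u _ => sum_le_sum fun v hv => hstep u v hv

/-- The average over oriented edges of the number of non-backtracking continuations of length `i` is
at least `(d - 1) ^ i`, its value in a `d`-regular graph. -/
lemma le_sum_count {d : ℝ} (hd : 2 ≤ d) [Nonempty V] (hmin : ∀ v, 2 ≤ G.degree v)
    (hD : d * Fintype.card V ≤ ∑ v, (G.degree v : ℝ)) (i : ℕ) :
    (∑ v, (G.degree v : ℝ)) * (d - 1) ^ i ≤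
      ∑ u, ∑ v ∈ G.neighborFinset u, (count G i u v : ℝ) := by
  have hn : (0 : ℝ) < Fintype.card V := by exact_mod_cast Fintype.card_pos
  set D := ∑ v, (G.degree v : ℝ) with hDdef
  have hDpos : 0 < D := lt_of_lt_of_le (by positivity) hD
  let s : Finset ((_ : V) × V) := univ.sigma fun u => G.neighborFinset u
  have hs : (s.card : ℝ) = D := by simp [s, hDdef]
  have hsne : s.Nonempty := by
    rw [← Finset.card_pos]
    exact_mod_cast hs ▸ hDpos
  have hJ := sum_log_le s hsne (fun a => (count G i a.1 a.2 : ℝ))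
    (fun a _ => by exact_mod_cast count_pos hmin i a.1 a.2)
  rw [hs] at hJ
  simp only [s, Finset.sum_sigma] at hJ
  have hL := sum_log_count hmin i
  have hdeg := degree_log hd hmin hD
  have h3 : i * Real.log (d - 1) ≤
      (∑ u, ∑ v ∈ G.neighborFinset u, Real.log (count G i u v)) / D := by
    rw [le_div_iff₀ hDpos]
    refine le_trans ?_ hL
    calc _ = i * (D * Real.log (d - 1)) := by ring
      _ ≤ _ := by gcongr
  have hd1 : 0 < d - 1 := by linarith
  have hpos : 0 < ∑ u, ∑ v ∈ G.neighborFinset u, (count G i u v : ℝ) := by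
    have := Finset.sum_pos (s := s) (f := fun a => (count G i a.1 a.2 : ℝ))
      (fun a _ => by exact_mod_cast count_pos hmin i a.1 a.2) hsne
    simpa only [s, Finset.sum_sigma] using this
  rw [← Real.log_le_log_iff (by positivity) hpos, Real.log_mul hDpos.ne' (by positivity),
    Real.log_pow]
  linarith

/-! ### The Moore bound -/

lemma moore_of_min_degree {d : ℝ} (hd : 2 ≤ d) [Nonempty V] (hmin : ∀ v, 2 ≤ G.degree v)
    (hD : d * Fintype.card V ≤ ∑ v, (G.degree v : ℝ)) (hgirth : (g : ℕ∞) ≤ G.egirth) :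
    mooreBound d g ≤ Fintype.card V := by
  have hn : (0 : ℝ) < Fintype.card V := by exact_mod_cast Fintype.card_pos
  have hW := le_sum_count hd hmin hD
  set D := ∑ v, (G.degree v : ℝ) with hDdef
  have hDpos : 0 < D := lt_of_lt_of_le (by positivity) hD
  have hd1 : 0 ≤ d - 1 := by linarith
  set h := g / 2
  have hsum : D * ∑ i ∈ range h, (d - 1) ^ i ≤
      ∑ u, ∑ v ∈ G.neighborFinset u, ∑ i ∈ range h, (count G i u v : ℝ) := by
    have : ∑ u, ∑ v ∈ G.neighborFinset u, ∑ i ∈ range h, (count G i u v : ℝ) =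
        ∑ i ∈ range h, ∑ u, ∑ v ∈ G.neighborFinset u, (count G i u v : ℝ) := by
      rw [Finset.sum_comm]
      exact sum_congr rfl fun u _ => Finset.sum_comm
    rw [this, Finset.mul_sum]
    exact sum_le_sum fun i _ => hW i
  have hgeom : 0 ≤ ∑ i ∈ range h, (d - 1) ^ i := sum_nonneg fun i _ => by positivity
  unfold mooreBound
  split_ifs with hodd
  · have htree : ∀ v, 1 + ∑ w ∈ G.neighborFinset v, ∑ i ∈ range h, (count G i v w : ℝ) ≤
        Fintype.card V := by
      intro v
      have := vertex_tree hgirth (h := h) (by obtain ⟨k, hk⟩ := hodd; omega) v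
      rw [Finset.sum_comm] at this
      exact_mod_cast this
    have hall := Finset.sum_le_sum fun v (_ : v ∈ univ) => htree v
    simp only [Finset.sum_add_distrib, sum_const, card_univ, nsmul_eq_mul, mul_one] at hall
    refine le_of_mul_le_mul_left ?_ hn
    calc _ = Fintype.card V + (d * Fintype.card V) * ∑ i ∈ range h, (d - 1) ^ i := by ring
      _ ≤ Fintype.card V + D * ∑ i ∈ range h, (d - 1) ^ i := by gcongr
      _ ≤ _ := by linarith
  · have htree : ∀ u, ∀ v ∈ G.neighborFinset u, ∑ i ∈ range h, (count G i u v : ℝ) +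
        ∑ i ∈ range h, (count G i v u : ℝ) ≤ Fintype.card V := by
      intro u v huv
      have := edge_tree hgirth (h := h) (by omega) ((G.mem_neighborFinset u v).1 huv)
      exact_mod_cast this
    have hall := Finset.sum_le_sum fun u (_ : u ∈ univ) => Finset.sum_le_sum (htree u)
    simp only [Finset.sum_add_distrib] at hall
    rw [← sum_adj_comm G fun v u => ∑ i ∈ range h, (count G i v u : ℝ)] at hall
    simp only [sum_const, SimpleGraph.card_neighborFinset_eq_degree, nsmul_eq_mul,
      ← Finset.sum_mul] at hall
    refine le_of_mul_le_mul_left ?_ hDpos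
    linarith

end

/-- Deleting a vertex of degree at most one preserves average degree at least `d ≥ 2` and does not
decrease the girth, so minimum degree two may be assumed. -/
lemma moore_of_card {d : ℝ} (hd : 2 ≤ d) {g : ℕ} (n : ℕ) :
    ∀ (V : Type) [Fintype V] [Nonempty V] (G : SimpleGraph V) [DecidableRel G.Adj],
      Fintype.card V = n → d * Fintype.card V ≤ 2 * (G.edgeFinset.card : ℝ) →
      (g : ℕ∞) ≤ G.egirth → mooreBound d g ≤ Fintype.card V := by
  classical
  induction n with
  | zero =>
    intro V _ _ G _ hc
    exact absurd hc Fintype.card_ne_zero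
  | succ n ih =>
    intro V _ _ G _ hc he hgirth
    by_cases hmin : ∀ v, 2 ≤ G.degree v
    · refine moore_of_min_degree hd hmin ?_ hgirth
      exact_mod_cast (by exact_mod_cast he : d * Fintype.card V ≤ _).trans_eq
        (by rw [← G.sum_degrees_eq_twice_card_edges])
    · push Not at hmin
      obtain ⟨v, hv⟩ := hmin
      have hcard : Fintype.card ({v}ᶜ : Set V) = n := by
        rw [Fintype.card_compl_set]; simp [hc]
      have hedge := G.card_edgeFinset_induce_compl_singleton v
      have hdeg : G.degree v ≤ G.edgeFinset.card := G.degree_le_card_edgeFinset v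
      have hedge' : (G.edgeFinset.card : ℝ) ≤ ((G.induce {v}ᶜ).edgeFinset.card : ℝ) + 1 := by
        rw [hedge, G.card_edgeFinset_deleteIncidenceSet v]
        exact_mod_cast (by omega : G.edgeFinset.card ≤ G.edgeFinset.card - G.degree v + 1)
      rw [hc] at he ⊢
      push_cast at he ⊢
      have hn0 : n ≠ 0 := by
        rintro rfl
        have : Subsingleton V := Fintype.card_le_one_iff_subsingleton.1 (by omega)
        have h0 : G.edgeFinset.card = 0 := by
          rw [Finset.card_eq_zero, SimpleGraph.edgeFinset_eq_empty]
          exact Subsingleton.elim _ _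
        rw [h0] at he
        norm_num at he
        linarith
      have : Nonempty ({v}ᶜ : Set V) := Fintype.card_pos_iff.1 (by omega)
      have hind := ih ({v}ᶜ : Set V) (G.induce {v}ᶜ) hcard (by rw [hcard]; linarith)
        (hgirth.trans (SimpleGraph.IsContained.egirth_le
          ⟨(SimpleGraph.Embedding.induce ({v}ᶜ : Set V)).toCopy⟩))
      rw [hcard] at hind
      linarith

end MooreBound

/-- **Alon–Hoory–Linial.** Every nonempty graph with average degree at least `d ≥ 2` and
girth at least `g ≥ 3` has at least `n₀(d, g)` vertices. -/
theorem alon_hoory_linial {V : Type} [Fintype V] [Nonempty V]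
    (G : SimpleGraph V) [DecidableRel G.Adj]
    (d : ℝ) (g : ℕ) (hd : 2 ≤ d) (hg : 3 ≤ g)
    (havg : d ≤ 2 * (G.edgeFinset.card : ℝ) / (Fintype.card V : ℝ))
    (hgirth : (g : ℕ∞) ≤ G.egirth) :
    mooreBound d g ≤ (Fintype.card V : ℝ) := by
  have hn : (0 : ℝ) < Fintype.card V := by exact_mod_cast Fintype.card_pos
  rw [le_div_iff₀ hn] at havg
  exact MooreBound.moore_of_card hd _ V G rfl havg hgirth
end

section
/- Let G be a nonempty finite simple graph with minimum degree at least 2 on n vertices, with average degree d = 2·e(G)/n, and let Λ(G) = ∏_{x ∈ V(G)} (deg(x) − 1)^{deg(x)/(n·d)} (a real number). If the girth of G is at least g for an integer g ≥ 3, then n ≥ n₀(Λ(G)+1, g). -/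
open Finset

namespace SimpleGraph

variable {V : Type*} {G : SimpleGraph V}

/-! ### Uniqueness of short non-backtracking walks -/

/-- Below the girth, non-backtracking walks are determined by their endpoints: the graph formed by
the edges of two such walks has fewer than `g` edges, hence is a forest, and in a forest
non-backtracking walks are paths, which are unique. -/
theorem nonbacktracking_unique {g : ℕ} (hgirth : (g : ℕ∞) ≤ G.egirth) {u v : V}
    (p q : G.Walk u v) (hp : p.edges.IsChain (· ≠ ·)) (hq : q.edges.IsChain (· ≠ ·))
    (hlen : p.length + q.length < g) : p = q := by
  classical
  let S : Finset (Sym2 V) := p.edges.toFinset ∪ q.edges.toFinset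
  let H : SimpleGraph V := fromEdgeSet (S : Set (Sym2 V))
  have hSG : ∀ e ∈ S, e ∈ G.edgeSet := by
    intro e he
    rcases Finset.mem_union.1 he with he | he
    · exact p.edges_subset_edgeSet (List.mem_toFinset.1 he)
    · exact q.edges_subset_edgeSet (List.mem_toFinset.1 he)
  have hHS : ∀ e, e ∈ H.edgeSet → e ∈ S := by
    intro e he
    rw [edgeSet_fromEdgeSet] at he
    exact he.1
  have hSH : ∀ e ∈ S, e ∈ H.edgeSet := by
    intro e he
    rw [edgeSet_fromEdgeSet]
    exact ⟨he, G.not_isDiag_of_mem_edgeSet (hSG e he)⟩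
  have hcard : #S < g := by
    refine lt_of_le_of_lt (Finset.card_union_le _ _) (lt_of_le_of_lt ?_ hlen)
    exact add_le_add (by simpa using p.edges.toFinset_card_le)
      (by simpa using q.edges.toFinset_card_le)
  have hac : H.IsAcyclic := by
    intro x c hc
    have hcG : ∀ e ∈ c.edges, e ∈ G.edgeSet := fun e he =>
      hSG e (hHS e (c.edges_subset_edgeSet he))
    have h1 := hgirth.trans (egirth_le_length (hc.transfer hcG))
    rw [Walk.length_transfer, Nat.cast_le] at h1
    have h2 : c.edges.toFinset ⊆ S := fun e he =>
      hHS e (c.edges_subset_edgeSet (List.mem_toFinset.1 he))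
    have h3 := Finset.card_le_card h2
    rw [List.toFinset_card_of_nodup hc.edges_nodup, Walk.length_edges] at h3
    omega
  have hpH : ∀ e ∈ p.edges, e ∈ H.edgeSet := fun e he =>
    hSH e (Finset.mem_union_left _ (List.mem_toFinset.2 he))
  have hqH : ∀ e ∈ q.edges, e ∈ H.edgeSet := fun e he =>
    hSH e (Finset.mem_union_right _ (List.mem_toFinset.2 he))
  have hpP : (p.transfer H hpH).IsPath := by
    rw [hac.isPath_iff_isChain, Walk.edges_transfer]; exact hp
  have hqP : (q.transfer H hqH).IsPath := by
    rw [hac.isPath_iff_isChain, Walk.edges_transfer]; exact hq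
  have heq := congrArg Subtype.val ((hac.subsingleton_path u v).elim ⟨_, hpP⟩ ⟨_, hqP⟩)
  apply Walk.ext_support
  simpa using congrArg Walk.support heq

variable [Fintype V] [DecidableEq V] [DecidableRel G.Adj]

/-! ### Counting non-backtracking continuations of a dart -/

/-- The darts that can follow `e` in a non-backtracking walk. -/
def dartSucc (e : G.Dart) : Finset G.Dart :=
  {e' : G.Dart | e'.fst = e.snd ∧ e' ≠ e.symm}

/-- The number of non-backtracking walks that start with the dart `e` and make `i` further
steps. -/
def nbCount : ℕ → G.Dart → ℕ
  | 0, _ => 1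
  | i + 1, e => ∑ e' ∈ dartSucc e, nbCount i e'

/-- The endpoints of the non-backtracking walks that start with the dart `e` and make `i` further
steps. -/
def nbEnds : ℕ → G.Dart → Finset V
  | 0, e => {e.snd}
  | i + 1, e => (dartSucc e).biUnion (nbEnds i)

theorem mem_dartSucc {e e' : G.Dart} : e' ∈ dartSucc e ↔ e'.fst = e.snd ∧ e' ≠ e.symm := by
  simp [dartSucc]

theorem card_dartSucc (e : G.Dart) : #(dartSucc e) = G.degree e.snd - 1 := by
  have h : dartSucc e = ({e' : G.Dart | e'.fst = e.snd} : Finset G.Dart).erase e.symm := by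
    ext e'; simp [dartSucc, and_comm]
  rw [h, Finset.card_erase_of_mem (by simp), dart_fst_fiber_card_eq_degree]

/-- Reversal of darts exchanges successors and predecessors, so a dart has as many predecessors
as its reverse has successors. -/
theorem card_dartPred (e' : G.Dart) :
    #({e : G.Dart | e' ∈ dartSucc e} : Finset G.Dart) = G.degree e'.fst - 1 := by
  have h : #({e : G.Dart | e' ∈ dartSucc e} : Finset G.Dart) = #(dartSucc e'.symm) := by
    refine Finset.card_bij (fun e _ => e.symm) ?_ ?_ ?_
    · intro e he
      simp only [Finset.mem_filter, Finset.mem_univ, true_and, mem_dartSucc] at he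
      rw [mem_dartSucc]
      exact ⟨he.1.symm, by simpa using fun h => he.2 h.symm⟩
    · intro a _ b _ hab
      exact Dart.symm_involutive.injective hab
    · intro b hb
      rw [mem_dartSucc] at hb
      refine ⟨b.symm, ?_, by simp⟩
      simp only [Finset.mem_filter, Finset.mem_univ, true_and, mem_dartSucc]
      exact ⟨hb.1.symm, by simpa using fun h => hb.2 (by simp [h])⟩
  rw [h, card_dartSucc]; rfl

theorem exists_walk_of_mem_nbEnds {i : ℕ} {e : G.Dart} {x : V} (hx : x ∈ nbEnds i e) :
    ∃ p : G.Walk e.snd x, p.length = i ∧ (Walk.cons e.adj p).edges.IsChain (· ≠ ·) := by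
  induction i generalizing e with
  | zero =>
    rw [nbEnds, Finset.mem_singleton] at hx
    subst hx
    exact ⟨Walk.nil, rfl, by simp⟩
  | succ i ih =>
    rw [nbEnds, Finset.mem_biUnion] at hx
    obtain ⟨e', he', hx⟩ := hx
    obtain ⟨p, hp, hc⟩ := ih hx
    rw [mem_dartSucc] at he'
    obtain ⟨⟨a, b⟩, hab⟩ := e
    obtain ⟨⟨c, d⟩, hcd⟩ := e'
    obtain ⟨h1, h2⟩ := he'
    simp only at h1
    subst h1
    refine ⟨Walk.cons hcd p, by simpa using hp, ?_⟩
    rw [Walk.edges_cons, Walk.edges_cons, List.isChain_cons_cons]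
    refine ⟨?_, by simpa using hc⟩
    intro h
    apply h2
    rw [Sym2.eq_swap] at h
    have : a = d := by
      simp only [Sym2.eq_iff] at h
      grind
    subst this
    rfl

/-! ### Disjointness of the endpoint sets below the girth -/

section Girth

variable {g : ℕ} (hgirth : (g : ℕ∞) ≤ G.egirth)
include hgirth

theorem card_nbEnds {i : ℕ} (hi : 2 * i < g) (e : G.Dart) : #(nbEnds i e) = nbCount i e := by
  induction i generalizing e with
  | zero => simp [nbEnds, nbCount]
  | succ i ih =>
    rw [nbEnds, nbCount, Finset.card_biUnion]
    · exact Finset.sum_congr rfl fun e' _ => ih (by omega) e'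
    · intro e₁ h₁ e₂ h₂ hne
      refine Finset.disjoint_left.2 ?_
      intro x hx₁ hx₂
      apply hne
      obtain ⟨p, hp, hpc⟩ := exists_walk_of_mem_nbEnds hx₁
      obtain ⟨q, hq, hqc⟩ := exists_walk_of_mem_nbEnds hx₂
      have h12 : e₁.fst = e₂.fst :=
        (mem_dartSucc.1 h₁).1.trans (mem_dartSucc.1 h₂).1.symm
      obtain ⟨⟨a, b⟩, hab⟩ := e₁
      obtain ⟨⟨c, d⟩, hcd⟩ := e₂
      simp only at h12
      subst h12
      have := nonbacktracking_unique hgirth _ _ hpc hqc (by simp; omega)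
      have hbd : b = d := by
        simpa using congrArg Walk.snd this
      subst hbd
      rfl

theorem disjoint_nbEnds_of_ne {i j : ℕ} (hij : i ≠ j) (hlt : i + j < g) (e : G.Dart) :
    Disjoint (nbEnds i e) (nbEnds j e) := by
  rw [Finset.disjoint_left]
  intro x hx₁ hx₂
  obtain ⟨p, hp, hpc⟩ := exists_walk_of_mem_nbEnds hx₁
  obtain ⟨q, hq, hqc⟩ := exists_walk_of_mem_nbEnds hx₂
  rw [Walk.edges_cons] at hpc hqc
  have := nonbacktracking_unique hgirth p q hpc.tail hqc.tail (by omega)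
  subst this
  omega

theorem disjoint_nbEnds_symm {i j : ℕ} (hlt : i + j + 1 < g) (e : G.Dart) :
    Disjoint (nbEnds i e) (nbEnds j e.symm) := by
  rw [Finset.disjoint_left]
  intro x hx₁ hx₂
  obtain ⟨p, hp, hpc⟩ := exists_walk_of_mem_nbEnds hx₁
  obtain ⟨q, hq, hqc⟩ := exists_walk_of_mem_nbEnds hx₂
  obtain ⟨⟨a, b⟩, hab⟩ := e
  change G.Walk b x at p
  change G.Walk a x at q
  change G.Adj a b at hab
  change p.length = i at hp
  change q.length = j at hq
  change (Walk.cons hab p).edges.IsChain (· ≠ ·) at hpc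
  change (Walk.cons hab.symm q).edges.IsChain (· ≠ ·) at hqc
  have h1 : p.edges.IsChain (· ≠ ·) := by
    rw [Walk.edges_cons] at hpc
    exact hpc.tail
  -- Prefixing `q` with the reversed dart gives a walk with the same start as `p`, so the two
  -- coincide, and then `p` begins by backtracking along `e`.
  have h2 : p = Walk.cons hab.symm q :=
    nonbacktracking_unique hgirth _ _ h1 hqc (by rw [Walk.length_cons]; omega)
  subst h2
  rw [Walk.edges_cons, Walk.edges_cons, List.isChain_cons_cons] at hpc
  exact hpc.1 Sym2.eq_swap

/-- Moore-type bound rooted at a dart: within the girth, the non-backtracking walks leaving the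
dart `e` through its head and through its tail all have distinct endpoints. -/
theorem sum_nbCount_le_card {a b : ℕ} (ha : 2 * a ≤ g + 1) (hb : 2 * b ≤ g + 1) (hab : a + b ≤ g)
    (e : G.Dart) :
    ∑ i ∈ range a, nbCount i e + ∑ i ∈ range b, nbCount i e.symm ≤ Fintype.card V := by
  have key : ∀ (c : ℕ) (_ : 2 * c ≤ g + 1) (f : G.Dart),
      #((range c).biUnion fun i => nbEnds i f) = ∑ i ∈ range c, nbCount i f := by
    intro c hc f
    rw [Finset.card_biUnion]
    · exact Finset.sum_congr rfl fun i hi =>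
        card_nbEnds hgirth (by have := Finset.mem_range.1 hi; omega) f
    · intro i hi j hj hij
      rw [Finset.mem_coe, Finset.mem_range] at hi hj
      exact disjoint_nbEnds_of_ne hgirth hij (by omega) f
  rw [← key a ha, ← key b hb, ← Finset.card_union_of_disjoint]
  · exact Finset.card_le_univ _
  · rw [Finset.disjoint_biUnion_left]
    intro i hi
    rw [Finset.disjoint_biUnion_right]
    intro j hj
    rw [Finset.mem_range] at hi hj
    exact disjoint_nbEnds_symm hgirth (by omega) e

end Girth

/-! ### The entropy lower bound -/

theorem sum_dart_fst (f : V → ℝ) : ∑ e : G.Dart, f e.fst = ∑ v, (G.degree v : ℝ) * f v := by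
  rw [← Finset.sum_fiberwise_of_maps_to (s := univ) (t := univ) (g := fun e : G.Dart => e.fst)
    (fun _ _ => Finset.mem_univ _)]
  refine Finset.sum_congr rfl fun v _ => ?_
  rw [Finset.sum_congr rfl (g := fun _ => f v) (fun e he => by rw [(Finset.mem_filter.1 he).2]),
    Finset.sum_const, dart_fst_fiber_card_eq_degree, nsmul_eq_mul]

omit [DecidableEq V] in
theorem sum_dart_symm (f : G.Dart → ℝ) : ∑ e : G.Dart, f e.symm = ∑ e : G.Dart, f e :=
  Equiv.sum_comp (Dart.symm_involutive.toPerm) f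

section MinDegree

variable (hdeg : ∀ v, 2 ≤ G.degree v)
include hdeg

theorem cast_card_dartSucc (e : G.Dart) : (#(dartSucc e) : ℝ) = (G.degree e.snd : ℝ) - 1 := by
  rw [card_dartSucc, Nat.cast_sub (by have := hdeg e.snd; omega), Nat.cast_one]

omit [DecidableEq V] in
theorem degree_sub_one_pos (v : V) : 0 < (G.degree v : ℝ) - 1 := by
  have : (2 : ℝ) ≤ G.degree v := by exact_mod_cast hdeg v
  linarith

theorem nbCount_pos (i : ℕ) (e : G.Dart) : 0 < nbCount i e := by
  induction i generalizing e with
  | zero => simp [nbCount]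
  | succ i ih =>
    rw [nbCount]
    refine Finset.sum_pos (fun e' _ => ih e') (Finset.card_pos.1 ?_)
    rw [card_dartSucc]
    have := hdeg e.snd
    omega

/-- The uniform distribution on darts is stationary for the non-backtracking random walk. -/
theorem sum_avg_dartSucc (f : G.Dart → ℝ) :
    ∑ e : G.Dart, ((G.degree e.snd : ℝ) - 1)⁻¹ * ∑ e' ∈ dartSucc e, f e' = ∑ e, f e := by
  have h1 : ∀ e : G.Dart, ((G.degree e.snd : ℝ) - 1)⁻¹ * ∑ e' ∈ dartSucc e, f e' =
      ∑ e' : G.Dart, if e' ∈ dartSucc e then ((G.degree e'.fst : ℝ) - 1)⁻¹ * f e' else 0 := by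
    intro e
    rw [Finset.mul_sum, ← Finset.sum_filter]
    rw [Finset.filter_univ_mem]
    refine Finset.sum_congr rfl fun e' he' => ?_
    rw [(mem_dartSucc.1 he').1]
  rw [Finset.sum_congr rfl fun e _ => h1 e, Finset.sum_comm]
  refine Finset.sum_congr rfl fun e' _ => ?_
  rw [← Finset.sum_filter, Finset.sum_const, card_dartPred, nsmul_eq_mul,
    Nat.cast_sub (by have := hdeg e'.fst; omega), Nat.cast_one, ← mul_assoc,
    mul_inv_cancel₀ (degree_sub_one_pos hdeg _).ne', one_mul]

/-- Jensen's inequality for one step of the non-backtracking random walk. -/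
theorem log_nbCount_succ_ge (i : ℕ) (e : G.Dart) :
    Real.log ((G.degree e.snd : ℝ) - 1) +
        ((G.degree e.snd : ℝ) - 1)⁻¹ * ∑ e' ∈ dartSucc e, Real.log (nbCount i e') ≤
      Real.log (nbCount (i + 1) e) := by
  have hD := degree_sub_one_pos hdeg e.snd
  set D : ℝ := (G.degree e.snd : ℝ) - 1 with hDdef
  have hJ := strictConcaveOn_log_Ioi.concaveOn.le_map_sum (t := dartSucc e)
    (w := fun _ => D⁻¹) (p := fun e' => (nbCount i e' : ℝ))
    (fun _ _ => by positivity)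
    (by rw [Finset.sum_const, nsmul_eq_mul, cast_card_dartSucc hdeg, ← hDdef,
          mul_inv_cancel₀ hD.ne'])
    (fun e' _ => by
      have := nbCount_pos hdeg i e'
      simpa using this)
  simp only [smul_eq_mul, ← Finset.mul_sum] at hJ
  have hpos : (0 : ℝ) < nbCount (i + 1) e := by exact_mod_cast nbCount_pos hdeg (i + 1) e
  have hsum : ∑ e' ∈ dartSucc e, (nbCount i e' : ℝ) = nbCount (i + 1) e := by
    rw [nbCount]; push_cast; rfl
  rw [hsum, Real.log_mul (inv_pos.2 hD).ne' hpos.ne', Real.log_inv] at hJ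
  linarith

theorem sum_log_nbCount_ge (i : ℕ) :
    i * ∑ v, (G.degree v : ℝ) * Real.log ((G.degree v : ℝ) - 1) ≤
      ∑ e : G.Dart, Real.log (nbCount i e) := by
  induction i with
  | zero => simp [nbCount]
  | succ i ih =>
    have h := Finset.sum_le_sum fun (e : G.Dart) (_ : e ∈ univ) => log_nbCount_succ_ge hdeg i e
    rw [Finset.sum_add_distrib, sum_avg_dartSucc hdeg] at h
    have h2 := sum_dart_symm (G := G) fun e => Real.log ((G.degree e.fst : ℝ) - 1)
    rw [sum_dart_fst (G := G) fun v => Real.log ((G.degree v : ℝ) - 1)] at h2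
    change ∑ e : G.Dart, Real.log ((G.degree e.snd : ℝ) - 1) = _ at h2
    rw [h2] at h
    push_cast
    linarith

/-- On average over the darts, there are at least `Λ ^ i` non-backtracking continuations of
length `i`, where `log Λ` is the mean of `log (deg - 1)` over the heads of the darts. -/
theorem pow_le_sum_nbCount (L : ℝ)
    (hL : Fintype.card G.Dart * L = ∑ v, (G.degree v : ℝ) * Real.log ((G.degree v : ℝ) - 1))
    (i : ℕ) :
    Fintype.card G.Dart * Real.exp L ^ i ≤ ∑ e : G.Dart, (nbCount i e : ℝ) := by
  rcases isEmpty_or_nonempty G.Dart with hE | hE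
  · simp
  have hm : (0 : ℝ) < Fintype.card G.Dart := by exact_mod_cast Fintype.card_pos
  have hJ := convexOn_exp.map_sum_le (t := univ)
    (w := fun _ : G.Dart => (Fintype.card G.Dart : ℝ)⁻¹)
    (p := fun e => Real.log (nbCount i e)) (fun _ _ => by positivity)
    (by rw [Finset.sum_const, nsmul_eq_mul, Finset.card_univ, mul_inv_cancel₀ hm.ne'])
    (fun _ _ => Set.mem_univ _)
  have hexp : ∀ e : G.Dart, Real.exp (Real.log (nbCount i e)) = nbCount i e := fun e =>
    Real.exp_log (by exact_mod_cast nbCount_pos hdeg i e)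
  simp only [smul_eq_mul, ← Finset.mul_sum, hexp] at hJ
  have h1 := sum_log_nbCount_ge hdeg i
  rw [← hL] at h1
  have h2 : (i : ℝ) * L ≤ (Fintype.card G.Dart : ℝ)⁻¹ * ∑ e : G.Dart, Real.log (nbCount i e) := by
    rw [← div_eq_inv_mul, le_div_iff₀ hm]
    linarith
  have h3 := (Real.exp_le_exp.2 h2).trans hJ
  rw [Real.exp_nat_mul, ← div_eq_inv_mul, le_div_iff₀ hm] at h3
  linarith

end MinDegree

end SimpleGraph

open SimpleGraph

/-- The Moore function counts a tree rooted at an edge, whose two branches have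
`⌈g/2⌉` and `⌊g/2⌋` levels. -/
theorem mooreBound_add_one (x : ℝ) (g : ℕ) :
    mooreBound (x + 1) g =
      ∑ i ∈ Finset.range ((g + 1) / 2), x ^ i + ∑ i ∈ Finset.range (g / 2), x ^ i := by
  rw [mooreBound, add_sub_cancel_right]
  split_ifs with h
  · obtain ⟨k, rfl⟩ := h
    have h1 : (2 * k + 1 + 1) / 2 = k + 1 := by omega
    have h2 : (2 * k + 1) / 2 = k := by omega
    rw [h1, h2, Finset.sum_range_succ']
    simp only [pow_succ, ← Finset.sum_mul, pow_zero]
    ring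
  · have h1 : (g + 1) / 2 = g / 2 := by
      rw [Nat.not_odd_iff_even] at h
      obtain ⟨k, rfl⟩ := h
      omega
    rw [h1]
    ring

/-- **Alon–Hoory–Linial, strong form.** Let `G` be a nonempty graph on `n` vertices with
minimum degree at least `2`, average degree `d = 2·e(G)/n`, and let
`Λ(G) = ∏_x (deg x − 1)^(deg x / (n·d))`. If `girth(G) ≥ g ≥ 3`, then `n ≥ n₀(Λ(G)+1, g)`. -/
theorem alon_hoory_linial_strong {V : Type} [Fintype V] [Nonempty V]
    (G : SimpleGraph V) [DecidableRel G.Adj]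
    (g : ℕ) (hg : 3 ≤ g)
    (hmin : 2 ≤ G.minDegree)
    (hgirth : (g : ℕ∞) ≤ G.egirth) :
    mooreBound
      ((∏ x : V, ((G.degree x : ℝ) - 1) ^
          ((G.degree x : ℝ) /
            ((Fintype.card V : ℝ) *
              (2 * (G.edgeFinset.card : ℝ) / (Fintype.card V : ℝ))))) + 1) g
      ≤ (Fintype.card V : ℝ) := by
  classical
  have hdeg : ∀ v, 2 ≤ G.degree v := fun v => hmin.trans (G.minDegree_le_degree v)
  have hn : (0 : ℝ) < Fintype.card V := by exact_mod_cast Fintype.card_pos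
  have hmE : (Fintype.card G.Dart : ℝ) = 2 * (G.edgeFinset.card : ℝ) := by
    exact_mod_cast G.dart_card_eq_twice_card_edges
  have hm : (0 : ℝ) < Fintype.card G.Dart := by
    obtain ⟨v⟩ := ‹Nonempty V›
    have h1 : G.degree v ≤ ∑ w, G.degree w :=
      Finset.single_le_sum (f := fun w => G.degree w) (fun _ _ => Nat.zero_le _)
        (Finset.mem_univ v)
    rw [← G.dart_card_eq_sum_degrees] at h1
    have := hdeg v
    exact_mod_cast (by omega : 0 < Fintype.card G.Dart)
  rw [mul_div_cancel₀ _ hn.ne', ← hmE]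
  set m : ℝ := (Fintype.card G.Dart : ℝ) with hmdef
  set L : ℝ := ∑ v, (G.degree v : ℝ) / m * Real.log ((G.degree v : ℝ) - 1) with hLdef
  have hΛ : ∏ x : V, ((G.degree x : ℝ) - 1) ^ ((G.degree x : ℝ) / m) = Real.exp L := by
    rw [hLdef, Real.exp_sum]
    refine Finset.prod_congr rfl fun v _ => ?_
    rw [Real.rpow_def_of_pos (degree_sub_one_pos hdeg v), mul_comm]
  have hL : m * L = ∑ v, (G.degree v : ℝ) * Real.log ((G.degree v : ℝ) - 1) := by
    rw [hLdef, Finset.mul_sum]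
    refine Finset.sum_congr rfl fun v _ => ?_
    field_simp
  rw [hΛ, mooreBound_add_one]
  refine le_of_mul_le_mul_left ?_ hm
  -- Sum the bound rooted at a dart over all darts.
  calc m * (∑ i ∈ Finset.range ((g + 1) / 2), Real.exp L ^ i +
          ∑ i ∈ Finset.range (g / 2), Real.exp L ^ i)
      ≤ ∑ i ∈ Finset.range ((g + 1) / 2), ∑ e : G.Dart, (nbCount i e : ℝ) +
          ∑ i ∈ Finset.range (g / 2), ∑ e : G.Dart, (nbCount i e.symm : ℝ) := by
        rw [mul_add, Finset.mul_sum, Finset.mul_sum]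
        refine add_le_add (Finset.sum_le_sum fun i _ => pow_le_sum_nbCount hdeg L hL i)
          (Finset.sum_le_sum fun i _ => ?_)
        rw [sum_dart_symm fun e => (nbCount i e : ℝ)]
        exact pow_le_sum_nbCount hdeg L hL i
    _ = ∑ e : G.Dart, ((∑ i ∈ Finset.range ((g + 1) / 2), nbCount i e +
          ∑ i ∈ Finset.range (g / 2), nbCount i e.symm : ℕ) : ℝ) := by
        push_cast
        rw [Finset.sum_add_distrib, Finset.sum_comm]
        congr 1
        rw [Finset.sum_comm]
    _ ≤ ∑ _e : G.Dart, (Fintype.card V : ℝ) := by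
        refine Finset.sum_le_sum fun e _ => ?_
        exact_mod_cast sum_nbCount_le_card hgirth (by omega) (by omega) (by omega) e
    _ = m * (Fintype.card V : ℝ) := by
        rw [Finset.sum_const, nsmul_eq_mul, Finset.card_univ]
end

section
/- For every nonempty finite simple graph G on n vertices with average degree d = 2·e(G)/n and every positive integer s, the number of walks of length s in G (sequences v₀, v₁, …, v_s of vertices in which consecutive vertices are adjacent) is at least d^s · n. -/
/-!
The proof is the entropy argument for walks, written with `log` instead of entropy.

Let `w k v` be the number of walks of length `k` from `v`, `d v` the degree of `v` and
`M = ∑ d v = 2 e(G)`. Since `w (k+1) v` is the sum of `w k` over the neighbours of `v`, concavity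
of `log` gives `d v * log (w (k+1) v) ≥ d v * log (d v) + ∑_{u ∼ v} log (w k u)`. Summing over `v`
and double counting adjacent pairs, `∑ d v * log (w k v) ≥ k * ∑ d v * log (d v)` follows by
induction (`sum_degree_mul_log_walkCount`). A second use of concavity bounds the right-hand side
below by `k * M * log (M / n)` (`sum_degree_mul_log_degree`). Finally the number of walks of length
`k + 1` is `∑ d v * w k v`, and a third use shows it to be at least `M * (M / n) ^ k`.

Isolated vertices have weight `d v = 0`, so the junk value `log 0 = 0` never matters.
-/

namespace BlakleyRoy

open Finset

/-- Jensen's inequality for `log` with unnormalised weights. Positivity of `x i` is only required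
where the weight is nonzero, and `A` is any upper bound for the weighted mean. -/
lemma sum_mul_log_le {ι : Type*} (t : Finset ι) (p x : ι → ℝ) (A : ℝ) (hA : 0 < A)
    (hp : ∀ i ∈ t, 0 ≤ p i) (hx : ∀ i ∈ t, 0 < p i → 0 < x i)
    (h : ∑ i ∈ t, p i * x i ≤ A * ∑ i ∈ t, p i) :
    ∑ i ∈ t, p i * Real.log (x i) ≤ (∑ i ∈ t, p i) * Real.log A := by
  -- The tangent line of `log` at `A` lies above its graph.
  have key : ∀ i ∈ t, p i * Real.log (x i) ≤ p i * Real.log A + (p i * x i / A - p i) := by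
    intro i hi
    rcases (hp i hi).eq_or_lt with h0 | h0
    · simp [← h0]
    · have hxi := hx i hi h0
      have h1 := Real.log_le_sub_one_of_pos (div_pos hxi hA)
      rw [Real.log_div hxi.ne' hA.ne'] at h1
      have h2 := mul_le_mul_of_nonneg_left h1 h0.le
      have h3 : p i * x i / A = p i * (x i / A) := by ring
      rw [h3]
      linarith
  have h1 := Finset.sum_le_sum key
  rw [Finset.sum_add_distrib, Finset.sum_sub_distrib, ← Finset.sum_mul, ← Finset.sum_div] at h1
  have h2 : (∑ i ∈ t, p i * x i) / A ≤ ∑ i ∈ t, p i := by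
    rw [div_le_iff₀ hA]
    linarith
  linarith

variable {V : Type} [Fintype V] (G : SimpleGraph V) [DecidableRel G.Adj]

/-- The number of walks of length `k` starting at a given vertex, as a real number. -/
noncomputable def walkCount : ℕ → V → ℝ
  | 0, _ => 1
  | k + 1, v => ∑ u ∈ G.neighborFinset v, walkCount k u

/-- Double counting of ordered adjacent pairs `(v, u)`, weighted by a function of `u`. -/
lemma sum_sum_neighbor (φ : V → ℝ) :
    ∑ v, ∑ u ∈ G.neighborFinset v, φ u = ∑ u, (G.degree u : ℝ) * φ u := by
  rw [Finset.sum_comm' (t' := univ) (s' := fun u => G.neighborFinset u)]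
  · simp
  · intro a b
    simp [G.adj_comm]

lemma walkCount_pos (k : ℕ) (v : V) (hv : 0 < G.degree v) : 0 < walkCount G k v := by
  induction k generalizing v with
  | zero => simp [walkCount]
  | succ k ih =>
    refine Finset.sum_pos (fun u hu => ih u ?_) ?_
    · rw [G.degree_pos_iff_exists_adj]
      exact ⟨v, ((G.mem_neighborFinset v u).1 hu).symm⟩
    · exact Finset.card_pos.1 hv

/-- Walks of length `k`, weighted by a function `φ` of the first vertex, are counted by
`walkCount`. The weight makes the induction on `k` go through. -/
lemma sum_walks (k : ℕ) (φ : V → ℝ) :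
    (∑ f : Fin (k + 1) → V, if ∀ i : Fin k, G.Adj (f i.castSucc) (f i.succ) then φ (f 0) else 0)
      = ∑ v, φ v * walkCount G k v := by
  induction k generalizing φ with
  | zero =>
    simp only [IsEmpty.forall_iff, if_true, walkCount, mul_one]
    exact Fintype.sum_equiv (Equiv.funUnique (Fin 1) V) _ _ (fun f => rfl)
  | succ k ih =>
    have h1 := Fintype.sum_equiv (Fin.consEquiv (fun _ : Fin (k + 2) => V)).symm
      (fun f : Fin (k + 2) → V =>
        if ∀ i : Fin (k + 1), G.Adj (f i.castSucc) (f i.succ) then φ (f 0) else 0)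
      (fun q => if ∀ i : Fin k, G.Adj (q.2 i.castSucc) (q.2 i.succ) then
        (if G.Adj q.1 (q.2 0) then φ q.1 else 0) else 0)
      (fun f => by
        simp only [Fin.forall_fin_succ (n := k), ite_and]
        simp [Fin.consEquiv, Fin.tail]
        grind)
    rw [h1, Fintype.sum_prod_type_right]
    have h2 : ∀ g : Fin (k + 1) → V,
        (∑ v, if ∀ i : Fin k, G.Adj (g i.castSucc) (g i.succ) then
          (if G.Adj v (g 0) then φ v else 0) else 0) =
        if ∀ i : Fin k, G.Adj (g i.castSucc) (g i.succ) then
          (fun u => ∑ v, if G.Adj v u then φ v else 0) (g 0) else 0 := by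
      intro g
      split_ifs <;> simp
    refine (Finset.sum_congr rfl fun g _ => h2 g).trans
      ((ih (fun u => ∑ v, if G.Adj v u then φ v else 0)).trans ?_)
    simp only [walkCount, Finset.sum_mul, Finset.mul_sum]
    rw [Finset.sum_comm]
    refine Finset.sum_congr rfl fun v _ => ?_
    simp [SimpleGraph.neighborFinset_eq_filter, Finset.sum_filter, ite_mul]

/-- The inductive heart of the argument: along the stationary random walk, the mean of
`log (walkCount G k ·)` is at least `k` times the mean of `log (degree)`. -/
lemma sum_degree_mul_log_walkCount (k : ℕ) :
    k * ∑ v, (G.degree v : ℝ) * Real.log (G.degree v) ≤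
      ∑ v, (G.degree v : ℝ) * Real.log (walkCount G k v) := by
  induction k with
  | zero => simp [walkCount]
  | succ k ih =>
    have step : ∀ v, (G.degree v : ℝ) * Real.log (G.degree v) +
        ∑ u ∈ G.neighborFinset v, Real.log (walkCount G k u) ≤
        (G.degree v : ℝ) * Real.log (walkCount G (k + 1) v) := by
      intro v
      rcases Nat.eq_zero_or_pos (G.degree v) with h0 | h0
      · have h1 : G.neighborFinset v = ∅ := Finset.card_eq_zero.1 h0
        simp [h0, h1]
      · have hw := walkCount_pos G (k + 1) v h0
        have hd : (0 : ℝ) < G.degree v := by exact_mod_cast h0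
        have := sum_mul_log_le (G.neighborFinset v) (fun _ => 1) (walkCount G k)
          (walkCount G (k + 1) v / G.degree v) (div_pos hw hd) (by simp)
          (fun u hu _ => walkCount_pos G k u (by
            rw [G.degree_pos_iff_exists_adj]
            exact ⟨v, ((G.mem_neighborFinset v u).1 hu).symm⟩))
          (by
            simp only [one_mul, sum_const, nsmul_eq_mul, mul_one,
              SimpleGraph.card_neighborFinset_eq_degree]
            rw [div_mul_cancel₀ _ hd.ne']
            exact le_of_eq rfl)
        simp only [one_mul, sum_const, nsmul_eq_mul, mul_one,
          SimpleGraph.card_neighborFinset_eq_degree] at this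
        rw [Real.log_div hw.ne' hd.ne', mul_sub] at this
        linarith
    have h := Finset.sum_le_sum fun v (_ : v ∈ (univ : Finset V)) => step v
    rw [Finset.sum_add_distrib, sum_sum_neighbor] at h
    push_cast
    linarith

/-- Jensen's inequality for `x * log x` at the degrees, obtained from that for `log` at their
inverses. -/
lemma sum_degree_mul_log_degree (hM : 0 < ∑ v, (G.degree v : ℝ)) :
    (∑ v, (G.degree v : ℝ)) * Real.log ((∑ v, (G.degree v : ℝ)) / Fintype.card V) ≤
      ∑ v, (G.degree v : ℝ) * Real.log (G.degree v) := by
  have hn : (0 : ℝ) < Fintype.card V := by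
    rcases isEmpty_or_nonempty V with h | h
    · simp at hM
    · exact_mod_cast Fintype.card_pos
  have := sum_mul_log_le univ (fun v => (G.degree v : ℝ)) (fun v => (G.degree v : ℝ)⁻¹)
    (Fintype.card V / ∑ v, (G.degree v : ℝ)) (div_pos hn hM) (fun v _ => by positivity)
    (fun v _ h => inv_pos.2 h) (by
      rw [div_mul_cancel₀ _ hM.ne']
      calc ∑ v, (G.degree v : ℝ) * (G.degree v : ℝ)⁻¹ ≤ ∑ _v : V, (1 : ℝ) :=
            Finset.sum_le_sum fun v _ => mul_inv_le_one
        _ = _ := by simp)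
  rw [← inv_div, Real.log_inv] at this
  simp only [Real.log_inv, mul_neg, sum_neg_distrib] at this
  linarith

/-- The inequality for walks of length `k + 1`, counted as edges followed by walks. -/
lemma le_sum_degree_mul_walkCount (k : ℕ) (hM : 0 < ∑ v, (G.degree v : ℝ)) :
    (∑ v, (G.degree v : ℝ)) * ((∑ v, (G.degree v : ℝ)) / Fintype.card V) ^ k ≤
      ∑ v, (G.degree v : ℝ) * walkCount G k v := by
  set M := ∑ v, (G.degree v : ℝ) with hMdef
  set N := ∑ v, (G.degree v : ℝ) * walkCount G k v with hNdef
  have hn : (0 : ℝ) < Fintype.card V := by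
    rcases isEmpty_or_nonempty V with h | h
    · simp [hMdef] at hM
    · exact_mod_cast Fintype.card_pos
  have hterm : ∀ v, 0 < (G.degree v : ℝ) → 0 < walkCount G k v := fun v hv =>
    walkCount_pos G k v (by exact_mod_cast hv)
  have hN : 0 < N := by
    obtain ⟨v, _, hv⟩ := Finset.exists_lt_of_sum_lt (s := univ) (f := fun _ : V => (0 : ℝ))
      (g := fun v => (G.degree v : ℝ)) (by simpa using hM)
    refine Finset.sum_pos' (fun u _ => ?_) ⟨v, mem_univ _, mul_pos hv (hterm v hv)⟩
    rcases (Nat.cast_nonneg (α := ℝ) (G.degree u)).eq_or_lt with h | h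
    · simp [← h]
    · exact (mul_pos h (hterm u h)).le
  have h1 := sum_mul_log_le univ (fun v => (G.degree v : ℝ)) (walkCount G k) (N / M)
    (div_pos hN hM) (fun v _ => by positivity) (fun v _ h => hterm v h)
    (by rw [← hMdef, div_mul_cancel₀ _ hM.ne'])
  have h2 := sum_degree_mul_log_walkCount G k
  have h3 := mul_le_mul_of_nonneg_left (sum_degree_mul_log_degree G hM) (Nat.cast_nonneg (α := ℝ) k)
  rw [← hMdef] at h1 h3
  have h4 : M * Real.log ((M / Fintype.card V) ^ k) ≤ M * Real.log (N / M) := by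
    rw [Real.log_pow]
    linarith
  have h5 := (Real.log_le_log_iff (pow_pos (div_pos hM hn) k) (div_pos hN hM)).1
    (le_of_mul_le_mul_left h4 hM)
  rw [le_div_iff₀ hM] at h5
  linarith

end BlakleyRoy


/-- **Blakley–Roy inequality.** For every nonempty graph `G` on `n` vertices with average
degree `d = 2·e(G)/n` and every positive integer `s`, the number of walks of length `s`
in `G` (sequences `v₀, …, v_s` of vertices with consecutive vertices adjacent) is at
least `d^s · n`. -/
theorem blakley_roy {V : Type} [Fintype V] [Nonempty V]
    (G : SimpleGraph V) [DecidableRel G.Adj]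
    (s : ℕ) (hs : 0 < s) :
    (2 * (G.edgeFinset.card : ℝ) / (Fintype.card V : ℝ)) ^ s * (Fintype.card V : ℝ) ≤
      (Fintype.card
        {f : Fin (s + 1) → V // ∀ i : Fin s, G.Adj (f i.castSucc) (f i.succ)} : ℝ) := by
  have hM : 2 * (G.edgeFinset.card : ℝ) = ∑ v, (G.degree v : ℝ) := by
    classical
    have := G.sum_degrees_eq_twice_card_edges
    rw [← Nat.cast_sum, this]
    push_cast
    congr!
  have hn : (0 : ℝ) < Fintype.card V := by exact_mod_cast Fintype.card_pos
  obtain ⟨k, rfl⟩ := Nat.exists_eq_succ_of_ne_zero hs.ne'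
  have hcard : (Fintype.card
      {f : Fin (k + 1 + 1) → V // ∀ i : Fin (k + 1), G.Adj (f i.castSucc) (f i.succ)} : ℝ)
      = ∑ v, (G.degree v : ℝ) * BlakleyRoy.walkCount G k v := by
    rw [Fintype.card_subtype, Finset.card_filter]
    push_cast
    rw [BlakleyRoy.sum_walks G (k + 1) (fun _ => 1), ← BlakleyRoy.sum_sum_neighbor]
    simp [BlakleyRoy.walkCount]
  rw [hM]
  have h0 : (0 : ℝ) ≤ ∑ v, (G.degree v : ℝ) := by positivity
  rcases h0.eq_or_lt with h | h
  · rw [← h]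
    simp
  · rw [Nat.succ_eq_add_one, hcard]
    refine le_of_eq_of_le ?_ (BlakleyRoy.le_sum_degree_mul_walkCount G k h)
    rw [pow_succ, mul_assoc, div_mul_cancel₀ _ hn.ne', mul_comm]
end
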